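/- (Convexity for Littlewood–Richardson coefficients along root-lattice segments) Let λ^{(1)}, …, λ^{(r)} be partitions, ν a partition, γ ∈ ℤⁿ with coordinates summing to zero, and k a positive integer such that ν + kγ is also a partition. If the multiplicity of V(ν) and of V(ν + kγ) in V(λ^{(1)}) ⊗ ⋯ ⊗ V(λ^{(r)}) are both nonzero (as SL(n)-representations), then for each 0 ≤ l ≤ k the multiplicity of V(ν + lγ) in the same tensor product is nonzero. -/

import Mathlib

/-!
(Convexity for Littlewood–Richardson coefficients along root-lattice segments.)
Let `λ⁽¹⁾, …, λ⁽ʳ⁾` be partitions, `ν` a partition, `γ ∈ ℤⁿ` with coordinates summing to zero,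
and `k ≥ 1` such that `ν + kγ` is also a partition.  If `V(ν)` and `V(ν + kγ)` both occur in
`V(λ⁽¹⁾) ⊗ ⋯ ⊗ V(λ⁽ʳ⁾)` (as `SL(n)`-representations), then for each `0 ≤ l ≤ k` the
representation `V(ν + lγ)` occurs in the same tensor product.

Irreducible representations of `SL(n)` are indexed by partitions with at most `n` parts via
their highest weights (a partition `p` gives the torus character `diag d ↦ ∏ dᵢ^{pᵢ}`); the root
lattice of `SL(n)` is identified with integer vectors in `ℤⁿ` summing to zero.  `Occurs ρ a`
says the tensor product contains a highest weight vector of weight `a`, i.e. the (generalized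
Littlewood–Richardson) multiplicity of `V(a)` is nonzero.
-/

open scoped TensorProduct
abbrev SL (n : ℕ) := Matrix.SpecialLinearGroup (Fin n) ℂ

section Defs

variable {n : ℕ} {V W : Type*} [AddCommGroup V] [Module ℂ V] [AddCommGroup W] [Module ℂ W]

/-- A matrix in `SL(n)` lying in the standard maximal torus (diagonal matrices). -/
def SLIsDiag (g : SL n) : Prop := ∀ i j, i ≠ j → g.val i j = 0

/-- A matrix in `SL(n)` lying in the unipotent radical of the standard Borel
(upper triangular, 1's on the diagonal). -/
def SLIsUniUpper (g : SL n) : Prop :=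
  (∀ i, g.val i i = 1) ∧ ∀ i j : Fin n, j < i → g.val i j = 0

/-- `v` is a highest weight vector of weight `a` (a character of the diagonal torus,
`diag d ↦ ∏ dᵢ^{aᵢ}`): it is nonzero, fixed by the unipotent radical of the Borel, and the
torus acts on it through the character `a`. -/
def IsHWVector (ρ : Representation ℂ (SL n) V) (a : Fin n → ℤ) (v : V) : Prop :=
  v ≠ 0 ∧ (∀ g, SLIsUniUpper g → ρ g v = v) ∧
    ∀ g, SLIsDiag g → ρ g v = (∏ i, g.val i i ^ a i) • v

/-- The irreducible representation `V(a)` of highest weight `a` occurs in `ρ`: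
equivalently (for completely reducible `ρ`), `ρ` has a highest weight vector of weight `a`. -/
def Occurs (ρ : Representation ℂ (SL n) V) (a : Fin n → ℤ) : Prop := ∃ v, IsHWVector ρ a v

/-- `ρ` is irreducible: `V ≠ 0` and the only invariant subspaces are `⊥` and `⊤`. -/
def RepIsIrreducible (ρ : Representation ℂ (SL n) V) : Prop :=
  (∃ v : V, v ≠ 0) ∧ ∀ p : Submodule ℂ V, (∀ g, ∀ x ∈ p, ρ g x ∈ p) → p = ⊥ ∨ p = ⊤

/-- The space of invariants `V^G` is nonzero. -/
def HasInvariant (ρ : Representation ℂ (SL n) V) : Prop := ∃ v : V, v ≠ 0 ∧ ∀ g, ρ g v = v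

/-- Dominance of the weight `a` (for the standard choice of positive roots). -/
def SLDominant (a : Fin n → ℤ) : Prop := ∀ i j : Fin n, i ≤ j → a j ≤ a i

/-- The tensor product of a finite family of representations of `SL(n)`,
with the diagonal action. -/
noncomputable def piTensorRep {r : ℕ} {V : Fin r → Type*} [∀ i, AddCommGroup (V i)]
    [∀ i, Module ℂ (V i)] (ρ : ∀ i, Representation ℂ (SL n) (V i)) :
    Representation ℂ (SL n) (⨂[ℂ] i, V i) where
  toFun g := PiTensorProduct.map fun i => ρ i g
  map_one' := by simp
  map_mul' g h := by
    simpa using PiTensorProduct.map_mul (fun i => ρ i g) (fun i => ρ i h)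

/-- The tensor product of two representations of `SL(n)` with the diagonal action. -/
noncomputable def tensorRep2 (ρ : Representation ℂ (SL n) V) (σ : Representation ℂ (SL n) W) :
    Representation ℂ (SL n) (V ⊗[ℂ] W) := ρ.tprod σ

end Defs

/-- A partition with at most `n` parts: a non-increasing vector of naturals. -/
def IsPartition {n : ℕ} (a : Fin n → ℕ) : Prop := ∀ i j : Fin n, i ≤ j → a j ≤ a i

/-!
Evaluating a vector of `V(λ⁽¹⁾) ⊗ ⋯ ⊗ V(λ⁽ʳ⁾)` on the translates of lowest weight forms turns it
into a function of an `r`-tuple of matrices `g`; the highest weight vectors of weight `a` become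
the polynomials `F` which are semi-invariant of weight `λ⁽ⁱ⁾` under lower triangular matrices
acting on `g i` from the left, and of weight `a` under upper triangular matrices acting
simultaneously from the right.

Let `F g ≠ 0`. Given a subspace `S`, triangular matrices bring `S` and the `g i S` into coordinate
position; then one-parameter subgroups of the torus act on `F`, and the exponent of the parameter
cannot be negative because `F` is a polynomial. This is King's inequality between `a`, the `λ⁽ⁱ⁾`
and the Schubert positions of `S` and the `g i S`. It is affine in `a`, so at a `g` where
semi-invariants of weights `ν` and `ν + kγ` are both nonzero it also holds for `ν + lγ`.

Conversely, regard `g` as a representation `y` of the star quiver with `r + 1` arms, carrying the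
standard flag and its `r` transported opposite quotient flags. King's inequalities say that the
Euler form of a suitable dimension vector with that of any quotient of `y` is nonnegative. By the
theorem of Schofield on general representations, `Hom(x, y)` and `Ext(x, y)` then vanish for some
`x` of this dimension vector and a generic `g`, and the determinant of the square matrix computing
them is, as a function of `g`, a nonzero semi-invariant of weight `ν + lγ`.
-/

section PolynomialMaps

variable {K Z Z' M M' M'' : Type*} [Field K] [AddCommGroup Z] [Module K Z] [AddCommGroup Z']
  [Module K Z'] [AddCommGroup M] [Module K M] [AddCommGroup M'] [Module K M'] [AddCommGroup M'']
  [Module K M'']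

variable (K Z) in
/-- The algebra of polynomial functions on a vector space: the functions generated by the linear
forms. -/
def polyFn : Subalgebra K (Z → K) :=
  Algebra.adjoin K (Set.range fun ξ : Module.Dual K Z => (ξ : Z → K))

variable (K) in
/-- A map between vector spaces is polynomial if its composition with every linear form is. This
avoids choosing coordinates; for maps to `K` it amounts to membership in `polyFn K Z`. -/
def IsPolyMap (f : Z → M) : Prop := ∀ ξ : Module.Dual K M, (fun z => ξ (f z)) ∈ polyFn K Z

theorem isPolyMap_iff_mem_polyFn {f : Z → K} : IsPolyMap K f ↔ f ∈ polyFn K Z := by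
  refine ⟨fun h => h LinearMap.id, fun h ξ => ?_⟩
  have hξ : (fun z => ξ (f z)) = ξ 1 • f := by
    ext z
    rw [Pi.smul_apply, smul_eq_mul, mul_comm, ← smul_eq_mul, ← map_smul, smul_eq_mul, mul_one]
  exact hξ ▸ (polyFn K Z).smul_mem h (ξ 1)

theorem isPolyMap_const (c : M) : IsPolyMap K fun _ : Z => c :=
  fun ξ => (polyFn K Z).algebraMap_mem (ξ c)

theorem isPolyMap_linear (A : Z →ₗ[K] M) : IsPolyMap K fun z => A z :=
  fun ξ => Algebra.subset_adjoin ⟨ξ ∘ₗ A, rfl⟩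

theorem isPolyMap_id : IsPolyMap K fun z : Z => z := isPolyMap_linear LinearMap.id

namespace IsPolyMap

theorem add {f g : Z → M} (hf : IsPolyMap K f) (hg : IsPolyMap K g) :
    IsPolyMap K fun z => f z + g z := fun ξ => by
  simp only [map_add]
  exact add_mem (hf ξ) (hg ξ)

theorem sum {κ : Type*} {s : Finset κ} {f : κ → Z → M} (hf : ∀ i ∈ s, IsPolyMap K (f i)) :
    IsPolyMap K fun z => ∑ i ∈ s, f i z := fun ξ => by
  convert sum_mem fun i hi => hf i hi ξ using 1
  ext z
  simp

theorem linear {f : Z → M} (hf : IsPolyMap K f) (A : M →ₗ[K] M') :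
    IsPolyMap K fun z => A (f z) := fun ξ => hf (ξ ∘ₗ A)

theorem mul {f g : Z → K} (hf : IsPolyMap K f) (hg : IsPolyMap K g) :
    IsPolyMap K fun z => f z * g z :=
  isPolyMap_iff_mem_polyFn.2
    (mul_mem (isPolyMap_iff_mem_polyFn.1 hf) (isPolyMap_iff_mem_polyFn.1 hg))

theorem pow {f : Z → K} (hf : IsPolyMap K f) (k : ℕ) : IsPolyMap K fun z => f z ^ k :=
  isPolyMap_iff_mem_polyFn.2 (pow_mem (isPolyMap_iff_mem_polyFn.1 hf) k)

theorem prod {κ : Type*} {s : Finset κ} {f : κ → Z → K} (hf : ∀ i ∈ s, IsPolyMap K (f i)) :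
    IsPolyMap K fun z => ∏ i ∈ s, f i z := by
  convert isPolyMap_iff_mem_polyFn.2 (prod_mem fun i hi => isPolyMap_iff_mem_polyFn.1 (hf i hi))
    using 1
  ext z
  simp

theorem bilinear [FiniteDimensional K M] {f : Z → M} {g : Z → M'} (hf : IsPolyMap K f)
    (hg : IsPolyMap K g) (B : M →ₗ[K] M' →ₗ[K] M'') : IsPolyMap K fun z => B (f z) (g z) := by
  let b := Module.finBasis K M
  have h : ∀ z, B (f z) (g z) = ∑ i, LinearMap.lsmul K M'' (b.coord i (f z)) (B (b i) (g z)) :=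
    fun z => by
      conv_lhs => rw [← b.sum_repr (f z), map_sum, LinearMap.sum_apply]
      simp only [map_smul, LinearMap.smul_apply, Module.Basis.coord_apply, LinearMap.lsmul_apply]
  simp only [h]
  refine sum fun i _ ξ => ?_
  simp only [LinearMap.lsmul_apply, map_smul, smul_eq_mul]
  exact isPolyMap_iff_mem_polyFn.1 ((hf.linear (b.coord i)).mul ((hg.linear (B (b i))).linear ξ))

theorem linearMap_comp [FiniteDimensional K M'] [FiniteDimensional K M'']
    {f : Z → M' →ₗ[K] M''} {g : Z → M →ₗ[K] M'} (hf : IsPolyMap K f) (hg : IsPolyMap K g) :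
    IsPolyMap K fun z => f z ∘ₗ g z :=
  hf.bilinear hg (LinearMap.llcomp K M M' M'')

theorem pi {κ : Type*} [Finite κ] {M : κ → Type*} [∀ i, AddCommGroup (M i)]
    [∀ i, Module K (M i)] {f : Z → ∀ i, M i} (hf : ∀ i, IsPolyMap K fun z => f z i) :
    IsPolyMap K f := by
  classical
  cases nonempty_fintype κ
  have h : f = fun z => ∑ i, LinearMap.single K M i (f z i) := by
    ext1 z
    exact (Finset.univ_sum_single (f z)).symm
  rw [h]
  exact sum fun i _ => (hf i).linear (LinearMap.single K M i)

theorem apply {κ : Type*} {M : κ → Type*} [∀ i, AddCommGroup (M i)] [∀ i, Module K (M i)]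
    {f : Z → ∀ i, M i} (hf : IsPolyMap K f) (i : κ) : IsPolyMap K fun z => f z i :=
  hf.linear (LinearMap.proj i)

theorem matrix_det {κ : Type*} [Fintype κ] [DecidableEq κ] {A : Z → Matrix κ κ K}
    (hA : ∀ i j, IsPolyMap K fun z => A z i j) : IsPolyMap K fun z => (A z).det := by
  simp only [Matrix.det_apply']
  exact sum fun σ _ => (isPolyMap_const _).mul (prod fun i _ => hA _ _)

theorem linearMap_det [FiniteDimensional K M] {f : Z → M →ₗ[K] M} (hf : IsPolyMap K f) :
    IsPolyMap K fun z => LinearMap.det (f z) := by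
  let b := Module.finBasis K M
  simp only [← LinearMap.det_toMatrix b]
  exact matrix_det fun i j =>
    hf.linear (Matrix.entryLinearMap K K i j ∘ₗ (LinearMap.toMatrix b b).toLinearMap)

theorem line (x y : M) : IsPolyMap K fun t : K => x + t • y :=
  (isPolyMap_const x).add (isPolyMap_linear (LinearMap.toSpanSingleton K M y))

theorem comp {f : Z → M} (hf : IsPolyMap K f) {Φ : Z' → Z} (hΦ : IsPolyMap K Φ) :
    IsPolyMap K fun z => f (Φ z) := by
  suffices ∀ f ∈ polyFn K Z, (fun z => f (Φ z)) ∈ polyFn K Z' from fun ξ => this _ (hf ξ)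
  intro f hf
  induction hf using Algebra.adjoin_induction with
  | mem x hx => obtain ⟨ξ, rfl⟩ := hx; exact hΦ ξ
  | algebraMap r => exact (polyFn K Z').algebraMap_mem r
  | add x y _ _ hx hy => exact add_mem hx hy
  | mul x y _ _ hx hy => exact mul_mem hx hy

theorem exists_polynomial_eq {f : K → K} (hf : IsPolyMap K f) :
    ∃ p : Polynomial K, ∀ t, f t = p.eval t := by
  induction isPolyMap_iff_mem_polyFn.1 hf using Algebra.adjoin_induction with
  | mem g hg =>
    obtain ⟨ξ, rfl⟩ := hg
    exact ⟨Polynomial.C (ξ 1) * Polynomial.X, fun t => by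
      rw [Polynomial.eval_C_mul, Polynomial.eval_X, mul_comm, ← smul_eq_mul, ← map_smul,
        smul_eq_mul, mul_one]⟩
  | algebraMap r => exact ⟨Polynomial.C r, fun t => by simp⟩
  | add g h hg' hh' hg hh =>
    obtain ⟨p, hp⟩ := hg (isPolyMap_iff_mem_polyFn.2 hg')
    obtain ⟨q, hq⟩ := hh (isPolyMap_iff_mem_polyFn.2 hh')
    exact ⟨p + q, fun t => by simp [hp, hq]⟩
  | mul g h hg' hh' hg hh =>
    obtain ⟨p, hp⟩ := hg (isPolyMap_iff_mem_polyFn.2 hg')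
    obtain ⟨q, hq⟩ := hh (isPolyMap_iff_mem_polyFn.2 hh')
    exact ⟨p * q, fun t => by simp [hp, hq]⟩

theorem exists_polynomial_eq_line {f : Z → K} (hf : IsPolyMap K f) (x y : Z) :
    ∃ p : Polynomial K, ∀ t : K, f (x + t • y) = p.eval t :=
  (hf.comp (line x y)).exists_polynomial_eq

theorem exists_mul_ne_zero [Infinite K] {f g : Z → K} (hf : IsPolyMap K f) (hg : IsPolyMap K g)
    (hf0 : ∃ z, f z ≠ 0) (hg0 : ∃ z, g z ≠ 0) : ∃ z, f z * g z ≠ 0 := by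
  obtain ⟨x, hx⟩ := hf0
  obtain ⟨y, hy⟩ := hg0
  obtain ⟨p, hp⟩ := hf.exists_polynomial_eq_line x (y - x)
  obtain ⟨q, hq⟩ := hg.exists_polynomial_eq_line x (y - x)
  have hp0 : p ≠ 0 := by
    rintro rfl
    exact hx (by simpa using hp 0)
  have hq0 : q ≠ 0 := by
    rintro rfl
    exact hy (by simpa using hq 1)
  by_contra! h
  refine mul_ne_zero hp0 hq0 (Polynomial.funext fun t => ?_)
  rw [Polynomial.eval_mul, ← hp, ← hq, h, Polynomial.eval_zero]

theorem exists_prod_ne_zero [Infinite K] {κ : Type*} (s : Finset κ) {f : κ → Z → K}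
    (hf : ∀ i ∈ s, IsPolyMap K (f i)) (hne : ∀ i ∈ s, ∃ z, f i z ≠ 0) :
    ∃ z, ∏ i ∈ s, f i z ≠ 0 := by
  classical
  induction s using Finset.induction_on with
  | empty => exact ⟨0, by simp⟩
  | insert a s ha ih =>
    obtain ⟨z, hz⟩ := exists_mul_ne_zero (hf a (by simp)) (prod fun i hi => hf i (by simp [hi]))
      (hne a (by simp)) (ih (fun i hi => hf i (by simp [hi])) fun i hi => hne i (by simp [hi]))
    exact ⟨z, by rwa [Finset.prod_insert ha]⟩

end IsPolyMap

end PolynomialMaps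

section Rank

open Module

variable {K E F Z : Type*} [Field K] [AddCommGroup E] [Module K E] [AddCommGroup F] [Module K F]
  [AddCommGroup Z] [Module K Z]

theorem exists_dual_det_ne_zero {κ : Type*} [Fintype κ] [DecidableEq κ] {u : κ → F}
    (hu : LinearIndependent K u) :
    ∃ ξ : κ → Dual K F, (Matrix.of fun i j => ξ i (u j)).det ≠ 0 := by
  obtain ⟨g, hg⟩ := (Fintype.linearCombination K u).exists_leftInverse_of_injective
    (LinearMap.ker_eq_bot.2 (linearIndependent_iff_injective_fintypeLinearCombination.1 hu))
  have hgu : ∀ j, g (u j) = Pi.single j 1 := fun j => by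
    simpa using LinearMap.congr_fun hg (Pi.single j 1)
  refine ⟨fun i => (LinearMap.proj i).comp g, ?_⟩
  have : (Matrix.of fun i j => ((LinearMap.proj i).comp g) (u j)) = (1 : Matrix κ κ K) := by
    ext i j
    simp [hgu, Matrix.one_apply, Pi.single_apply]
  rw [this, Matrix.det_one]
  exact one_ne_zero

theorem linearIndependent_of_dual_det_ne_zero {κ : Type*} [Fintype κ] [DecidableEq κ] {u : κ → F}
    {ξ : κ → Dual K F} (h : (Matrix.of fun i j => ξ i (u j)).det ≠ 0) :
    LinearIndependent K u := by
  rw [Fintype.linearIndependent_iff]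
  intro c hc
  have : (Matrix.of fun i j => ξ i (u j)).mulVec c = 0 := by
    ext i
    simpa [Matrix.mulVec, dotProduct, mul_comm] using congrArg (ξ i) hc
  exact congrFun (Matrix.eq_zero_of_mulVec_eq_zero h this)

theorem IsPolyMap.exists_linearIndependent {κ : Type*} [Finite κ] {u : κ → Z → F}
    (hu : ∀ i, IsPolyMap K (u i)) {z₀ : Z} (h₀ : LinearIndependent K fun i => u i z₀) :
    ∃ m : Z → K, IsPolyMap K m ∧ m z₀ ≠ 0 ∧
      ∀ z, m z ≠ 0 → LinearIndependent K fun i => u i z := by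
  classical
  cases nonempty_fintype κ
  obtain ⟨ξ, hξ⟩ := exists_dual_det_ne_zero h₀
  exact ⟨_, matrix_det (A := fun z => Matrix.of fun i j => ξ i (u j z))
    (fun i j => (hu j).linear (ξ i)), hξ, fun z hz => linearIndependent_of_dual_det_ne_zero hz⟩

theorem exists_linearIndependent_image [FiniteDimensional K F] (A : E →ₗ[K] F) :
    ∃ u : Fin (finrank K A.range) → E, LinearIndependent K fun i => A (u i) := by
  let b := finBasis K A.range
  choose u hu using fun i => (b i).2
  refine ⟨u, ?_⟩
  simpa [Function.comp_def, hu] using b.linearIndependent.map' A.range.subtype (by simp)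

theorem card_le_finrank_range [FiniteDimensional K F] {κ : Type*} [Fintype κ] {A : E →ₗ[K] F}
    {u : κ → E} (hu : LinearIndependent K fun i => A (u i)) :
    Fintype.card κ ≤ finrank K A.range :=
  (LinearIndependent.of_comp (v := fun i => (⟨A (u i), u i, rfl⟩ : A.range))
    A.range.subtype hu).fintype_card_le_finrank

theorem IsPolyMap.exists_finrank_range_le [FiniteDimensional K F] {A : Z → E →ₗ[K] F}
    (hA : ∀ u, IsPolyMap K fun z => A z u) (z₀ : Z) :
    ∃ m : Z → K, IsPolyMap K m ∧ m z₀ ≠ 0 ∧ ∀ z, m z ≠ 0 →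
      finrank K (A z₀).range ≤ finrank K (A z).range := by
  obtain ⟨u, hu⟩ := exists_linearIndependent_image (A z₀)
  obtain ⟨m, hm, hm0, hmu⟩ := exists_linearIndependent (fun i => hA (u i)) hu
  exact ⟨m, hm, hm0, fun z hz => by simpa using card_le_finrank_range (hmu z hz)⟩

theorem apply_mem_range_of_finrank_range_add_smul_le [Infinite K] [FiniteDimensional K F]
    {A B : E →ₗ[K] F} (h : ∀ τ : K, finrank K (A + τ • B).range ≤ finrank K A.range)
    {φ : E} (hφ : A φ = 0) : B φ ∈ A.range := by
  -- Otherwise `B φ = (A + τ B) (τ⁻¹ φ)` is a vector in the range of `A + τ B` which, for generic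
  -- `τ`, is independent of the images of vectors whose images under `A` span its range.
  by_contra hB
  obtain ⟨u, hu⟩ := exists_linearIndependent_image A
  let w : Option (Fin (finrank K A.range)) → K → F :=
    fun o τ => o.elim (B φ) fun i => (A + τ • B) (u i)
  have hw : ∀ o, IsPolyMap K (w o)
    | none => isPolyMap_const _
    | some i => IsPolyMap.line (A (u i)) (B (u i))
  have hw0 : LinearIndependent K fun o => w o 0 := by
    refine linearIndependent_option.2 ⟨by simpa [w, Function.comp_def] using hu, fun hmem => hB ?_⟩
    refine Submodule.span_le.2 ?_ hmem
    rintro _ ⟨i, rfl⟩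
    exact ⟨u i, by simp [w]⟩
  obtain ⟨m, hm, hm0, hmw⟩ := IsPolyMap.exists_linearIndependent hw hw0
  obtain ⟨τ, hτ⟩ := hm.exists_mul_ne_zero isPolyMap_id ⟨0, hm0⟩ ⟨1, one_ne_zero⟩
  have hind := hmw τ (left_ne_zero_of_mul hτ)
  have hrange : (fun o => w o τ) = fun o => (A + τ • B) (o.elim (τ⁻¹ • φ) u) := by
    funext o
    cases o with
    | none => simp [w, hφ, smul_smul, inv_mul_cancel₀ (right_ne_zero_of_mul hτ)]
    | some i => rfl
  have hcard := card_le_finrank_range (hrange ▸ hind)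
  rw [Fintype.card_option, Fintype.card_fin] at hcard
  exact absurd (h τ) (by omega)

end Rank

section Unipotent

open Matrix.SpecialLinearGroup (transvection transvection_coe)

theorem eq_one_of_image_pow_sq {G₀ : Type*} [GroupWithZero G₀] {S : Set G₀} (hS : S.Finite)
    (h0 : 0 ∉ S) (h : ∀ m : ℕ, 0 < m → (· ^ m ^ 2) '' S = S) : ∀ μ ∈ S, μ = 1 := by
  have : Finite S := hS
  have hmaps : Set.MapsTo (fun μ : G₀ => μ ^ 2 ^ 2) S S :=
    Set.image_subset_iff.1 (h 2 two_pos).subset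
  have hsurj : Function.Surjective (hmaps.restrict _ S S) :=
    hmaps.restrict_surjective_iff.2 (h 2 two_pos).superset
  let e : Equiv.Perm S := Equiv.ofBijective _ ⟨Finite.injective_iff_surjective.2 hsurj, hsurj⟩
  have hfix : ∀ μ ∈ S, μ ^ (2 ^ 2) ^ orderOf e = μ := by
    intro μ hμ
    have he : (hmaps.restrict _ S S)^[orderOf e] ⟨μ, hμ⟩ = ⟨μ, hμ⟩ :=
      (congrFun (Equiv.Perm.iterate_eq_pow e _) _).trans (by rw [pow_orderOf_eq_one]; rfl)
    simpa only [Set.MapsTo.iterate_restrict, Set.MapsTo.val_restrict_apply, pow_iterate]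
      using congrArg Subtype.val he
  have hd : 1 < (2 ^ 2) ^ orderOf e := Nat.one_lt_pow (orderOf_pos e).ne' (by norm_num)
  have hroot : ∀ μ ∈ S, μ ^ ((2 ^ 2) ^ orderOf e - 1) = 1 := fun μ hμ => by
    refine mul_right_cancel₀ (ne_of_mem_of_not_mem hμ h0) ?_
    rw [← pow_succ, Nat.sub_add_cancel hd.le, one_mul, hfix μ hμ]
  intro μ hμ
  obtain ⟨x, hx, rfl⟩ := (h _ (Nat.sub_pos_of_lt hd)).superset hμ
  change x ^ _ ^ 2 = 1
  rw [sq (_ - 1), pow_mul, hroot x hx, one_pow]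

variable {n : ℕ}

/-- The value at `m` of the coroot `αᵢⱼ`: the diagonal matrix with entry `m` at `i` and `m⁻¹` at
`j`. For `i = j` it degenerates to the identity. -/
noncomputable def corootSL (i j : Fin n) {m : ℂ} (hm : m ≠ 0) : SL n :=
  ⟨Matrix.diagonal fun a => (if a = i then m else 1) * (if a = j then m⁻¹ else 1), by
    rw [Matrix.det_diagonal, Finset.prod_mul_distrib]
    simp [hm]⟩

theorem corootSL_mul_transvection {i j : Fin n} (hij : i ≠ j) {m : ℂ} (hm : m ≠ 0) (s : ℂ) :
    corootSL i j hm * transvection hij s = transvection hij (m ^ 2 * s) * corootSL i j hm := by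
  apply Subtype.ext
  ext a b
  change (Matrix.diagonal _ * (1 + Matrix.single i j s) : Matrix (Fin n) (Fin n) ℂ) a b
    = ((1 + Matrix.single i j (m ^ 2 * s)) * Matrix.diagonal _ : Matrix (Fin n) (Fin n) ℂ) a b
  simp only [Matrix.diagonal_mul, Matrix.mul_diagonal, Matrix.add_apply, Matrix.one_apply,
    Matrix.single_apply]
  by_cases hab : a = b
  · subst hab
    have : ¬ (i = a ∧ j = a) := fun h => hij (h.1.trans h.2.symm)
    simp [this]
  · by_cases h : i = a ∧ j = b
    · obtain ⟨rfl, rfl⟩ := h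
      simp only [hij, hij.symm, if_true, if_false, and_self]
      field_simp
      ring
    · simp [hab, h]

theorem transvection_pow {R : Type*} [CommRing R] {i j : Fin n} (hij : i ≠ j) (s : R) (k : ℕ) :
    transvection hij s ^ k = transvection hij (k * s) := by
  induction k with
  | zero => simp
  | succ k ih =>
    rw [pow_succ, ih, ← Matrix.SpecialLinearGroup.transvection_add, Nat.cast_succ, add_one_mul]

theorem transvection_mul_transvection {R : Type*} [CommRing R] {i j k : Fin n} (hij : i ≠ j)
    (hjk : j ≠ k) (hik : i ≠ k) (s t : R) :
    transvection hij s * transvection hjk t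
      = transvection hik (s * t) * (transvection hjk t * transvection hij s) := by
  apply Subtype.ext
  simp [transvection_coe, add_mul, mul_add, Matrix.single_mul_single_of_ne, hjk.symm,
    hik.symm]
  abel

theorem transvection_commute {R : Type*} [CommRing R] {i j k l : Fin n} (hij : i ≠ j)
    (hkl : k ≠ l) (hjk : j ≠ k) (hli : l ≠ i) (s t : R) :
    Commute (transvection hij s) (transvection hkl t) := by
  apply Subtype.ext
  simp [transvection_coe, add_mul, mul_add, Matrix.single_mul_single_of_ne, hjk, hli]
  abel

theorem SLIsUniUpper.row_eq_one {g : SL n} (hg : SLIsUniUpper g) {j : Fin n}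
    (hj : ∀ b, j < b → g.val j b = 0) : g.val j = (1 : Matrix (Fin n) (Fin n) ℂ) j := by
  ext b
  rcases lt_trichotomy j b with h | rfl | h
  · rw [hj b h, Matrix.one_apply_ne h.ne]
  · rw [hg.1, Matrix.one_apply_eq]
  · rw [hg.2 j b h, Matrix.one_apply_ne h.ne']

theorem transvection_mul_apply_of_row_eq_one {R : Type*} [CommRing R] {i j : Fin n} (hij : i ≠ j)
    {g : Matrix.SpecialLinearGroup (Fin n) R}
    (hj : g.val j = (1 : Matrix (Fin n) (Fin n) R) j) (a b : Fin n) :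
    (transvection hij (-g.val i j) * g).val a b = if a = i ∧ b = j then 0 else g.val a b := by
  change (Matrix.transvection i j (-g.val i j) * g.val) a b = _
  obtain rfl | ha := eq_or_ne a i
  · rw [Matrix.transvection_mul_apply_same, hj]
    obtain rfl | hb := eq_or_ne b j
    · simp
    · simp [hb, hb.symm]
  · rw [Matrix.transvection_mul_apply_of_ne _ _ _ _ ha]
    simp [ha]

theorem SLIsUniUpper.mem_closure_transvection {g : SL n} (hg : SLIsUniUpper g) :
    g ∈ Subgroup.closure {x | ∃ (i j : Fin n) (hij : i < j) (s : ℂ),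
      x = transvection hij.ne s} := by
  -- Clear the nonzero entries above the diagonal one at a time, from the bottom row upwards.
  let T : SL n → Finset (Fin n × Fin n) := fun g => {p | p.1 < p.2 ∧ g.val p.1 p.2 ≠ 0}
  induction hT : T g using Finset.strongInduction generalizing g with
  | H _ ih =>
  subst hT
  obtain hne | hne := (T g).eq_empty_or_nonempty
  · have : g = 1 := Subtype.ext <| funext fun a => hg.row_eq_one fun b hab => by
      by_contra hb
      exact Finset.notMem_empty (a, b) (hne ▸ by simpa [T] using ⟨hab, hb⟩)
    exact this ▸ one_mem _
  obtain ⟨⟨i, j⟩, hijT, hmax⟩ := (T g).exists_max_image (fun p => p.1) hne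
  have hij : i < j := (Finset.mem_filter.1 hijT).2.1
  have hrow : g.val j = (1 : Matrix (Fin n) (Fin n) ℂ) j := hg.row_eq_one fun b hjb => by
    by_contra hb
    exact (hmax (j, b) (by simpa [T] using ⟨hjb, hb⟩)).not_gt hij
  have hentry := transvection_mul_apply_of_row_eq_one hij.ne hrow
  set g' := transvection hij.ne (-g.val i j) * g with hg'
  have hg'u : SLIsUniUpper g' := by
    refine ⟨fun a => ?_, fun a b hba => ?_⟩
    · rw [hentry, if_neg (fun h => hij.ne (h.1.symm.trans h.2)), hg.1]
    · rw [hentry, hg.2 a b hba, ite_self]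
  have hlt : T g' ⊂ T g := by
    refine Finset.ssubset_iff_subset_ne.2 ⟨fun p hp => ?_, fun heq => ?_⟩
    · simp only [T, Finset.mem_filter, Finset.mem_univ, true_and, hentry] at hp ⊢
      exact ⟨hp.1, fun h => hp.2 (by rw [h, ite_self])⟩
    · simpa [T, hentry] using heq.ge hijT
  have hgg : g = transvection hij.ne (g.val i j) * g' := by
    rw [hg', ← mul_assoc, Matrix.SpecialLinearGroup.transvection_mul_neg, one_mul]
  rw [hgg]
  exact mul_mem (Subgroup.subset_closure ⟨i, j, hij, _, rfl⟩) (ih _ hlt hg'u rfl)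

section FixedVectors

variable {W : Type*} [AddCommGroup W] [Module ℂ W] {σ : Representation ℂ (SL n) W}

theorem apply_eq_self_of_transvections {w : W}
    (hw : ∀ (i j : Fin n) (hij : i < j) (s : ℂ), σ (transvection hij.ne s) w = w) {g : SL n}
    (hg : SLIsUniUpper g) : σ g w = w := by
  have hmem := hg.mem_closure_transvection
  clear hg
  induction hmem using Subgroup.closure_induction with
  | mem x hx => obtain ⟨i, j, hij, s, rfl⟩ := hx; exact hw i j hij s
  | one => rw [map_one, Module.End.one_apply]
  | mul x y _ _ hx hy => rw [map_mul, Module.End.mul_apply, hy, hx]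
  | inv x _ hx => conv_lhs => rw [← hx, Representation.inv_self_apply]

theorem eigenvalue_transvection [FiniteDimensional ℂ W] {i j : Fin n} (hij : i ≠ j) {s μ : ℂ}
    (hμ : Module.End.HasEigenvalue (σ (transvection hij s)) μ) : μ = 1 := by
  -- The transvection is conjugate to its `m ^ 2`-th power by the coroot at `m`.
  have hunit : ∀ g : SL n, σ g * σ g⁻¹ = 1 := fun g => by rw [← map_mul, mul_inv_cancel, map_one]
  have hunit' : ∀ g : SL n, σ g⁻¹ * σ g = 1 := fun g => by rw [← map_mul, inv_mul_cancel, map_one]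
  refine eq_one_of_image_pow_sq (Module.End.finite_spectrum (σ (transvection hij s)))
    (spectrum.zero_notMem_iff ℂ |>.2 ⟨⟨_, _, hunit _, hunit' _⟩, rfl⟩) (fun m hm => ?_) μ
    hμ.mem_spectrum
  have hm0 : (m : ℂ) ≠ 0 := Nat.cast_ne_zero.2 hm.ne'
  let u : (Module.End ℂ W)ˣ := ⟨σ (corootSL i j hm0), _, hunit _, hunit' _⟩
  have hconj : σ (transvection hij s ^ m ^ 2)
      = (u : Module.End ℂ W) * σ (transvection hij s) * (u⁻¹ : (Module.End ℂ W)ˣ) := by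
    change _ = σ (corootSL i j hm0) * σ (transvection hij s) * σ (corootSL i j hm0)⁻¹
    rw [← map_mul, ← map_mul, corootSL_mul_transvection, mul_inv_cancel_right, transvection_pow,
      Nat.cast_pow]
  rw [← spectrum.map_pow_of_pos _ (by positivity), ← map_pow, hconj, spectrum.units_conjugate]

/-- A subspace stable under all positive root subgroups of `SL(n)`. -/
def IsTransvectionStable (σ : Representation ℂ (SL n) W) (q : Submodule ℂ W) : Prop :=
  ∀ (i j : Fin n) (hij : i < j) (s : ℂ), ∀ w ∈ q, σ (transvection hij.ne s) w ∈ q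

theorem IsTransvectionStable.exists_fixed [FiniteDimensional ℂ W] {q : Submodule ℂ W}
    (hq : IsTransvectionStable σ q) (hq0 : q ≠ ⊥) {i j : Fin n} (hij : i < j) (s : ℂ) :
    ∃ v ∈ q, v ≠ 0 ∧ σ (transvection hij.ne s) v = v := by
  have : Nontrivial q := Submodule.nontrivial_iff_ne_bot.2 hq0
  obtain ⟨μ, hμ⟩ := Module.End.exists_eigenvalue ((σ (transvection hij.ne s)).restrict
    (hq i j hij s))
  obtain ⟨v, hv⟩ := hμ.exists_hasEigenvector
  have hσv : σ (transvection hij.ne s) v = μ • (v : W) := congrArg Subtype.val hv.apply_eq_smul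
  have hv0 : (v : W) ≠ 0 := fun h => hv.2 (Subtype.ext h)
  have hμ1 : μ = 1 := eigenvalue_transvection hij.ne
    (Module.End.hasEigenvalue_of_hasEigenvector ⟨Module.End.mem_eigenspace_iff.2 hσv, hv0⟩)
  exact ⟨v, v.2, hv0, by rw [hσv, hμ1, one_smul]⟩

theorem IsTransvectionStable.inf_ker {q : Submodule ℂ W} (hq : IsTransvectionStable σ q)
    {i j : Fin n} (hij : i < j) (s : ℂ)
    (hfix : ∀ (k l : Fin n) (hkl : k < l), (j : ℕ) - i < l - k → ∀ (t : ℂ), ∀ w ∈ q,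
      σ (transvection hkl.ne t) w = w) :
    IsTransvectionStable σ (q ⊓ LinearMap.ker (σ (transvection hij.ne s) - 1)) := by
  simp only [IsTransvectionStable, Submodule.mem_inf, LinearMap.mem_ker, LinearMap.sub_apply,
    Module.End.one_apply, sub_eq_zero]
  rintro k l hkl t w ⟨hwq, hw⟩
  refine ⟨hq k l hkl t w hwq, ?_⟩
  rw [← Module.End.mul_apply, ← map_mul]
  by_cases hjk : j = k
  · subst hjk
    rw [transvection_mul_transvection hij.ne hkl.ne (hij.trans hkl).ne, map_mul, map_mul,
      Module.End.mul_apply, Module.End.mul_apply, hw]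
    exact hfix i l (hij.trans hkl) (by omega) _ _ (hq j l hkl t w hwq)
  by_cases hli : l = i
  · subst hli
    have hcomm := congrArg (fun g => σ g w)
      (transvection_mul_transvection hkl.ne hij.ne (hkl.trans hij).ne t s)
    simp only [map_mul, Module.End.mul_apply, hw] at hcomm ⊢
    exact (hcomm.trans (hfix k j (hkl.trans hij) (by omega) _ _
      (hq _ _ hij s _ (hq k l hkl t w hwq)))).symm
  · rw [(transvection_commute hij.ne hkl.ne hjk hli s t).eq, map_mul, Module.End.mul_apply, hw]

theorem exists_uniUpper_fixed [FiniteDimensional ℂ W] {p : Submodule ℂ W} (hp : p ≠ ⊥)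
    (hstab : ∀ g, ∀ w ∈ p, σ g w ∈ p) :
    ∃ w ∈ p, w ≠ 0 ∧ ∀ g, SLIsUniUpper g → σ g w = w := by
  obtain ⟨q, ⟨hqp, hq0, hqs⟩, hmin⟩ := IsArtinian.set_has_minimal
    {q : Submodule ℂ W | q ≤ p ∧ q ≠ ⊥ ∧ IsTransvectionStable σ q}
    ⟨p, le_rfl, hp, fun _ _ _ _ w hw => hstab _ w hw⟩
  -- On a minimal stable subspace all root subgroups act trivially, those of large height first.
  have htriv : ∀ d : ℕ, ∀ (i j : Fin n) (hij : i < j), n ≤ (j : ℕ) - i + d → ∀ (s : ℂ), ∀ w ∈ q,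
      σ (transvection hij.ne s) w = w := by
    intro d
    induction d with
    | zero => intro i j hij h; omega
    | succ d ih =>
      intro i j hij h s w hw
      have hstab' := hqs.inf_ker hij s fun k l hkl hlt => ih k l hkl (by omega)
      obtain ⟨v, hvq, hv0, hv⟩ := hqs.exists_fixed hq0 hij s
      have hne : q ⊓ LinearMap.ker (σ (transvection hij.ne s) - 1) ≠ ⊥ :=
        Submodule.ne_bot_iff _ |>.2 ⟨v, ⟨hvq, by simp [hv]⟩, hv0⟩
      have heq : q ⊓ LinearMap.ker (σ (transvection hij.ne s) - 1) = q :=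
        eq_of_le_of_not_lt inf_le_left (hmin _ ⟨inf_le_left.trans hqp, hne, hstab'⟩)
      simpa [sub_eq_zero] using (heq.ge hw).2
  obtain ⟨w, hw, hw0⟩ := Submodule.exists_mem_ne_zero_of_ne_bot hq0
  exact ⟨w, hqp hw, hw0, fun g hg => apply_eq_self_of_transvections (fun i j hij s =>
    htriv n i j hij (by omega) s w hw) hg⟩

end FixedVectors

end Unipotent

section FlagMinors

variable {n : ℕ} {R : Type*} [CommRing R]

/-- The extension by zero of a weight `l` to a sequence `ℕ → ℕ`, so that the differences
`l k - l (k + 1)` of consecutive parts make sense up to `k + 1 = n`. -/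
def weightExt (l : Fin n → ℕ) (k : ℕ) : ℕ := if h : k < n then l ⟨k, h⟩ else 0

theorem weightExt_antitone {l : Fin n → ℕ} (hl : IsPartition l) : Antitone (weightExt l) := by
  refine antitone_nat_of_succ_le fun k => ?_
  unfold weightExt
  split_ifs with h1 h2
  · exact hl _ _ (Fin.le_def.2 k.le_succ)
  · omega
  all_goals exact Nat.zero_le _

theorem sum_range_tsub_of_antitone {L : ℕ → ℕ} (hL : Antitone L) {j N : ℕ} (h : j ≤ N) :
    (∑ k ∈ Finset.range N, if j ≤ k then L k - L (k + 1) else 0) + L N = L j := by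
  induction N, h using Nat.le_induction with
  | base =>
    rw [Finset.sum_eq_zero, zero_add]
    exact fun k hk => if_neg (by simpa using hk)
  | succ N hN ih =>
    rw [Finset.sum_range_succ, if_pos hN]
    have := hL (Nat.le_add_right N 1)
    omega

/-- The matrix whose upper left `k × k` block agrees with `g`, completed by the identity. Its
determinant is the leading principal `k × k` minor of `g`. -/
def truncMat (k : ℕ) (g : Matrix (Fin n) (Fin n) R) : Matrix (Fin n) (Fin n) R :=
  Matrix.of fun a b => if (a : ℕ) < k ∧ (b : ℕ) < k then g a b else if a = b then 1 else 0

theorem truncMat_one (k : ℕ) : truncMat k (1 : Matrix (Fin n) (Fin n) R) = 1 := by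
  ext i j
  simp only [truncMat, Matrix.of_apply, Matrix.one_apply, ite_self]

theorem truncMat_transpose (k : ℕ) (g : Matrix (Fin n) (Fin n) R) :
    truncMat k g.transpose = (truncMat k g).transpose := by
  ext i j
  simp only [truncMat, Matrix.of_apply, Matrix.transpose_apply, and_comm, eq_comm]

theorem truncMat_mul {k : ℕ} {b : Matrix (Fin n) (Fin n) R} (hb : b.IsLowerTriangular)
    (g : Matrix (Fin n) (Fin n) R) : truncMat k (b * g) = truncMat k b * truncMat k g := by
  ext i j
  rw [Matrix.mul_apply]
  by_cases hi : (i : ℕ) < k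
  · by_cases hj : (j : ℕ) < k
    · simp only [truncMat, Matrix.of_apply, hi, hj, and_self, if_true, true_and, and_true,
        Matrix.mul_apply]
      refine Finset.sum_congr rfl fun c _ => ?_
      by_cases hc : (c : ℕ) < k
      · simp only [hc, if_true]
      · have hic : i < c := Fin.lt_def.2 (by omega)
        rw [hb hic, if_neg hc, if_neg hic.ne, zero_mul, zero_mul]
    · have : ∀ c, truncMat k g c j = if c = j then 1 else 0 := fun c => by simp [truncMat, hj]
      simp only [this, mul_ite, mul_one, mul_zero, Finset.sum_ite_eq', Finset.mem_univ, if_true]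
      simp [truncMat, hj]
  · have : ∀ c, truncMat k b i c = if i = c then 1 else 0 := fun c => by simp [truncMat, hi]
    simp only [this, ite_mul, one_mul, zero_mul, Finset.sum_ite_eq, Finset.mem_univ, if_true]
    simp [truncMat, hi]

theorem det_truncMat_of_isLowerTriangular {k : ℕ} {b : Matrix (Fin n) (Fin n) R}
    (hb : b.IsLowerTriangular) :
    (truncMat k b).det = ∏ j : Fin n, if (j : ℕ) < k then b j j else 1 := by
  rw [Matrix.det_of_isLowerTriangular]
  · simp [truncMat]
  · intro i j hij
    have hij' : i < j := hij
    simp [truncMat, hb hij, hij'.ne]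

/-- The product of the leading principal minors of a matrix, the `k`-th one raised to the power
`l k - l (k + 1)` (indexing the parts of `l` from `1`): the polynomial function on matrices of
highest weight `l` for the left and right actions of opposite Borel subgroups. -/
def flagMinor (l : Fin n → ℕ) (g : Matrix (Fin n) (Fin n) R) : R :=
  ∏ k ∈ Finset.range n, (truncMat (k + 1) g).det ^ (weightExt l k - weightExt l (k + 1))

theorem isPolyMap_flagMinor {K : Type*} [Field K] (l : Fin n → ℕ) :
    IsPolyMap K (flagMinor l : Matrix (Fin n) (Fin n) K → K) := by
  refine IsPolyMap.prod fun k _ => (IsPolyMap.matrix_det fun i j => ?_).pow _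
  simp only [truncMat, Matrix.of_apply]
  split_ifs
  · exact isPolyMap_linear (Matrix.entryLinearMap K K i j)
  · exact isPolyMap_const 1
  · exact isPolyMap_const 0

theorem flagMinor_one (l : Fin n → ℕ) : flagMinor l (1 : Matrix (Fin n) (Fin n) R) = 1 := by
  simp only [flagMinor, truncMat_one, Matrix.det_one, one_pow, Finset.prod_const_one]

theorem flagMinor_transpose (l : Fin n → ℕ) (g : Matrix (Fin n) (Fin n) R) :
    flagMinor l g.transpose = flagMinor l g := by
  simp only [flagMinor, truncMat_transpose, Matrix.det_transpose]

theorem flagMinor_lower_mul {l : Fin n → ℕ} (hl : IsPartition l) {b : Matrix (Fin n) (Fin n) R}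
    (hb : b.IsLowerTriangular) (g : Matrix (Fin n) (Fin n) R) :
    flagMinor l (b * g) = (∏ j, b j j ^ l j) * flagMinor l g := by
  simp only [flagMinor, truncMat_mul hb, Matrix.det_mul, mul_pow, Finset.prod_mul_distrib]
  congr 1
  simp only [det_truncMat_of_isLowerTriangular hb, ← Finset.prod_pow]
  rw [Finset.prod_comm]
  refine Finset.prod_congr rfl fun j _ => ?_
  have hpow : ∀ k, (if (j : ℕ) < k + 1 then b j j else 1) ^ (weightExt l k - weightExt l (k + 1))
      = b j j ^ (if (j : ℕ) ≤ k then weightExt l k - weightExt l (k + 1) else 0) := fun k => by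
    by_cases h : (j : ℕ) ≤ k <;> simp [h]
  simp only [hpow]
  rw [Finset.prod_pow_eq_pow_sum]
  congr 1
  simpa [weightExt] using sum_range_tsub_of_antitone (weightExt_antitone hl) j.2.le

theorem flagMinor_mul_upper {l : Fin n → ℕ} (hl : IsPartition l) {b : Matrix (Fin n) (Fin n) R}
    (hb : b.IsUpperTriangular) (g : Matrix (Fin n) (Fin n) R) :
    flagMinor l (g * b) = (∏ j, b j j ^ l j) * flagMinor l g := by
  rw [← flagMinor_transpose, Matrix.transpose_mul, flagMinor_lower_mul hl hb.transpose,
    flagMinor_transpose]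
  simp only [Matrix.transpose_apply]

theorem flagMinor_of_isDiag {l : Fin n → ℕ} (hl : IsPartition l) {t : Matrix (Fin n) (Fin n) R}
    (ht : t.IsDiag) : flagMinor l t = ∏ j, t j j ^ l j := by
  have hlower : t.IsLowerTriangular := fun i j hij => ht (OrderDual.toDual_lt_toDual.1 hij).ne
  simpa only [mul_one, flagMinor_one] using flagMinor_lower_mul hl hlower 1

end FlagMinors

section Biinvariant

open Matrix.SpecialLinearGroup (transvection)

variable {n : ℕ}

/-- The left translates of `h` span a finite-dimensional space. This replaces the requirement that
`h` be a regular function on `SL(n)`. -/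
def FinTranslates (h : SL n → ℂ) : Prop :=
  ∃ S : Submodule ℂ (SL n → ℂ), S.FG ∧ ∀ x : SL n, (fun g => h (x * g)) ∈ S

theorem FinTranslates.add {h h' : SL n → ℂ} (H : FinTranslates h) (H' : FinTranslates h') :
    FinTranslates (h + h') := by
  obtain ⟨S, hS, h1⟩ := H
  obtain ⟨S', hS', h1'⟩ := H'
  exact ⟨S ⊔ S', hS.sup hS', fun x =>
    add_mem (Submodule.mem_sup_left (h1 x)) (Submodule.mem_sup_right (h1' x))⟩

theorem FinTranslates.smul {h : SL n → ℂ} (H : FinTranslates h) (c : ℂ) :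
    FinTranslates (c • h) := by
  obtain ⟨S, hS, h1⟩ := H
  exact ⟨S, hS, fun x => S.smul_mem c (h1 x)⟩

theorem FinTranslates.mul {h h' : SL n → ℂ} (H : FinTranslates h) (H' : FinTranslates h') :
    FinTranslates (h * h') := by
  obtain ⟨S, hS, h1⟩ := H
  obtain ⟨S', hS', h1'⟩ := H'
  exact ⟨S * S', hS.mul hS', fun x => Submodule.mul_mem_mul (h1 x) (h1' x)⟩

theorem IsPolyMap.finTranslates {f : Matrix (Fin n) (Fin n) ℂ → ℂ} (hf : IsPolyMap ℂ f) :
    FinTranslates fun g : SL n => f g.val := by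
  replace hf := isPolyMap_iff_mem_polyFn.1 hf
  induction hf using Algebra.adjoin_induction with
  | mem f hf =>
    obtain ⟨ξ, rfl⟩ := hf
    let restr : Module.Dual ℂ (Matrix (Fin n) (Fin n) ℂ) →ₗ[ℂ] (SL n → ℂ) :=
      { toFun := fun ξ g => ξ g.val, map_add' := fun _ _ => rfl, map_smul' := fun _ _ => rfl }
    exact ⟨LinearMap.range restr, Module.Finite.iff_fg.1 inferInstance,
      fun x => ⟨ξ.comp (LinearMap.mulLeft ℂ x.val), rfl⟩⟩
  | algebraMap r =>
    exact ⟨Submodule.span ℂ {fun _ => r}, ⟨{fun _ => r}, by simp⟩, fun x =>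
      Submodule.subset_span rfl⟩
  | add f f' _ _ h h' => exact h.add h'
  | mul f f' _ _ h h' => exact h.mul h'

theorem finTranslates_coeff {V : Type*} [AddCommGroup V] [Module ℂ V] [FiniteDimensional ℂ V]
    (ρ : Representation ℂ (SL n) V) (φ : Module.Dual ℂ V) (v : V) :
    FinTranslates fun g => φ (ρ g v) := by
  let coeff : Module.Dual ℂ V →ₗ[ℂ] (SL n → ℂ) :=
    { toFun := fun ξ g => ξ (ρ g v), map_add' := fun _ _ => rfl, map_smul' := fun _ _ => rfl }
  refine ⟨LinearMap.range coeff, Module.Finite.iff_fg.1 inferInstance,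
    fun x => ⟨φ.comp (ρ x), ?_⟩⟩
  funext g
  simp [coeff]

theorem FinTranslates.exists_transvection_mul_ne_zero {h : SL n → ℂ} (hfin : FinTranslates h)
    {i k : Fin n} (hki : k ≠ i) {g : SL n} (hg : h g ≠ 0) :
    ∃ a : ℂ, a ≠ 0 ∧ h (transvection hki a * g) ≠ 0 := by
  -- Otherwise the translates of `h` by the root subgroup would be linearly independent.
  by_contra! hcon
  obtain ⟨S, hS, hmem⟩ := hfin
  have : Module.Finite ℂ S := Module.Finite.iff_fg.2 hS
  let H : ℂ → S := fun b => ⟨fun y => h (transvection hki b * y), hmem _⟩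
  have hli : LinearIndependent ℂ H := by
    rw [linearIndependent_iff']
    intro s c hc b hb
    have h1 := congrFun (congrArg Subtype.val hc) (transvection hki (-b) * g)
    simp only [H, Submodule.coe_sum, Finset.sum_apply, Submodule.coe_smul, Pi.smul_apply,
      smul_eq_mul, ← mul_assoc, ← Matrix.SpecialLinearGroup.transvection_add, ZeroMemClass.coe_zero,
      Pi.zero_apply] at h1
    rw [Finset.sum_eq_single b] at h1
    · simpa [hg] using h1
    · intro b' _ hb'
      rw [hcon _ (by rwa [← sub_eq_add_neg, sub_ne_zero]), mul_zero]
    · exact fun hb' => absurd hb hb'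
  exact Module.Finite.not_linearIndependent_of_infinite H hli

/-- The first `k` rows of `g` are those of an invertible lower triangular matrix: an intermediate
stage of the reduction of `g` to lower triangular form. -/
def LowerRows (k : ℕ) (g : SL n) : Prop :=
  ∀ i : Fin n, (i : ℕ) < k → g.val i i ≠ 0 ∧ ∀ j, i < j → g.val i j = 0

theorem LowerRows.exists_uniUpper_succ {g : SL n} {k : Fin n} (hg : LowerRows k g)
    (hk : g.val k k ≠ 0) : ∃ u : SL n, SLIsUniUpper u ∧ LowerRows (k + 1) (g * u) := by
  let w : Fin n → ℂ := fun j => if k < j then -(g.val k j / g.val k k) else 0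
  let U : Matrix (Fin n) (Fin n) ℂ := Matrix.of fun a b =>
    (if a = b then 1 else 0) + (if a = k then w b else 0)
  have hUd : ∀ i, U i i = 1 := fun i => by
    by_cases h : i = k <;> simp [U, w, h]
  have hUl : ∀ i j, j < i → U i j = 0 := fun i j hij => by
    by_cases h : i = k
    · subst h; simp [U, w, hij.ne', hij.not_gt]
    · simp [U, h, hij.ne']
  have hdet : U.det = 1 := by
    rw [Matrix.det_of_isUpperTriangular (fun i j hij => hUl i j hij)]
    simp [hUd]
  let u : SL n := ⟨U, hdet⟩
  have hgu : ∀ i j, (g * u).val i j = g.val i j + g.val i k * w j := fun i j => by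
    change (g.val * U) i j = _
    simp [Matrix.mul_apply, U, mul_add, Finset.sum_add_distrib]
  refine ⟨u, ⟨hUd, hUl⟩, fun i hi => ?_⟩
  rcases (Fin.le_def.2 (Nat.lt_succ_iff.1 hi)).lt_or_eq with hi | rfl
  · simpa only [hgu, (hg i hi).2 k hi, zero_mul, add_zero] using hg i hi
  · refine ⟨by simpa [hgu, w] using hk, fun j hj => ?_⟩
    simp only [hgu, w, hj, if_true]
    field_simp
    ring

theorem LowerRows.exists_pivot_ne_zero {h : SL n → ℂ} (hfin : FinTranslates h) {g : SL n}
    {k : Fin n} (hrows : LowerRows k g) (hg : h g ≠ 0) :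
    ∃ g : SL n, h g ≠ 0 ∧ LowerRows k g ∧ g.val k k ≠ 0 := by
  by_cases hgk : g.val k k = 0
  · obtain ⟨i, hi, hgi⟩ : ∃ i, k < i ∧ g.val i k ≠ 0 := by
      by_contra! hcon
      refine one_ne_zero (g.2.symm.trans (Matrix.det_eq_zero_of_column_eq_zero k fun i => ?_))
      rcases lt_trichotomy i k with hi | rfl | hi
      · exact (hrows i hi).2 k hi
      · exact hgk
      · exact hcon i hi
    obtain ⟨a, ha, hga⟩ := hfin.exists_transvection_mul_ne_zero hi.ne hg
    refine ⟨_, hga, fun j hj => ?_, ?_⟩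
    · have : ∀ l, (transvection hi.ne a * g).val j l = g.val j l := fun l =>
        Matrix.transvection_mul_apply_of_ne _ _ _ _ (Fin.ne_of_lt hj) _ _
      simpa only [this] using hrows j hj
    · change (Matrix.transvection k i a * g.val) k k ≠ 0
      rw [Matrix.transvection_mul_apply_same, hgk, zero_add]
      exact mul_ne_zero ha hgi
  · exact ⟨g, hg, hrows, hgk⟩

theorem LowerRows.exists_eq_mul_diag {g : SL n} (hg : LowerRows n g) :
    ∃ u t : SL n, SLIsUniUpper u.transpose ∧ SLIsDiag t ∧ g = u * t := by
  have hdet : ∏ i, g.val i i = 1 :=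
    (Matrix.det_of_isLowerTriangular g.val fun i j hij => (hg i i.2).2 j hij).symm.trans g.2
  let t : SL n := ⟨Matrix.diagonal fun i => g.val i i, by rw [Matrix.det_diagonal, hdet]⟩
  let s : SL n := ⟨Matrix.diagonal fun i => (g.val i i)⁻¹, by
    rw [Matrix.det_diagonal, Finset.prod_inv_distrib, hdet, inv_one]⟩
  have hst : s * t = 1 := by
    apply Subtype.ext
    change Matrix.diagonal _ * Matrix.diagonal _ = (1 : Matrix (Fin n) (Fin n) ℂ)
    rw [Matrix.diagonal_mul_diagonal, ← Matrix.diagonal_one]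
    congr 1
    funext i
    exact inv_mul_cancel₀ (hg i i.2).1
  have hgs : ∀ i j, (g * s).transpose.val i j = g.val j i * (g.val i i)⁻¹ := fun i j => by
    change (g.val * Matrix.diagonal fun i => (g.val i i)⁻¹) j i = _
    rw [Matrix.mul_diagonal]
  refine ⟨g * s, t, ⟨fun i => ?_, fun i j hij => ?_⟩, fun i j hij => ?_, ?_⟩
  · rw [hgs, mul_inv_cancel₀ (hg i i.2).1]
  · rw [hgs, (hg j j.2).2 i hij, zero_mul]
  · exact Matrix.diagonal_apply_ne _ hij
  · rw [mul_assoc, hst, mul_one]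

/-- A function on `SL(n)` invariant under left translations by lower and right translations by
upper unitriangular matrices, with the finiteness condition `FinTranslates`. By the density of the
big cell it is determined by its restriction to the torus. -/
structure IsBiinvariant (h : SL n → ℂ) : Prop where
  lower_mul : ∀ u : SL n, SLIsUniUpper u.transpose → ∀ g, h (u * g) = h g
  mul_upper : ∀ u : SL n, SLIsUniUpper u → ∀ g, h (g * u) = h g
  finTranslates : FinTranslates h

namespace IsBiinvariant

protected theorem zero : IsBiinvariant (0 : SL n → ℂ) where
  lower_mul _ _ _ := rfl
  mul_upper _ _ _ := rfl
  finTranslates := ⟨⊥, Submodule.fg_bot, fun _ => Submodule.zero_mem _⟩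

theorem sub {h h' : SL n → ℂ} (H : IsBiinvariant h) (H' : IsBiinvariant h') :
    IsBiinvariant (h - h') where
  lower_mul u hu g := congrArg₂ (· - ·) (H.lower_mul u hu g) (H'.lower_mul u hu g)
  mul_upper u hu g := congrArg₂ (· - ·) (H.mul_upper u hu g) (H'.mul_upper u hu g)
  finTranslates := by
    rw [sub_eq_add_neg, ← neg_one_smul ℂ]
    exact H.finTranslates.add (H'.finTranslates.smul _)

theorem smul {h : SL n → ℂ} (H : IsBiinvariant h) (c : ℂ) : IsBiinvariant (c • h) where
  lower_mul u hu g := congrArg (c • ·) (H.lower_mul u hu g)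
  mul_upper u hu g := congrArg (c • ·) (H.mul_upper u hu g)
  finTranslates := H.finTranslates.smul c

theorem exists_lowerRows {h : SL n → ℂ} (H : IsBiinvariant h) {g : SL n} (hg : h g ≠ 0) (k : ℕ)
    (hk : k ≤ n) : ∃ g : SL n, h g ≠ 0 ∧ LowerRows k g := by
  induction k with
  | zero => exact ⟨g, hg, fun i hi => absurd hi (Nat.not_lt_zero _)⟩
  | succ k ih =>
    obtain ⟨g, hg, hrows⟩ := ih (by omega)
    obtain ⟨g, hg, hrows, hgk⟩ :=
      LowerRows.exists_pivot_ne_zero (k := ⟨k, hk⟩) H.finTranslates hrows hg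
    obtain ⟨u, hu, hgu⟩ := hrows.exists_uniUpper_succ hgk
    exact ⟨g * u, by rwa [H.mul_upper u hu], hgu⟩

theorem ext_diag {h h' : SL n → ℂ} (H : IsBiinvariant h) (H' : IsBiinvariant h')
    (hdiag : ∀ t : SL n, SLIsDiag t → h t = h' t) : h = h' := by
  by_contra hne
  obtain ⟨g, hg⟩ := Function.ne_iff.1 hne
  obtain ⟨g, hg, hrows⟩ := (H.sub H').exists_lowerRows (sub_ne_zero.2 hg) n le_rfl
  obtain ⟨u, t, hu, ht, rfl⟩ := hrows.exists_eq_mul_diag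
  exact hg (((H.sub H').lower_mul u hu t).trans (sub_eq_zero.2 (hdiag t ht)))

end IsBiinvariant

theorem isBiinvariant_flagMinor {l : Fin n → ℕ} (hl : IsPartition l) :
    IsBiinvariant fun g : SL n => flagMinor l g.val where
  lower_mul u hu g := by
    refine (flagMinor_lower_mul (b := u.val) hl (fun i j hij => hu.2 j i hij) g.val).trans ?_
    rw [Finset.prod_eq_one fun i _ => by rw [show u.val i i = 1 from hu.1 i, one_pow], one_mul]
  mul_upper u hu g := by
    refine (flagMinor_mul_upper (b := u.val) hl (fun i j hij => hu.2 i j hij) g.val).trans ?_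
    rw [Finset.prod_eq_one fun i _ => by rw [hu.1 i, one_pow], one_mul]
  finTranslates := (isPolyMap_flagMinor l).finTranslates

end Biinvariant

section HighestWeightCoefficient

variable {n : ℕ} {V : Type*} [AddCommGroup V] [Module ℂ V] {ρ : Representation ℂ (SL n) V}

theorem isBiinvariant_coeff [FiniteDimensional ℂ V] {φ : Module.Dual ℂ V} {v : V}
    (hφ : ∀ u : SL n, SLIsUniUpper u.transpose → φ ∘ₗ ρ u = φ)
    (hv : ∀ u : SL n, SLIsUniUpper u → ρ u v = v) : IsBiinvariant fun g => φ (ρ g v) where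
  lower_mul u hu g := by
    rw [map_mul, Module.End.mul_apply]
    exact LinearMap.congr_fun (hφ u hu) _
  mul_upper u hu g := by rw [map_mul, Module.End.mul_apply, hv u hu]
  finTranslates := finTranslates_coeff ρ φ v

theorem RepIsIrreducible.span_orbit_eq_top (hirr : RepIsIrreducible ρ) {v : V} (hv : v ≠ 0) :
    Submodule.span ℂ (Set.range fun g => ρ g v) = ⊤ := by
  refine (hirr.2 _ fun g x hx => ?_).resolve_left fun hb => ?_
  · induction hx using Submodule.span_induction with
    | mem x hx =>
      obtain ⟨h, rfl⟩ := hx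
      exact Submodule.subset_span ⟨g * h, by simp⟩
    | zero => rw [map_zero]; exact zero_mem _
    | add x y _ _ hx hy => rw [map_add]; exact add_mem hx hy
    | smul c x _ hx => rw [map_smul]; exact Submodule.smul_mem _ _ hx
  · have : v ∈ (⊥ : Submodule ℂ V) := hb ▸ Submodule.subset_span ⟨1, by simp⟩
    exact hv (by simpa using this)

theorem RepIsIrreducible.dual_eq_zero (hirr : RepIsIrreducible ρ) {v : V} (hv : v ≠ 0)
    {φ : Module.Dual ℂ V} (hφ : ∀ g, φ (ρ g v) = 0) : φ = 0 := by
  refine LinearMap.ker_eq_top.1 (top_le_iff.1 ?_)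
  rw [← hirr.span_orbit_eq_top hv, Submodule.span_le]
  rintro _ ⟨g, rfl⟩
  exact hφ g

/-- The dual of a representation of `SL(n)`, made into a left action by the transpose instead of
the inverse. This exchanges upper and lower unitriangular invariance. -/
def transposeDualRep (ρ : Representation ℂ (SL n) V) :
    Representation ℂ (SL n) (Module.Dual ℂ V) where
  toFun g := (ρ g.transpose).dualMap
  map_one' := by
    have : (1 : SL n).transpose = 1 := Subtype.ext Matrix.transpose_one
    ext
    simp [this]
  map_mul' g h := by
    have : (g * h).transpose = h.transpose * g.transpose :=
      Subtype.ext (Matrix.transpose_mul _ _)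
    ext
    simp [this]

theorem exists_dual_lower_invariant [FiniteDimensional ℂ V] [Nontrivial V]
    (ρ : Representation ℂ (SL n) V) : ∃ φ : Module.Dual ℂ V, φ ≠ 0 ∧
      ∀ u : SL n, SLIsUniUpper u.transpose → φ ∘ₗ ρ u = φ := by
  obtain ⟨φ, -, hφ0, hφ⟩ := exists_uniUpper_fixed (σ := transposeDualRep ρ) top_ne_bot
    fun _ _ _ => trivial
  exact ⟨φ, hφ0, fun u hu => hφ _ hu⟩

theorem RepIsIrreducible.exists_dual_eq_flagMinor [FiniteDimensional ℂ V]
    (hirr : RepIsIrreducible ρ) {l : Fin n → ℕ} (hl : IsPartition l) {v : V}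
    (hv : IsHWVector ρ (fun j => (l j : ℤ)) v) :
    ∃ φ : Module.Dual ℂ V, ∀ g : SL n, φ (ρ g v) = flagMinor l g.val := by
  obtain ⟨hv0, hvU, hvT⟩ := hv
  have : Nontrivial V := ⟨v, 0, hv0⟩
  obtain ⟨φ, hφ0, hφ⟩ := exists_dual_lower_invariant ρ
  have hφT : ∀ t, SLIsDiag t → φ (ρ t v) = flagMinor l t.val * φ v := fun t ht => by
    rw [hvT t ht, map_smul, smul_eq_mul, flagMinor_of_isDiag hl ht]
    simp only [zpow_natCast]
  have hφv : φ v ≠ 0 := fun h0 => hφ0 <| hirr.dual_eq_zero hv0 <| congrFun <|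
    (isBiinvariant_coeff hφ hvU).ext_diag IsBiinvariant.zero fun t ht => by
      rw [hφT t ht, h0, mul_zero]
  refine ⟨(φ v)⁻¹ • φ, congrFun (IsBiinvariant.ext_diag (isBiinvariant_coeff (fun u hu => ?_) hvU)
    (isBiinvariant_flagMinor hl) fun t ht => ?_)⟩
  · rw [LinearMap.smul_comp, hφ u hu]
  · rw [LinearMap.smul_apply, smul_eq_mul, hφT t ht, mul_left_comm, inv_mul_cancel₀ hφv, mul_one]

end HighestWeightCoefficient

section StarRepresentations

open Matrix
open scoped ComplexOrder

variable {n : ℕ} {A A' : Type*} [Fintype A] [DecidableEq A] [Fintype A'] [DecidableEq A']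

/-- A polynomial representation of the multiplicative monoid of matrices on `ℂ^A` which takes
conjugate transposes to conjugate transposes: the algebraic substitute for the unitary trick. -/
structure IsPolyStarHom (τ : Matrix (Fin n) (Fin n) ℂ →* Matrix A A ℂ) : Prop where
  map_conjTranspose : ∀ g, τ gᴴ = (τ g)ᴴ
  isPolyMap_apply : ∀ a b, IsPolyMap ℂ fun g => τ g a b

theorem IsPolyStarHom.exists_fromBlocks {τ : Matrix (Fin n) (Fin n) ℂ →* Matrix A A ℂ}
    {τ' : Matrix (Fin n) (Fin n) ℂ →* Matrix A' A' ℂ} (hτ : IsPolyStarHom τ)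
    (hτ' : IsPolyStarHom τ') : ∃ σ : Matrix (Fin n) (Fin n) ℂ →* Matrix (A ⊕ A') (A ⊕ A') ℂ,
      IsPolyStarHom σ ∧ ∀ g, σ g = fromBlocks (τ g) 0 0 (τ' g) := by
  refine ⟨{
    toFun := fun g => fromBlocks (τ g) 0 0 (τ' g)
    map_one' := by rw [map_one, map_one, fromBlocks_one]
    map_mul' := fun g h => by simp [fromBlocks_multiply] }, ⟨fun g => ?_, ?_⟩, fun _ => rfl⟩
  · simp [fromBlocks_conjTranspose, hτ.map_conjTranspose, hτ'.map_conjTranspose]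
  · rintro (a | a) (b | b)
    · exact hτ.isPolyMap_apply a b
    · exact isPolyMap_const 0
    · exact isPolyMap_const 0
    · exact hτ'.isPolyMap_apply a b

theorem IsPolyStarHom.exists_kronecker {τ : Matrix (Fin n) (Fin n) ℂ →* Matrix A A ℂ}
    {τ' : Matrix (Fin n) (Fin n) ℂ →* Matrix A' A' ℂ} (hτ : IsPolyStarHom τ)
    (hτ' : IsPolyStarHom τ') : ∃ σ : Matrix (Fin n) (Fin n) ℂ →* Matrix (A × A') (A × A') ℂ,
      IsPolyStarHom σ ∧ ∀ g, σ g = kronecker (τ g) (τ' g) := by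
  refine ⟨{
    toFun := fun g => kronecker (τ g) (τ' g)
    map_one' := by rw [map_one, map_one]; exact one_kronecker_one
    map_mul' := fun g h => by rw [map_mul, map_mul]; exact mul_kronecker_mul _ _ _ _ },
    ⟨fun g => ?_, fun a b => (hτ.isPolyMap_apply a.1 b.1).mul (hτ'.isPolyMap_apply a.2 b.2)⟩,
    fun _ => rfl⟩
  ext ⟨a, a'⟩ ⟨b, b'⟩
  simp [hτ.map_conjTranspose, hτ'.map_conjTranspose, conjTranspose_apply]

theorem exists_dual_eq_trace_mul {K B : Type*} [CommSemiring K] [Fintype B]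
    (ξ : Module.Dual K (Matrix B B K)) :
    ∃ c : Matrix B B K, ∀ g, ξ g = (c * g).trace := by
  classical
  refine ⟨of fun j i => ξ (single i j 1), fun g => ?_⟩
  conv_lhs => rw [matrix_eq_sum_single g]
  simp only [map_sum, trace, diag_apply, mul_apply, of_apply]
  rw [Finset.sum_comm]
  refine Finset.sum_congr rfl fun i _ => Finset.sum_congr rfl fun j _ => ?_
  rw [show single j i (g j i) = g j i • single j i (1 : K) by simp, map_smul, smul_eq_mul, mul_comm]

theorem IsPolyMap.exists_isPolyStarHom {f : Matrix (Fin n) (Fin n) ℂ → ℂ} (hf : IsPolyMap ℂ f) :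
    ∃ (A : Type) (_ : Fintype A) (_ : DecidableEq A)
      (τ : Matrix (Fin n) (Fin n) ℂ →* Matrix A A ℂ) (c : Matrix A A ℂ),
      IsPolyStarHom τ ∧ ∀ g, f g = (c * τ g).trace := by
  replace hf := isPolyMap_iff_mem_polyFn.1 hf
  induction hf using Algebra.adjoin_induction with
  | mem f hf =>
    obtain ⟨ξ, rfl⟩ := hf
    obtain ⟨c, hc⟩ := exists_dual_eq_trace_mul ξ
    exact ⟨Fin n, inferInstance, inferInstance, MonoidHom.id _, c,
      ⟨fun _ => rfl, fun a b => isPolyMap_linear (entryLinearMap ℂ ℂ a b)⟩, hc⟩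
  | algebraMap r =>
    exact ⟨Unit, inferInstance, inferInstance, 1, r • 1,
      ⟨fun _ => by simp, fun _ _ => isPolyMap_const _⟩, fun g => by simp⟩
  | add f f' _ _ h h' =>
    obtain ⟨A, _, _, τ, c, hτ, hc⟩ := h
    obtain ⟨A', _, _, τ', c', hτ', hc'⟩ := h'
    obtain ⟨σ, hσ, hστ⟩ := hτ.exists_fromBlocks hτ'
    exact ⟨A ⊕ A', inferInstance, inferInstance, σ, fromBlocks c 0 0 c', hσ, fun g => by
      simp [hστ, fromBlocks_multiply, trace, hc, hc']⟩
  | mul f f' _ _ h h' =>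
    obtain ⟨A, _, _, τ, c, hτ, hc⟩ := h
    obtain ⟨A', _, _, τ', c', hτ', hc'⟩ := h'
    obtain ⟨σ, hσ, hστ⟩ := hτ.exists_kronecker hτ'
    refine ⟨A × A', inferInstance, inferInstance, σ, kronecker c c', hσ, fun g => ?_⟩
    rw [hστ, Pi.mul_apply, hc, hc', ← trace_kronecker]
    exact congrArg trace (mul_kronecker_mul _ _ _ _)

/-- The orthogonal complement for the Hermitian form `trace (qᴴ x)` on matrices. -/
def traceOrthogonal (P : Submodule ℂ (Matrix A A ℂ)) : Submodule ℂ (Matrix A A ℂ) where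
  carrier := {x | ∀ q ∈ P, (qᴴ * x).trace = 0}
  add_mem' {x y} hx hy q hq := by rw [mul_add, trace_add, hx q hq, hy q hq, add_zero]
  zero_mem' q _ := by rw [mul_zero, trace_zero]
  smul_mem' c x hx q hq := by rw [Matrix.mul_smul, trace_smul, hx q hq, smul_zero]

theorem exists_sub_mem_traceOrthogonal (P : Submodule ℂ (Matrix A A ℂ)) (c : Matrix A A ℂ) :
    ∃ p ∈ P, c - p ∈ traceOrthogonal P := by
  let := toMatrixNormedAddCommGroup (1 : Matrix A A ℂ) PosDef.one
  let := toMatrixInnerProductSpace (1 : Matrix A A ℂ) PosSemidef.one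
  obtain ⟨p, hp, z, hz, rfl⟩ := P.exists_add_mem_mem_orthogonal c
  refine ⟨p, hp, fun q hq => ?_⟩
  have hinner : (z * 1 * qᴴ).trace = 0 := hz q hq
  rwa [mul_one, trace_mul_comm, ← add_sub_cancel_left p z] at hinner

/-- The left multiplication of `SL(n)` on matrices through a representation `τ` of the monoid of
matrices: a sum of copies of `τ`. -/
def leftMulRep (τ : Matrix (Fin n) (Fin n) ℂ →* Matrix A A ℂ) :
    Representation ℂ (SL n) (Matrix A A ℂ) where
  toFun h := LinearMap.mulLeft ℂ (τ h.val)
  map_one' := by ext; simp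
  map_mul' g h := by
    ext1 x
    change τ (g.val * h.val) * x = τ g.val * (τ h.val * x)
    rw [map_mul, mul_assoc]

theorem IsPolyStarHom.traceOrthogonal_stable {τ : Matrix (Fin n) (Fin n) ℂ →* Matrix A A ℂ}
    (hτ : IsPolyStarHom τ) {P : Submodule ℂ (Matrix A A ℂ)}
    (hP : ∀ h, ∀ x ∈ P, leftMulRep τ h x ∈ P) (h : SL n) :
    ∀ x ∈ traceOrthogonal P, leftMulRep τ h x ∈ traceOrthogonal P := by
  intro x hx q hq
  have hdet : (h.valᴴ).det = 1 := by
    rw [det_conjTranspose, show h.val.det = 1 from h.2, star_one]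
  have hτq : (((τ h.valᴴ) * q)ᴴ * x).trace = 0 := hx _ (hP ⟨h.valᴴ, hdet⟩ q hq)
  rwa [hτ.map_conjTranspose, conjTranspose_mul, conjTranspose_conjTranspose, mul_assoc] at hτq

theorem IsPolyStarHom.le_of_uniUpper_fixed_mem {τ : Matrix (Fin n) (Fin n) ℂ →* Matrix A A ℂ}
    (hτ : IsPolyStarHom τ) {P L : Submodule ℂ (Matrix A A ℂ)}
    (hP : ∀ h, ∀ x ∈ P, leftMulRep τ h x ∈ P) (hL : ∀ h, ∀ x ∈ L, leftMulRep τ h x ∈ L)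
    (hPL : P ≤ L)
    (hfix : ∀ x ∈ L, (∀ u, SLIsUniUpper u → leftMulRep τ u x = x) → x ∈ P) : L ≤ P := by
  have hbot : L ⊓ traceOrthogonal P = ⊥ := by
    by_contra hne
    obtain ⟨x, ⟨hxL, hxP⟩, hx0, hxU⟩ := exists_uniUpper_fixed hne fun h x hx =>
      ⟨hL h x hx.1, hτ.traceOrthogonal_stable hP h x hx.2⟩
    exact hx0 (trace_conjTranspose_mul_self_eq_zero_iff.1 (hxP x (hfix x hxL hxU)))
  intro c hc
  obtain ⟨p, hp, hcp⟩ := exists_sub_mem_traceOrthogonal P c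
  have hmem : c - p ∈ L ⊓ traceOrthogonal P := ⟨sub_mem hc (hPL hp), hcp⟩
  rw [hbot, Submodule.mem_bot, sub_eq_zero] at hmem
  exact hmem ▸ hp

end StarRepresentations

section BorelWeil

variable {n : ℕ}

/-- The functions on `SL(n)` on which left translation by the lower triangular Borel subgroup acts
through the character `l`. -/
def lowerEquivariant (l : Fin n → ℕ) : Submodule ℂ (SL n → ℂ) where
  carrier := {h | ∀ b : SL n, b.val.IsLowerTriangular → ∀ g,
    h (b * g) = (∏ j, b.val j j ^ l j) * h g}
  add_mem' {f h} hf hh b hb g := by simp only [Pi.add_apply, hf b hb g, hh b hb g, mul_add]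
  zero_mem' _ _ _ := (mul_zero _).symm
  smul_mem' c h hh b hb g := by
    simp only [Pi.smul_apply, hh b hb g, smul_eq_mul, mul_left_comm]

theorem eq_smul_flagMinor_of_mem_lowerEquivariant {l : Fin n → ℕ} (hl : IsPartition l)
    {h : SL n → ℂ} (hh : h ∈ lowerEquivariant l)
    (hU : ∀ u : SL n, SLIsUniUpper u → ∀ g, h (g * u) = h g) (hfin : FinTranslates h) :
    h = h 1 • fun g => flagMinor l g.val := by
  refine IsBiinvariant.ext_diag ⟨fun u hu g => ?_, hU, hfin⟩
    ((isBiinvariant_flagMinor hl).smul _) fun t ht => ?_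
  · rw [hh u fun i j hij => hu.2 j i hij,
      Finset.prod_eq_one fun i _ => by rw [show u.val i i = 1 from hu.1 i, one_pow], one_mul]
  · have ht1 := hh t (fun i j hij => ht i j (OrderDual.toDual_lt_toDual.1 hij).ne) 1
    rw [mul_one, mul_comm] at ht1
    rw [ht1, Pi.smul_apply, smul_eq_mul, flagMinor_of_isDiag hl ht]

variable {V : Type*} [AddCommGroup V] [Module ℂ V] {ρ : Representation ℂ (SL n) V}

variable (ρ) in
/-- The matrix coefficients `g ↦ φ (g w)` of a representation, for a fixed linear form `φ`. -/
def coeffMap (φ : Module.Dual ℂ V) : V →ₗ[ℂ] (SL n → ℂ) where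
  toFun w g := φ (ρ g w)
  map_add' w w' := by ext g; simp
  map_smul' c w := by ext g; simp

theorem RepIsIrreducible.range_coeffMap_le (hirr : RepIsIrreducible ρ) {l : Fin n → ℕ}
    (hl : IsPartition l) {v : V} (hv : v ≠ 0) {φ : Module.Dual ℂ V}
    (hφ : ∀ g : SL n, φ (ρ g v) = flagMinor l g.val) :
    LinearMap.range (coeffMap ρ φ) ≤ lowerEquivariant l := by
  rintro _ ⟨w, rfl⟩ b hb g
  have hzero : φ ∘ₗ ρ b - (∏ j, b.val j j ^ l j) • φ = 0 := hirr.dual_eq_zero hv fun g => by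
    have hbg : φ (ρ b (ρ g v)) = flagMinor l (b.val * g.val) :=
      (hφ (b * g) ▸ by rw [map_mul, Module.End.mul_apply])
    rw [LinearMap.sub_apply, LinearMap.comp_apply, hbg, flagMinor_lower_mul hl hb,
      LinearMap.smul_apply, hφ, smul_eq_mul, sub_self]
  have hw := LinearMap.congr_fun (sub_eq_zero.1 hzero) (ρ g w)
  rwa [LinearMap.comp_apply, ← Module.End.mul_apply, ← map_mul] at hw

/-- The matrix coefficients `g ↦ trace (x τ(g))` of a representation `τ` by matrices. -/
def traceCoeff {A : Type*} [Fintype A] [DecidableEq A]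
    (τ : Matrix (Fin n) (Fin n) ℂ →* Matrix A A ℂ) : Matrix A A ℂ →ₗ[ℂ] (SL n → ℂ) where
  toFun x g := (x * τ g.val).trace
  map_add' x y := by ext g; simp [add_mul]
  map_smul' c x := by ext g; simp

theorem traceCoeff_leftMulRep {A : Type*} [Fintype A] [DecidableEq A]
    {τ : Matrix (Fin n) (Fin n) ℂ →* Matrix A A ℂ} (h : SL n) (x : Matrix A A ℂ) (g : SL n) :
    traceCoeff τ (leftMulRep τ h x) g = traceCoeff τ x (g * h) := by
  change (τ h.val * x * τ g.val).trace = (x * τ (g.val * h.val)).trace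
  rw [mul_assoc, Matrix.trace_mul_comm, map_mul, mul_assoc]

theorem IsPolyStarHom.finTranslates_traceCoeff {A : Type*} [Fintype A] [DecidableEq A]
    {τ : Matrix (Fin n) (Fin n) ℂ →* Matrix A A ℂ} (hτ : IsPolyStarHom τ) (x : Matrix A A ℂ) :
    FinTranslates (traceCoeff τ x) := by
  refine IsPolyMap.finTranslates (f := fun g => (x * τ g).trace) ?_
  simp only [Matrix.trace, Matrix.diag_apply, Matrix.mul_apply]
  exact IsPolyMap.sum fun a _ => IsPolyMap.sum fun b _ =>
    (isPolyMap_const _).mul (hτ.isPolyMap_apply b a)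

theorem RepIsIrreducible.exists_coeff_of_mem_lowerEquivariant (hirr : RepIsIrreducible ρ)
    {l : Fin n → ℕ} (hl : IsPartition l) {v : V} (hv : v ≠ 0) {φ : Module.Dual ℂ V}
    (hφ : ∀ g : SL n, φ (ρ g v) = flagMinor l g.val) {f : Matrix (Fin n) (Fin n) ℂ → ℂ}
    (hf : IsPolyMap ℂ f) (hfl : (fun g : SL n => f g.val) ∈ lowerEquivariant l) :
    ∃ w, ∀ g : SL n, f g.val = φ (ρ g w) := by
  obtain ⟨A, _, _, τ, c, hτ, hc⟩ := hf.exists_isPolyStarHom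
  have hTR : ∀ (h : SL n) x, traceCoeff τ (leftMulRep τ h x) = fun g => traceCoeff τ x (g * h) :=
    fun h x => funext (traceCoeff_leftMulRep h x)
  suffices (lowerEquivariant l).comap (traceCoeff τ)
      ≤ (LinearMap.range (coeffMap ρ φ)).comap (traceCoeff τ) by
    have hcT : traceCoeff τ c = fun g : SL n => f g.val := funext fun g => (hc g.val).symm
    obtain ⟨w, hw⟩ := this (show traceCoeff τ c ∈ lowerEquivariant l from hcT ▸ hfl)
    exact ⟨w, fun g => congrFun (hw.trans hcT).symm g⟩
  refine hτ.le_of_uniUpper_fixed_mem (fun h x => ?_) (fun h x hx b hb g => ?_)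
    (Submodule.comap_mono (hirr.range_coeffMap_le hl hv hφ)) fun x hx hxU => ?_
  · rintro ⟨w, hw⟩
    refine ⟨ρ h w, ?_⟩
    rw [hTR, ← hw]
    ext g
    simp [coeffMap]
  · rw [hTR]
    exact (congrArg (traceCoeff τ x) (mul_assoc b g h)).trans (hx b hb (g * h))
  · have hU : ∀ u : SL n, SLIsUniUpper u → ∀ g, traceCoeff τ x (g * u) = traceCoeff τ x g :=
      fun u hu g => by rw [← traceCoeff_leftMulRep, hxU u hu]
    refine ⟨traceCoeff τ x 1 • v, Eq.trans ?_
      (eq_smul_flagMinor_of_mem_lowerEquivariant hl hx hU (hτ.finTranslates_traceCoeff x)).symm⟩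
    ext g
    simp [coeffMap, hφ]

end BorelWeil

section TensorCoefficients

open PiTensorProduct

universe u

theorem exists_basis_repr_eq {K V : Type*} {X : Type u} [Field K] [AddCommGroup V] [Module K V]
    [FiniteDimensional K V] (f : X → Module.Dual K V) (hf : ∀ w, (∀ x, f x w = 0) → w = 0) :
    ∃ (κ : Type u) (_ : Finite κ) (B : Module.Basis κ K V) (x : κ → X),
      ∀ w k, B.repr w k = f (x k) w := by
  classical
  have hspan : Submodule.span K (Set.range f) = ⊤ :=
    Submodule.span_eq_top_of_ne_zero fun z hz => by
      by_contra! h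
      exact hz (hf z fun x => h _ ⟨x, rfl⟩)
  obtain ⟨κ, x, -, hx, hli⟩ := exists_linearIndependent' K f
  let B := Module.Basis.mk hli (by rw [hx, hspan])
  have : Finite κ := Module.Finite.finite_basis B
  exact ⟨κ, this, B.dualBasis.map (Module.evalEquiv K V).symm, x, fun w k => by
    simp [Module.Basis.map_repr, B]⟩

theorem eq_of_eq_on_grid {ι L : Type*} [Finite ι] [DecidableEq ι] {X κ : ι → Type*}
    (x : ∀ i, κ i → X i) {h h' : (∀ i, X i) → L}
    (hline : ∀ g i, (∀ k, h (Function.update g i (x i k)) = h' (Function.update g i (x i k))) →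
      h g = h' g)
    (hgrid : ∀ p : ∀ i, κ i, h (fun i => x i (p i)) = h' fun i => x i (p i)) : h = h' := by
  cases nonempty_fintype ι
  suffices ∀ (s : Finset ι) (g : ∀ i, X i), (∀ i ∉ s, ∃ k, g i = x i k) → h g = h' g from
    funext fun g => this Finset.univ g fun i hi => absurd (Finset.mem_univ i) hi
  intro s
  induction s using Finset.induction_on with
  | empty =>
    intro g hg
    choose p hp using fun i => hg i (Finset.notMem_empty i)
    rw [funext hp]
    exact hgrid p
  | insert i s _ ih =>
    intro g hg
    refine hline g i fun k => ih _ fun j hj => ?_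
    obtain rfl | hji := eq_or_ne j i
    · exact ⟨k, Function.update_self ..⟩
    · rw [Function.update_of_ne hji]
      exact hg j (by simp [hji, hj])

variable {K : Type*} [Field K] {r : ℕ} {V : Fin r → Type*} [∀ i, AddCommGroup (V i)]
  [∀ i, Module K (V i)] {X : Fin r → Type*} {f : ∀ i, X i → Module.Dual K (V i)}

/-- The linear form `⊗ w i ↦ ∏ f i (g i) (w i)` on a tensor product, as a function of the
parameter `g` of the forms. -/
noncomputable def tensorCoeff (f : ∀ i, X i → Module.Dual K (V i)) (g : ∀ i, X i) :
    Module.Dual K (⨂[K] i, V i) := dualDistrib (⨂ₜ[K] i, f i (g i))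

theorem tensorCoeff_tprod (g : ∀ i, X i) (w : ∀ i, V i) :
    tensorCoeff f g (⨂ₜ[K] i, w i) = ∏ i, f i (g i) (w i) :=
  dualDistrib_apply _ _

theorem exists_tensorCoeff_update (u : ⨂[K] i, V i) (g : ∀ i, X i) (i : Fin r) :
    ∃ w, ∀ y, tensorCoeff f (Function.update g i y) u = f i y w := by
  induction u using PiTensorProduct.induction_on with
  | smul_tprod c w =>
    refine ⟨(c * ∏ j ∈ Finset.univ.erase i, f j (g j) (w j)) • w i, fun y => ?_⟩
    rw [map_smul, map_smul, tensorCoeff_tprod, ← Finset.mul_prod_erase _ _ (Finset.mem_univ i),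
      Function.update_self, smul_eq_mul, smul_eq_mul, Finset.prod_congr rfl fun j hj => by
        rw [Function.update_of_ne (Finset.ne_of_mem_erase hj)]]
    ring
  | add x y hx hy =>
    obtain ⟨w, hw⟩ := hx
    obtain ⟨w', hw'⟩ := hy
    exact ⟨w + w', fun z => by rw [map_add, map_add, hw, hw']⟩

theorem piTensorProduct_repr_eq_tensorCoeff {κ : Fin r → Type*} [∀ i, Finite (κ i)]
    {B : ∀ i, Module.Basis (κ i) K (V i)} {x : ∀ i, κ i → X i}
    (hB : ∀ i w k, (B i).repr w k = f i (x i k) w) (u : ⨂[K] i, V i) (p : ∀ i, κ i) :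
    (Basis.piTensorProduct B).repr u p = tensorCoeff f (fun i => x i (p i)) u := by
  induction u using PiTensorProduct.induction_on with
  | smul_tprod c w =>
    rw [map_smul, map_smul, tensorCoeff_tprod, Finsupp.smul_apply,
      Basis.piTensorProduct_repr_tprod_apply]
    simp only [hB]
  | add y z hy hz => rw [map_add, map_add, Finsupp.add_apply, hy, hz]

variable [∀ i, FiniteDimensional K (V i)] (hf : ∀ i w, (∀ x, f i x w = 0) → w = 0)

include hf

theorem eq_zero_of_tensorCoeff_eq_zero {u : ⨂[K] i, V i} (hu : ∀ g, tensorCoeff f g u = 0) :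
    u = 0 := by
  choose κ hκ B x hB using fun i => exists_basis_repr_eq (f i) (hf i)
  refine (Basis.piTensorProduct B).ext_elem fun p => ?_
  rw [piTensorProduct_repr_eq_tensorCoeff hB, hu, map_zero, Finsupp.zero_apply]

theorem exists_tensorCoeff_eq {h : (∀ i, X i) → K}
    (hh : ∀ g i, ∃ w, ∀ y, h (Function.update g i y) = f i y w) :
    ∃ u, ∀ g, tensorCoeff f g u = h g := by
  choose κ hκ B x hB using fun i => exists_basis_repr_eq (f i) (hf i)
  let u := (Basis.piTensorProduct B).equivFun.symm fun p => h fun i => x i (p i)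
  refine ⟨u, congrFun (eq_of_eq_on_grid x (fun g i hgi => ?_) fun p => ?_)⟩
  · obtain ⟨w, hw⟩ := exists_tensorCoeff_update (f := f) u g i
    obtain ⟨w', hw'⟩ := hh g i
    have hww' : w = w' := (B i).ext_elem fun k => by rw [hB, hB, ← hw, ← hw', hgi]
    rw [← Function.update_eq_self i g, hw, hw', hww']
  · rw [← piTensorProduct_repr_eq_tensorCoeff hB, ← Module.Basis.equivFun_apply,
      LinearEquiv.apply_symm_apply]

end TensorCoefficients

section SemiInvariants

variable {n r : ℕ}

/-- Polynomial functions on `r`-tuples of matrices which are semi-invariant of weight `lam i` under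
left multiplication of the `i`-th matrix by invertible lower triangular matrices, and of weight `a`
under simultaneous right multiplication by upper triangular matrices in `SL(n)`. -/
structure IsSemiInvariant (lam : Fin r → Fin n → ℕ) (a : Fin n → ℤ)
    (F : (Fin r → Matrix (Fin n) (Fin n) ℂ) → ℂ) : Prop where
  isPolyMap : IsPolyMap ℂ F
  lower_mul : ∀ b g : Fin r → Matrix (Fin n) (Fin n) ℂ, (∀ i, (b i).det ≠ 0) →
    (∀ i, (b i).IsLowerTriangular) →
      F (fun i => b i * g i) = (∏ i, ∏ j, b i j j ^ lam i j) * F g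
  mul_uniUpper : ∀ b : SL n, SLIsUniUpper b → ∀ g : Fin r → SL n,
    F (fun i => (g i).val * b.val) = F fun i => (g i).val
  mul_diag : ∀ b : SL n, SLIsDiag b → ∀ g : Fin r → SL n,
    F (fun i => (g i).val * b.val) = (∏ j, b.val j j ^ a j) * F fun i => (g i).val

theorem IsPolyMap.update {K ι M : Type*} [Field K] [Finite ι] [DecidableEq ι] {Z : ι → Type*}
    [∀ i, AddCommGroup (Z i)] [∀ i, Module K (Z i)] [AddCommGroup M] [Module K M]
    {F : (∀ i, Z i) → M} (hF : IsPolyMap K F) (g : ∀ i, Z i) (i : ι) :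
    IsPolyMap K fun y => F (Function.update g i y) := by
  refine hF.comp (IsPolyMap.pi fun j => ?_)
  obtain rfl | hj := eq_or_ne j i
  · simp only [Function.update_self]
    exact isPolyMap_id
  · simp only [Function.update_of_ne hj]
    exact isPolyMap_const _

theorem IsSemiInvariant.update_mem_lowerEquivariant {lam : Fin r → Fin n → ℕ} {a : Fin n → ℤ}
    {F : (Fin r → Matrix (Fin n) (Fin n) ℂ) → ℂ} (hF : IsSemiInvariant lam a F)
    (g : Fin r → Matrix (Fin n) (Fin n) ℂ) (i : Fin r) :
    (fun y : SL n => F (Function.update g i y.val)) ∈ lowerEquivariant (lam i) := by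
  intro b hb y
  have hmul := hF.lower_mul (Function.update 1 i b.val) (Function.update g i y.val)
    (fun j => ?_) fun j => ?_
  · have hupdate : Function.update (1 : Fin r → Matrix (Fin n) (Fin n) ℂ) i b.val *
        Function.update g i y.val = Function.update g i (b.val * y.val) := by
      rw [← Function.update_mul, one_mul]
    rw [← Pi.mul_def, hupdate, Finset.prod_eq_single i (fun j _ hj => by simp [hj]) (by simp),
      Function.update_self] at hmul
    exact hmul
  all_goals obtain rfl | hj := eq_or_ne j i
  · rw [Function.update_self, b.2]
    exact one_ne_zero
  · rw [Function.update_of_ne hj, Pi.one_apply, Matrix.det_one]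
    exact one_ne_zero
  · rwa [Function.update_self]
  · rw [Function.update_of_ne hj]
    exact Matrix.blockTriangular_one

theorem RepIsIrreducible.exists_isPolyMap_coeff {V : Type*} [AddCommGroup V] [Module ℂ V]
    {ρ : Representation ℂ (SL n) V} (hirr : RepIsIrreducible ρ) {l : Fin n → ℕ}
    (hl : IsPartition l) {v : V} (hv : v ≠ 0) {φ : Module.Dual ℂ V}
    (hφ : ∀ g : SL n, φ (ρ g v) = flagMinor l g.val) (w : V) :
    ∃ f : Matrix (Fin n) (Fin n) ℂ → ℂ, IsPolyMap ℂ f ∧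
      (∀ b g : Matrix (Fin n) (Fin n) ℂ, b.IsLowerTriangular →
        f (b * g) = (∏ j, b j j ^ l j) * f g) ∧
      ∀ g : SL n, f g.val = φ (ρ g w) := by
  obtain ⟨c, rfl⟩ := Finsupp.mem_span_range_iff_exists_finsupp.1
    (hirr.span_orbit_eq_top hv ▸ Submodule.mem_top : w ∈ Submodule.span ℂ (Set.range (ρ · v)))
  refine ⟨fun g => ∑ h ∈ c.support, c h * flagMinor l (g * h.val), IsPolyMap.sum fun h _ =>
    (isPolyMap_const _).mul ((isPolyMap_flagMinor l).comp
      (isPolyMap_linear (LinearMap.mulRight ℂ h.val))), fun b g hb => ?_, fun g => ?_⟩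
  · simp only [mul_assoc, flagMinor_lower_mul hl hb, Finset.mul_sum, mul_left_comm]
  · simp only [Finsupp.sum, map_sum, map_smul, smul_eq_mul]
    refine Finset.sum_congr rfl fun h _ => ?_
    rw [← Module.End.mul_apply, ← map_mul, hφ]
    rfl

variable {V : Fin r → Type*} [∀ i, AddCommGroup (V i)] [∀ i, Module ℂ (V i)]
  {ρ : ∀ i, Representation ℂ (SL n) (V i)} {φ : ∀ i, Module.Dual ℂ (V i)}
  {lam : Fin r → Fin n → ℕ} {v : ∀ i, V i}

theorem tensorCoeff_piTensorRep (g : Fin r → SL n) (b : SL n) (u : ⨂[ℂ] i, V i) :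
    tensorCoeff (fun i y => φ i ∘ₗ ρ i y) g (piTensorRep ρ b u) =
      tensorCoeff (fun i y => φ i ∘ₗ ρ i y) (fun i => g i * b) u := by
  induction u using PiTensorProduct.induction_on with
  | smul_tprod c w =>
    have hb : piTensorRep ρ b (PiTensorProduct.tprod ℂ w) =
      PiTensorProduct.tprod ℂ fun i => ρ i b (w i) := PiTensorProduct.map_tprod _ _
    simp [hb, tensorCoeff_tprod]
  | add x y hx hy => rw [map_add, map_add, map_add, hx, hy]

theorem exists_isPolyMap_tensorCoeff (hlam : ∀ i, IsPartition (lam i))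
    (hirr : ∀ i, RepIsIrreducible (ρ i)) (hv : ∀ i, v i ≠ 0)
    (hφ : ∀ i (g : SL n), φ i (ρ i g (v i)) = flagMinor (lam i) g.val) (u : ⨂[ℂ] i, V i) :
    ∃ F : (Fin r → Matrix (Fin n) (Fin n) ℂ) → ℂ, IsPolyMap ℂ F ∧
      (∀ b g : Fin r → Matrix (Fin n) (Fin n) ℂ, (∀ i, (b i).IsLowerTriangular) →
        F (fun i => b i * g i) = (∏ i, ∏ j, b i j j ^ lam i j) * F g) ∧
      ∀ g : Fin r → SL n,
        F (fun i => (g i).val) = tensorCoeff (fun i y => φ i ∘ₗ ρ i y) g u := by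
  induction u using PiTensorProduct.induction_on with
  | smul_tprod c w =>
    choose f hf hfl hfv using fun i => (hirr i).exists_isPolyMap_coeff (hlam i) (hv i) (hφ i) (w i)
    refine ⟨fun g => c * ∏ i, f i (g i), (isPolyMap_const c).mul
      (IsPolyMap.prod fun i _ => (hf i).comp (isPolyMap_id.apply i)), fun b g hb => ?_,
      fun g => ?_⟩
    · simp only [hfl _ _ _ (hb _), Finset.prod_mul_distrib, mul_left_comm]
    · simp only [hfv, map_smul, tensorCoeff_tprod, smul_eq_mul, LinearMap.comp_apply]
  | add x y hx hy =>
    obtain ⟨f, hf, hfl, hfv⟩ := hx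
    obtain ⟨f', hf', hfl', hfv'⟩ := hy
    exact ⟨fun g => f g + f' g, hf.add hf',
      fun b g hb => by simp only [hfl b g hb, hfl' b g hb, mul_add],
      fun g => by simp only [hfv, hfv', map_add]⟩

theorem RepIsIrreducible.eq_zero_of_coeff_eq_zero {V : Type*} [AddCommGroup V] [Module ℂ V]
    {ρ : Representation ℂ (SL n) V} (hirr : RepIsIrreducible ρ) {l : Fin n → ℕ} {v : V}
    {φ : Module.Dual ℂ V} (hφ : ∀ g : SL n, φ (ρ g v) = flagMinor l g.val) {w : V}
    (hw : ∀ g, φ (ρ g w) = 0) : w = 0 := by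
  by_contra hw0
  have hφ1 := hφ 1
  rw [hirr.dual_eq_zero hw0 hw, Matrix.SpecialLinearGroup.coe_one, flagMinor_one] at hφ1
  exact zero_ne_one hφ1

variable [∀ i, FiniteDimensional ℂ (V i)]

theorem exists_isSemiInvariant_of_occurs (hlam : ∀ i, IsPartition (lam i))
    (hirr : ∀ i, RepIsIrreducible (ρ i)) (hhw : ∀ i, Occurs (ρ i) (fun j => (lam i j : ℤ)))
    {a : Fin n → ℤ} (ha : Occurs (piTensorRep ρ) a) :
    ∃ F, IsSemiInvariant lam a F ∧ ∃ g : Fin r → SL n, F (fun i => (g i).val) ≠ 0 := by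
  choose v hv using hhw
  choose φ hφ using fun i => (hirr i).exists_dual_eq_flagMinor (hlam i) (hv i)
  obtain ⟨u, hu0, huU, huD⟩ := ha
  obtain ⟨F, hF, hFl, hFv⟩ := exists_isPolyMap_tensorCoeff hlam hirr (fun i => (hv i).1) hφ u
  have hmul : ∀ (b : SL n) (g : Fin r → SL n), F (fun i => (g i).val * b.val) =
      tensorCoeff (fun i y => φ i ∘ₗ ρ i y) g (piTensorRep ρ b u) := fun b g => by
    rw [tensorCoeff_piTensorRep, ← hFv]
    rfl
  refine ⟨F, ⟨hF, fun b g _ => hFl b g, fun b hb g => ?_, fun b hb g => ?_⟩, ?_⟩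
  · rw [hmul, huU b hb, hFv]
  · rw [hmul, huD b hb, map_smul, hFv, smul_eq_mul]
  · by_contra! h
    exact hu0 (eq_zero_of_tensorCoeff_eq_zero (fun i _ => (hirr i).eq_zero_of_coeff_eq_zero (hφ i))
      fun g => by rw [← hFv, h])

theorem IsSemiInvariant.occurs (hlam : ∀ i, IsPartition (lam i))
    (hirr : ∀ i, RepIsIrreducible (ρ i)) (hhw : ∀ i, Occurs (ρ i) (fun j => (lam i j : ℤ)))
    {a : Fin n → ℤ} {F : (Fin r → Matrix (Fin n) (Fin n) ℂ) → ℂ} (hF : IsSemiInvariant lam a F)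
    (hF0 : ∃ g : Fin r → SL n, F (fun i => (g i).val) ≠ 0) : Occurs (piTensorRep ρ) a := by
  choose v hv using hhw
  choose φ hφ using fun i => (hirr i).exists_dual_eq_flagMinor (hlam i) (hv i)
  have hsep : ∀ i w, (∀ y, (φ i ∘ₗ ρ i y) w = 0) → w = 0 :=
    fun i _ => (hirr i).eq_zero_of_coeff_eq_zero (hφ i)
  obtain ⟨u, hu⟩ := exists_tensorCoeff_eq hsep (h := fun g => F fun i => (g i).val) fun g i => by
    obtain ⟨w, hw⟩ := (hirr i).exists_coeff_of_mem_lowerEquivariant (hlam i) (hv i).1 (hφ i)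
      (hF.isPolyMap.update _ i) (hF.update_mem_lowerEquivariant (fun j => (g j).val) i)
    refine ⟨w, fun y => (congrArg F ?_).trans (hw y)⟩
    exact funext fun j => Function.apply_update (fun _ (y : SL n) => y.val) g i y j
  have hrep : ∀ (b : SL n) g, tensorCoeff (fun i y => φ i ∘ₗ ρ i y) g (piTensorRep ρ b u) =
      F (fun i => (g i).val * b.val) := fun b g => by
    rw [tensorCoeff_piTensorRep, hu]
    rfl
  refine ⟨u, ?_, fun b hb => ?_, fun b hb => ?_⟩
  · rintro rfl
    obtain ⟨g, hg⟩ := hF0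
    exact hg (by rw [← hu, map_zero])
  all_goals refine sub_eq_zero.1 (eq_zero_of_tensorCoeff_eq_zero hsep fun g => ?_)
  · rw [map_sub, hrep, hF.mul_uniUpper b hb, hu, sub_self]
  · rw [map_sub, hrep, hF.mul_diag b hb, map_smul, hu, smul_eq_mul, sub_self]

end SemiInvariants

section Echelon

open Matrix

variable {K ι : Type*} [Field K] {rk : ι → ℕ}

variable (K) in
/-- The coordinate subspace of the vectors supported on the indices of rank less than `m`; as `m`
varies these form the flag with respect to which positions of subspaces are measured. -/
def supportedBelow (rk : ι → ℕ) (m : ℕ) : Submodule K (ι → K) where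
  carrier := {v | ∀ j, m ≤ rk j → v j = 0}
  add_mem' hx hy j hj := by rw [Pi.add_apply, hx j hj, hy j hj, add_zero]
  zero_mem' _ _ := rfl
  smul_mem' c x hx j hj := by rw [Pi.smul_apply, hx j hj, smul_zero]

variable [Fintype ι]

open Classical in
/-- The Schubert position of a subspace: the indices of the leading entries of its vectors, where
the leading entry of a vector is its nonzero entry of largest rank. -/
noncomputable def pivots (rk : ι → ℕ) (S : Submodule K (ι → K)) : Finset ι :=
  {k | ∃ v ∈ S, v k = 1 ∧ ∀ i, rk k < rk i → v i = 0}

variable {S : Submodule K (ι → K)}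

theorem mem_pivots {k : ι} :
    k ∈ pivots rk S ↔ ∃ v ∈ S, v k = 1 ∧ ∀ i, rk k < rk i → v i = 0 := by
  simp [pivots]

/-- A unitriangular matrix (for the order of `rk`) whose columns at the pivots of `S` lie in `S`,
that is, an echelon basis of `S` completed to a basis of the whole space. -/
structure IsEchelon (rk : ι → ℕ) (S : Submodule K (ι → K)) (P : Matrix ι ι K) : Prop where
  diag_eq_one : ∀ k, P k k = 1
  eq_zero_of_lt : ∀ i k, rk k < rk i → P i k = 0
  col_mem : ∀ k ∈ pivots rk S, P.col k ∈ S

theorem exists_isEchelon (rk : ι → ℕ) (S : Submodule K (ι → K)) : ∃ P, IsEchelon rk S P := by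
  classical
  have hlead (k : ι) : ∃ v : ι → K, (v k = 1 ∧ ∀ i, rk k < rk i → v i = 0) ∧
      (k ∈ pivots rk S → v ∈ S) := by
    by_cases hk : k ∈ pivots rk S
    · obtain ⟨v, hv, hvk⟩ := mem_pivots.1 hk
      exact ⟨v, hvk, fun _ => hv⟩
    · refine ⟨Pi.single k 1, ⟨Pi.single_eq_same k 1, fun i hi => ?_⟩, fun h => (hk h).elim⟩
      exact Pi.single_eq_of_ne (by rintro rfl; exact lt_irrefl _ hi) _
  choose v hv hvS using hlead
  exact ⟨of fun i k => v k i, fun k => (hv k).1, fun i k => (hv k).2 i, hvS⟩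

namespace IsEchelon

variable {P : Matrix ι ι K}

theorem det_eq_one [DecidableEq ι] (hP : IsEchelon rk S P) (hrk : Function.Injective rk) :
    P.det = 1 := by
  let := LinearOrder.lift' rk hrk
  have hupper : P.BlockTriangular id := fun i k h => hP.eq_zero_of_lt i k h
  simpa [hP.diag_eq_one] using det_of_isUpperTriangular hupper

theorem exists_mulVec_eq (hP : IsEchelon rk S P) (hrk : Function.Injective rk) (m : ℕ) :
    ∀ v ∈ S ⊓ supportedBelow K rk m,
      ∃ c : ι → K, (∀ j, c j ≠ 0 → j ∈ pivots rk S ∧ rk j < m) ∧ P *ᵥ c = v := by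
  classical
  induction m with
  | zero =>
    rintro v ⟨-, hv⟩
    exact ⟨0, fun j hj => (hj rfl).elim, by ext j; simp [hv j (Nat.zero_le _)]⟩
  | succ m ih =>
    rintro v ⟨hvS, hv⟩
    have of_lt : ∀ w ∈ S ⊓ supportedBelow K rk m, ∃ c : ι → K,
        (∀ j, c j ≠ 0 → j ∈ pivots rk S ∧ rk j < m + 1) ∧ P *ᵥ c = w := fun w hw => by
      obtain ⟨c, hc, h⟩ := ih w hw
      exact ⟨c, fun j hj => (hc j hj).imp_right Nat.lt_succ_of_lt, h⟩
    by_cases hj : ∃ j, rk j = m ∧ v j ≠ 0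
    · obtain ⟨j, rfl, hj0⟩ := hj
      have hpivot : j ∈ pivots rk S := mem_pivots.2
        ⟨(v j)⁻¹ • v, S.smul_mem _ hvS, by simp [hj0], fun i hi => by simp [hv i hi]⟩
      have hlower : v - v j • P.col j ∈ supportedBelow K rk (rk j) := fun i hi => by
        rcases hi.eq_or_lt with h | h
        · simp [hrk h, hP.diag_eq_one]
        · simp [hv i h, hP.eq_zero_of_lt i j h]
      obtain ⟨c, hc, h⟩ := of_lt _
        ⟨S.sub_mem hvS (S.smul_mem _ (hP.col_mem j hpivot)), hlower⟩
      refine ⟨c + Pi.single j (v j), fun i hi => ?_, ?_⟩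
      · obtain rfl | hij := eq_or_ne i j
        · exact ⟨hpivot, Nat.lt_succ_self _⟩
        · exact hc i (by simpa [hij] using hi)
      · rw [mulVec_add, h, mulVec_single, op_smul_eq_smul, sub_add_cancel]
    · push Not at hj
      exact of_lt v ⟨hvS, fun j h => h.eq_or_lt.elim (fun h => hj j h.symm) (hv j)⟩

end IsEchelon

theorem finrank_inf_supportedBelow_le (hrk : Function.Injective rk) (S : Submodule K (ι → K))
    (m : ℕ) : Module.finrank K ↥(S ⊓ supportedBelow K rk m) ≤
      ((pivots rk S).filter fun j => rk j < m).card := by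
  classical
  obtain ⟨P, hP⟩ := exists_isEchelon rk S
  have hspan : S ⊓ supportedBelow K rk m ≤
      Submodule.span K (((pivots rk S).filter fun j => rk j < m).image P.col : Set (ι → K)) := by
    intro v hv
    obtain ⟨c, hc, rfl⟩ := hP.exists_mulVec_eq hrk m v hv
    rw [mulVec_eq_sum]
    refine Submodule.sum_mem _ fun j _ => ?_
    obtain hj | hj := eq_or_ne (c j) 0
    · simp [hj]
    · rw [op_smul_eq_smul]
      exact Submodule.smul_mem _ _ (Submodule.subset_span
        (Finset.mem_image_of_mem _ (Finset.mem_filter.2 (hc j hj))))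
  exact (Submodule.finrank_mono hspan).trans
    ((finrank_span_finset_le_card _).trans Finset.card_image_le)

theorem card_pivots (hrk : Function.Injective rk) (S : Submodule K (ι → K)) :
    (pivots rk S).card = Module.finrank K S := by
  classical
  obtain ⟨P, hP⟩ := exists_isEchelon rk S
  refine le_antisymm ?_ ?_
  · have hdet : P.det ≠ 0 := (hP.det_eq_one hrk).trans_ne one_ne_zero
    have hcols : LinearIndependent K fun k : pivots rk S => (⟨P.col k, hP.col_mem k k.2⟩ : S) :=
      .of_comp S.subtype
        ((linearIndependent_cols_of_det_ne_zero hdet).comp _ Subtype.val_injective)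
    simpa using hcols.fintype_card_le_finrank
  · have htop : supportedBelow K rk (Finset.univ.sup rk + 1) = ⊤ := eq_top_iff.2 fun v _ j hj =>
      absurd (Finset.le_sup (f := rk) (Finset.mem_univ j)) (Nat.not_le_of_lt hj)
    have hle := finrank_inf_supportedBelow_le hrk S (Finset.univ.sup rk + 1)
    rw [htop, inf_top_eq] at hle
    exact hle.trans (Finset.card_filter_le _ _)

end Echelon

section KingInequality

open Matrix

theorem zpow_sum₀ {ι G₀ : Type*} [CommGroupWithZero G₀] {t : G₀} (ht : t ≠ 0) (s : Finset ι)
    (f : ι → ℤ) : t ^ ∑ j ∈ s, f j = ∏ j ∈ s, t ^ f j := by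
  classical
  induction s using Finset.induction_on with
  | empty => simp
  | insert i s hi ih => rw [Finset.prod_insert hi, Finset.sum_insert hi, zpow_add₀ ht, ih]

theorem exists_smul_specialLinearGroup_eq {ι K : Type*} [Fintype ι] [DecidableEq ι] [Field K]
    [IsAlgClosed K] {g : Matrix ι ι K} (hg : g.det ≠ 0) :
    ∃ (c : K) (h : SpecialLinearGroup ι K), c ≠ 0 ∧ g = c • h.val := by
  obtain hι | hι := isEmpty_or_nonempty ι
  · exact ⟨1, 1, one_ne_zero, Subsingleton.elim _ _⟩
  · obtain ⟨c, hc⟩ := IsAlgClosed.exists_pow_nat_eq g.det (Fintype.card_pos (α := ι))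
    have hc0 : c ≠ 0 := fun h => hg (by rw [← hc, h, zero_pow Fintype.card_ne_zero])
    exact ⟨c, ⟨c⁻¹ • g, by rw [det_smul, inv_pow, hc, inv_mul_cancel₀ hg]⟩, hc0,
      by simp [smul_smul, hc0]⟩

/-- A polynomial cannot have a pole at the origin. -/
theorem nonneg_of_polynomial_eval_eq_zpow_mul {K : Type*} [Field K] [Infinite K]
    {p : Polynomial K} {e : ℤ} {c : K} (hc : c ≠ 0) (h : ∀ t ≠ 0, p.eval t = t ^ e * c) :
    0 ≤ e := by
  by_contra! he
  obtain ⟨m, rfl⟩ : ∃ m : ℕ, e = -(m + 1) := ⟨(-e - 1).toNat, by omega⟩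
  have hp : p * Polynomial.X ^ (m + 1) = Polynomial.C c :=
    Polynomial.eq_of_infinite_eval_eq _ _ <| (Set.finite_singleton (0 : K)).infinite_compl.mono
      fun t ht => by
        have ht : t ≠ 0 := ht
        simp only [Set.mem_ofPred_eq, Polynomial.eval_mul, Polynomial.eval_pow, Polynomial.eval_X,
          Polynomial.eval_C]
        rw [h t ht, mul_right_comm, ← zpow_natCast, ← zpow_add₀ ht]
        simp
  exact hc (by simpa using (congrArg (Polynomial.eval 0) hp).symm)

theorem IsEchelon.inv_mul_mul_apply_eq_zero {K ι κ : Type*} [Field K] [Fintype ι] [Fintype κ]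
    [DecidableEq κ] {rk : ι → ℕ} {rk' : κ → ℕ} (hrk' : Function.Injective rk')
    {S : Submodule K (ι → K)} {A : Matrix κ ι K} {P : Matrix ι ι K} {Q : Matrix κ κ K}
    (hP : IsEchelon rk S P) (hQ : IsEchelon rk' (S.map A.mulVecLin) Q) {x : κ} {y : ι}
    (hy : y ∈ pivots rk S) (hx : x ∉ pivots rk' (S.map A.mulVecLin)) :
    (Q⁻¹ * (A * P)) x y = 0 := by
  have hcol : A *ᵥ P.col y ∈ S.map A.mulVecLin ⊓ supportedBelow K rk' (Finset.univ.sup rk' + 1) :=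
    ⟨⟨_, hP.col_mem y hy, rfl⟩, fun j hj =>
      absurd (Finset.le_sup (f := rk') (Finset.mem_univ j)) (Nat.not_le_of_lt hj)⟩
  obtain ⟨c, hc, hQc⟩ := hQ.exists_mulVec_eq hrk' _ _ hcol
  have hdet : IsUnit Q.det := by rw [hQ.det_eq_one hrk']; exact isUnit_one
  have hcol' : (Q⁻¹ * (A * P)).col y = c := calc
    (Q⁻¹ * (A * P)).col y = Q⁻¹ *ᵥ (A *ᵥ P.col y) := rfl
    _ = c := by rw [← hQc, mulVec_mulVec, nonsing_inv_mul _ hdet, one_mulVec]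
  exact (congrFun hcol' x).trans (by_contra fun hcx => hx (hc x hcx).1)

/-- The weights of the one-parameter subgroup `t ↦ t ^ (-c) • diag(t ^ n, 1)`, with `t ^ n` in the
positions of `T`. -/
def blockWeight {ι : Type*} [DecidableEq ι] (n : ℕ) (c : ℤ) (T : Finset ι) (j : ι) : ℤ :=
  (if j ∈ T then (n : ℤ) else 0) - c

theorem exists_diagonal_zpow_mul_eq {K ι κ : Type*} [Field K] [Fintype ι] [Fintype κ]
    [DecidableEq ι] [DecidableEq κ] (n : ℕ) (c : ℤ) {M : Matrix κ ι K} {I : Finset ι}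
    {J : Finset κ} (hM : ∀ x ∉ J, ∀ y ∈ I, M x y = 0) :
    ∃ A B : Matrix κ ι K, ∀ t : K, t ≠ 0 → diagonal (fun x => t ^ blockWeight n c J x) * M =
      (A + t ^ n • B) * diagonal fun y => t ^ blockWeight n c I y := by
  refine ⟨of fun x y => if x ∈ J ∧ y ∉ I then 0 else M x y,
    of fun x y => if x ∈ J ∧ y ∉ I then M x y else 0, fun t ht => ?_⟩
  have hn : t ^ ((n : ℤ) - c) = t ^ n * t ^ (-c) := by
    rw [sub_eq_add_neg, zpow_add₀ ht, zpow_natCast]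
  ext x y
  rw [diagonal_mul, mul_diagonal]
  by_cases hx : x ∈ J <;> by_cases hy : y ∈ I
  · simp [blockWeight, hx, hy, mul_comm]
  · simp only [blockWeight, hx, hy, if_true, if_false, zero_sub, hn, Matrix.add_apply,
      Matrix.smul_apply, of_apply, not_false_eq_true, and_self, zero_add, smul_eq_mul]
    ring
  · simp [hx, hy, hM x hx y hy]
  · simp [blockWeight, hx, hy, mul_comm]

variable {n r : ℕ} {lam : Fin r → Fin n → ℕ} {a : Fin n → ℤ}
  {F : (Fin r → Matrix (Fin n) (Fin n) ℂ) → ℂ} {g : Fin r → Matrix (Fin n) (Fin n) ℂ}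

namespace IsSemiInvariant

theorem smul (hF : IsSemiInvariant lam a F) {c : Fin r → ℂ} (hc : ∀ i, c i ≠ 0)
    (g : Fin r → Matrix (Fin n) (Fin n) ℂ) :
    F (fun i => c i • g i) = (∏ i, ∏ j, c i ^ lam i j) * F g := by
  simpa using hF.lower_mul (fun i => c i • 1) g (fun i => by simp [hc])
    fun i => by rw [smul_one_eq_diagonal]; exact blockTriangular_diagonal _

theorem exists_specialLinearGroup_ne_zero (hF : IsSemiInvariant lam a F)
    (hg : ∀ i, (g i).det ≠ 0) (hFg : F g ≠ 0) :
    ∃ h : Fin r → SL n, F (fun i => (h i).val) ≠ 0 := by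
  choose c h hc hgh using fun i => exists_smul_specialLinearGroup_eq (hg i)
  obtain rfl : g = fun i => c i • (h i).val := funext hgh
  rw [hF.smul hc] at hFg
  exact ⟨h, right_ne_zero_of_mul hFg⟩

theorem mul_right (hF : IsSemiInvariant lam a F) {b : SL n} {χ : ℂ}
    (hb : ∀ g : Fin r → SL n, F (fun i => (g i).val * b.val) = χ * F fun i => (g i).val)
    (hg : ∀ i, (g i).det ≠ 0) : F (fun i => g i * b.val) = χ * F g := by
  choose c h hc hgh using fun i => exists_smul_specialLinearGroup_eq (hg i)
  obtain rfl : g = fun i => c i • (h i).val := funext hgh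
  simp only [smul_mul]
  rw [hF.smul hc, hF.smul hc, hb, mul_left_comm]

theorem diagonal_zpow_mul (hF : IsSemiInvariant lam a F) {t : ℂ} (ht : t ≠ 0)
    (w : Fin r → Fin n → ℤ) (g : Fin r → Matrix (Fin n) (Fin n) ℂ) :
    F (fun i => diagonal (fun j => t ^ w i j) * g i) = t ^ (∑ i, ∑ j, w i j * lam i j) * F g := by
  rw [hF.lower_mul (fun i => diagonal fun j => t ^ w i j) g
    (fun i => by
      rw [det_diagonal]
      exact Finset.prod_ne_zero_iff.2 fun j _ => zpow_ne_zero _ ht)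
    fun i => blockTriangular_diagonal _]
  simp_rw [zpow_sum₀ ht, diagonal_apply_eq, _root_.zpow_mul, zpow_natCast]

theorem mul_diagonal_zpow (hF : IsSemiInvariant lam a F) {t : ℂ} (ht : t ≠ 0)
    {u : Fin n → ℤ} (hu : t ^ ∑ j, u j = 1) (hg : ∀ i, (g i).det ≠ 0) :
    F (fun i => g i * diagonal fun j => t ^ u j) = t ^ (∑ j, u j * a j) * F g := by
  let d : SL n := ⟨diagonal fun j => t ^ u j, by rw [det_diagonal, ← zpow_sum₀ ht, hu]⟩
  have hd : F (fun i => g i * d.val) = (∏ j, d.val j j ^ a j) * F g :=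
    hF.mul_right (hF.mul_diag d fun i j hij => diagonal_apply_ne _ hij) hg
  simpa only [d, diagonal_apply_eq, ← _root_.zpow_mul, ← zpow_sum₀ ht] using hd

/-- The centre of `SL n` acts by scalars, so its characters on both sides must agree. -/
theorem exists_sum_eq_add_mul (hF : IsSemiInvariant lam a F)
    (h0 : ∃ h : Fin r → SL n, F (fun i => (h i).val) ≠ 0) :
    ∃ s : ℤ, ∑ i, ∑ j, (lam i j : ℤ) = ∑ j, a j + n * s := by
  obtain rfl | hn := eq_or_ne n 0
  · exact ⟨0, by simp⟩
  obtain ⟨h, h0⟩ := h0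
  have hζ := Complex.isPrimitiveRoot_exp n hn
  set ζ := Complex.exp (2 * Real.pi * Complex.I / n)
  have hζ0 : ζ ≠ 0 := hζ.ne_zero hn
  have hleft := hF.diagonal_zpow_mul hζ0 (fun _ _ => 1) fun i => (h i).val
  have hright := hF.mul_diagonal_zpow hζ0 (u := fun _ => 1) (g := fun i => (h i).val)
    (by simp [hζ.pow_eq_one]) fun i => by simp
  have hcomm (i : Fin r) : diagonal (fun _ => ζ ^ (1 : ℤ)) * (h i).val =
      (h i).val * diagonal fun _ => ζ ^ (1 : ℤ) := by
    rw [← smul_one_eq_diagonal, smul_mul_assoc, mul_smul_comm, one_mul, mul_one]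
  simp only [hcomm, one_mul] at hleft hright
  have hpow := mul_right_cancel₀ h0 (hleft.symm.trans hright)
  obtain ⟨s, hs⟩ := (hζ.zpow_eq_one_iff_dvd (∑ i, ∑ j, (lam i j : ℤ) - ∑ j, a j)).1
    (by rw [zpow_sub₀ hζ0, hpow, div_self (zpow_ne_zero _ hζ0)])
  exact ⟨s, by linarith⟩

/-- The limit `t → 0` of a one-parameter subgroup of the torus exists on block triangular tuples,
so the exponent by which it scales a polynomial semi-invariant cannot be negative. -/
theorem card_mul_le_of_apply_eq_zero (hF : IsSemiInvariant lam a F) (hg : ∀ i, (g i).det ≠ 0)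
    (hFg : F g ≠ 0) (I : Finset (Fin n)) (J : Fin r → Finset (Fin n))
    (hIJ : ∀ i, ∀ x ∉ J i, ∀ y ∈ I, g i x y = 0) :
    (I.card : ℤ) * (∑ i, ∑ j, (lam i j : ℤ) - ∑ j, a j) ≤
      n * (∑ i, ∑ j ∈ J i, (lam i j : ℤ) - ∑ j ∈ I, a j) := by
  let w (i : Fin r) := blockWeight n I.card (J i)
  let u := blockWeight n I.card I
  choose A B hconj using fun i => exists_diagonal_zpow_mul_eq n (I.card : ℤ) (hIJ i)
  obtain ⟨p, hp⟩ := hF.isPolyMap.exists_polynomial_eq_line A B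
  have hu : ∑ j, u j = 0 := by simp [u, blockWeight, mul_comm]
  have heval {t : ℂ} (ht : t ≠ 0) : (p.comp (Polynomial.X ^ n)).eval t =
      t ^ (∑ i, ∑ j, w i j * lam i j - ∑ j, u j * a j) * F g := by
    have hdet (i : Fin r) : (A i + t ^ n • B i).det ≠ 0 := by
      refine left_ne_zero_of_mul (b := (diagonal fun j => t ^ u j).det) ?_
      rw [← det_mul, ← hconj _ t ht, det_mul, det_diagonal]
      exact mul_ne_zero (Finset.prod_ne_zero_iff.2 fun j _ => zpow_ne_zero _ ht) (hg i)
    have hline : F (fun i => A i + t ^ n • B i) = p.eval (t ^ n) := hp _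
    have hright := hF.mul_diagonal_zpow ht (u := u) (by rw [hu, zpow_zero]) hdet
    simp only [u, ← hconj _ t ht] at hright
    rw [hF.diagonal_zpow_mul ht w g, hline] at hright
    rw [zpow_sub₀ ht, div_mul_eq_mul_div, hright, mul_div_cancel_left₀ _ (zpow_ne_zero _ ht),
      Polynomial.eval_comp, Polynomial.eval_pow, Polynomial.eval_X]
  have hexp := nonneg_of_polynomial_eval_eq_zpow_mul hFg fun t ht => heval ht
  simp only [w, u, blockWeight, ite_mul, zero_mul, Finset.sum_ite_mem, Finset.univ_inter, sub_mul,
    Finset.sum_sub_distrib, ← Finset.mul_sum] at hexp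
  linarith

theorem inv_mul_mul_isEchelon_eq (hF : IsSemiInvariant lam a F) (hg : ∀ i, (g i).det ≠ 0)
    {P : Matrix (Fin n) (Fin n) ℂ} {Q : Fin r → Matrix (Fin n) (Fin n) ℂ}
    {S : Submodule ℂ (Fin n → ℂ)} {T : Fin r → Submodule ℂ (Fin n → ℂ)}
    (hP : IsEchelon Fin.val S P) (hQ : ∀ i, IsEchelon (fun j => j.rev.val) (T i) (Q i)) :
    F (fun i => (Q i)⁻¹ * (g i * P)) = F g := by
  have hdetP : P.det = 1 := hP.det_eq_one Fin.val_injective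
  have hdetQ (i : Fin r) : (Q i).det = 1 :=
    (hQ i).det_eq_one (Fin.val_injective.comp Fin.rev_injective)
  have hleft := hF.lower_mul Q (fun i => (Q i)⁻¹ * (g i * P)) (fun i => by simp [hdetQ])
    fun i j k hjk => (hQ i).eq_zero_of_lt j k (Fin.lt_def.1 (Fin.rev_lt_rev.2 hjk))
  have hright : F (fun i => g i * P) = 1 * F g := by
    refine hF.mul_right (b := ⟨P, hdetP⟩) (fun h => ?_) hg
    rw [one_mul]
    exact hF.mul_uniUpper ⟨P, hdetP⟩ ⟨hP.diag_eq_one, hP.eq_zero_of_lt⟩ h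
  have hcancel (i : Fin r) : Q i * ((Q i)⁻¹ * (g i * P)) = g i * P :=
    mul_nonsing_inv_cancel_left _ _ (by rw [hdetQ]; exact isUnit_one)
  simpa [hcancel, (hQ _).diag_eq_one, hright] using hleft.symm

end IsSemiInvariant

/-- King's numerical criterion for the semi-invariants of weights `lam` and `m` at the tuple `g`,
indexed by the subspaces `S`: a relation between the Schubert position of `S` with respect to the
standard flag and those of its images `g i S` with respect to the opposite flag. -/
def KingInequalities (lam : Fin r → Fin n → ℕ) (m : Fin n → ℤ)
    (g : Fin r → Matrix (Fin n) (Fin n) ℂ) : Prop :=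
  ∀ S : Submodule ℂ (Fin n → ℂ), ∑ j ∈ pivots Fin.val S, m j ≤
    ∑ i, ∑ j ∈ pivots (fun j => j.rev.val) (S.map (g i).mulVecLin), (lam i j : ℤ)

theorem IsSemiInvariant.kingInequalities (hF : IsSemiInvariant lam a F)
    (hg : ∀ i, (g i).det ≠ 0) (hFg : F g ≠ 0) {s : ℤ}
    (hs : ∑ i, ∑ j, (lam i j : ℤ) = ∑ j, a j + n * s) :
    KingInequalities lam (fun j => a j + s) g := by
  obtain rfl | hn := eq_or_ne n 0
  · exact fun S => by simp [Finset.eq_empty_of_isEmpty]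
  intro S
  obtain ⟨P, hP⟩ := exists_isEchelon Fin.val S
  choose Q hQ using fun i => exists_isEchelon (fun j => j.rev.val) (S.map (g i).mulVecLin)
  have hrev : Function.Injective fun j : Fin n => j.rev.val :=
    Fin.val_injective.comp Fin.rev_injective
  have hdet (i : Fin r) : ((Q i)⁻¹ * (g i * P)).det ≠ 0 := by
    simp [det_nonsing_inv, (hQ i).det_eq_one hrev, hP.det_eq_one Fin.val_injective, hg i]
  have hking := hF.card_mul_le_of_apply_eq_zero hdet
    ((hF.inv_mul_mul_isEchelon_eq hg hP hQ).trans_ne hFg) (pivots Fin.val S) _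
    fun i x hx y hy => hP.inv_mul_mul_apply_eq_zero hrev (hQ i) hy hx
  rw [hs, add_sub_cancel_left, mul_left_comm] at hking
  have hking := le_of_mul_le_mul_left hking (by positivity)
  rw [Finset.sum_add_distrib, Finset.sum_const, nsmul_eq_mul]
  linarith

theorem add_nsmul_le_of_le_endpoints {x c d : ℤ} {k l : ℕ} (hlk : l ≤ k) (h0 : x ≤ c)
    (hk : x + k • d ≤ c) : x + l • d ≤ c := by
  obtain hd | hd := le_total 0 d
  · exact (add_le_add_right (nsmul_le_nsmul_left hd hlk) x).trans hk
  · exact (add_le_of_nonpos_right (nsmul_nonpos hd l)).trans h0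

theorem KingInequalities.add_nsmul {m γ : Fin n → ℤ} {k l : ℕ} (hlk : l ≤ k)
    (h0 : KingInequalities lam m g) (hk : KingInequalities lam (fun j => m j + k • γ j) g) :
    KingInequalities lam (fun j => m j + l • γ j) g := fun S => by
  have hk := hk S
  rw [Finset.sum_add_distrib, ← Finset.smul_sum] at hk ⊢
  exact add_nsmul_le_of_le_endpoints hlk (h0 S) hk

end KingInequality

section Quiver

open Module

theorem finrank_quotient_range_le {K E F E' F' : Type*} [Field K] [AddCommGroup E] [Module K E]
    [AddCommGroup F] [Module K F] [AddCommGroup E'] [Module K E'] [AddCommGroup F'] [Module K F']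
    [FiniteDimensional K F'] {d : E →ₗ[K] F} {d' : E' →ₗ[K] F'} {Φ : E →ₗ[K] E'} {Ψ : F →ₗ[K] F'}
    (hΦ : Function.Surjective Φ) (hcomm : Ψ ∘ₗ d = d' ∘ₗ Φ) (hker : LinearMap.ker Ψ ≤ d.range) :
    finrank K (F ⧸ d.range) ≤ finrank K (F' ⧸ d'.range) := by
  have hle : d.range ≤ d'.range.comap Ψ := by
    rintro _ ⟨u, rfl⟩
    exact ⟨Φ u, (LinearMap.congr_fun hcomm u).symm⟩
  have hge : d'.range.comap Ψ ≤ d.range := by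
    rintro z ⟨v, hv⟩
    obtain ⟨u, rfl⟩ := hΦ v
    have hzu : z - d u ∈ LinearMap.ker Ψ := by
      rw [LinearMap.mem_ker, map_sub, ← hv, sub_eq_zero]
      exact (LinearMap.congr_fun hcomm u).symm
    simpa using add_mem (hker hzu) (LinearMap.mem_range_self d u)
  refine LinearMap.finrank_le_finrank_of_injective (f := d.range.mapQ d'.range Ψ hle) ?_
  rw [← LinearMap.ker_eq_bot, Submodule.mapQ, Submodule.ker_liftQ_eq_bot]
  rwa [LinearMap.ker_comp, Submodule.ker_mkQ]

theorem exists_surjective_ker_eq {K : Type*} [Field K] {b : ℕ} (I : Submodule K (Fin b → K)) :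
    ∃ b' ≤ b, (I ≠ ⊥ → b' < b) ∧ ∃ π : (Fin b → K) →ₗ[K] (Fin b' → K),
      Function.Surjective π ∧ LinearMap.ker π = I := by
  have h := I.finrank_quotient_add_finrank
  rw [finrank_fin_fun] at h
  let e := (finBasis K ((Fin b → K) ⧸ I)).equivFun
  refine ⟨finrank K ((Fin b → K) ⧸ I), by omega, fun hI => ?_,
    e.toLinearMap ∘ₗ I.mkQ, e.surjective.comp I.mkQ_surjective, ?_⟩
  · have := Submodule.one_le_finrank_iff.2 hI
    omega
  · rw [LinearMap.ker_comp_of_ker_eq_bot _ e.ker, Submodule.ker_mkQ]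

variable {K Q A Z : Type*} [Field K] [AddCommGroup Z] [Module K Z] {s t : A → Q}
  {α β β' : Q → ℕ}

variable (K) in
/-- Representations over `K` of dimension vector `β` of the quiver with vertex type `Q` and arrows
`a : s a ⟶ t a`. The space at the vertex `i` is the coordinate space `K ^ β i`, so that the
representations of a given dimension vector form a vector space. -/
abbrev QuiverRep (s t : A → Q) (β : Q → ℕ) : Type _ :=
  ∀ a, (Fin (β (s a)) → K) →ₗ[K] (Fin (β (t a)) → K)

variable (K) in
/-- Families of linear maps, one for each vertex, between the spaces of quiver representations of
dimension vectors `α` and `β`. -/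
abbrev VertexMaps (α β : Q → ℕ) : Type _ := ∀ i, (Fin (α i) → K) →ₗ[K] (Fin (β i) → K)

variable (K) in
/-- Families of linear maps, one for each arrow, from the source space of a quiver representation
of dimension vector `α` to the target space of one of dimension vector `β`. -/
abbrev ArrowMaps (s t : A → Q) (α β : Q → ℕ) : Type _ :=
  ∀ a, (Fin (α (s a)) → K) →ₗ[K] (Fin (β (t a)) → K)

/-- The map `f ↦ y f - f x` from `VertexMaps` to `ArrowMaps`. Its kernel is `Hom(x, y)` and its
cokernel is `Ext(x, y)`. -/
def homDiff (x : QuiverRep K s t α) (y : QuiverRep K s t β) :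
    VertexMaps K α β →ₗ[K] ArrowMaps K s t α β where
  toFun f a := y a ∘ₗ f (s a) - f (t a) ∘ₗ x a
  map_add' f g := by
    ext1 a
    simp only [Pi.add_apply, LinearMap.comp_add, LinearMap.add_comp]
    abel
  map_smul' c f := by
    ext1 a
    simp [LinearMap.comp_smul, LinearMap.smul_comp, smul_sub]

theorem homDiff_apply (x : QuiverRep K s t α) (y : QuiverRep K s t β) (f : VertexMaps K α β)
    (a : A) : homDiff x y f a = y a ∘ₗ f (s a) - f (t a) ∘ₗ x a := rfl

theorem isPolyMap_homDiff [Finite A] {x : Z → QuiverRep K s t α} {y : Z → QuiverRep K s t β}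
    (hx : IsPolyMap K x) (hy : IsPolyMap K y) (f : VertexMaps K α β) :
    IsPolyMap K fun z => homDiff (x z) (y z) f := by
  refine IsPolyMap.pi fun a => ?_
  simp only [homDiff_apply, sub_eq_add_neg]
  exact ((hy.apply a).linearMap_comp (isPolyMap_const _)).add
    (((isPolyMap_const _).linearMap_comp (hx.apply a)).linear (-LinearMap.id))

/-- Homomorphisms of quiver representations. -/
def IsQuiverHom (x : QuiverRep K s t α) (y : QuiverRep K s t β) (f : VertexMaps K α β) : Prop :=
  ∀ a, y a ∘ₗ f (s a) = f (t a) ∘ₗ x a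

theorem homDiff_eq_zero_iff {x : QuiverRep K s t α} {y : QuiverRep K s t β}
    {f : VertexMaps K α β} : homDiff x y f = 0 ↔ IsQuiverHom x y f := by
  simp only [funext_iff, homDiff_apply, Pi.zero_apply, sub_eq_zero, IsQuiverHom]

/-- `y` has a quotient representation of dimension vector `β'`. -/
def HasQuotientOfDim (y : QuiverRep K s t β) (β' : Q → ℕ) : Prop :=
  ∃ (π : VertexMaps K β β') (q : QuiverRep K s t β'),
    (∀ i, Function.Surjective (π i)) ∧ IsQuiverHom y q π

theorem HasQuotientOfDim.refl (y : QuiverRep K s t β) : HasQuotientOfDim y β :=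
  ⟨fun _ => LinearMap.id, y, fun _ => Function.surjective_id, fun _ => rfl⟩

theorem HasQuotientOfDim.of_surjective {y : QuiverRep K s t β} {q : QuiverRep K s t β'}
    {π : VertexMaps K β β'} (hπ : ∀ i, Function.Surjective (π i)) (hπy : IsQuiverHom y q π)
    {β'' : Q → ℕ} (hq : HasQuotientOfDim q β'') : HasQuotientOfDim y β'' := by
  obtain ⟨π', q', hπ', hπq⟩ := hq
  refine ⟨fun i => π' i ∘ₗ π i, q', fun i => (hπ' i).comp (hπ i), fun a => ?_⟩
  rw [LinearMap.comp_assoc, ← hπy, ← LinearMap.comp_assoc, hπq, LinearMap.comp_assoc]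

theorem IsQuiverHom.exists_isPolyMap_deformation [Finite A] {x : QuiverRep K s t α}
    {y : QuiverRep K s t β} {φ : VertexMaps K α β} {π : VertexMaps K β β'}
    (hφ : IsQuiverHom x y φ) (hπ : ∀ i, Function.Surjective (π i))
    (hker : ∀ i, LinearMap.ker (π i) = (φ i).range) :
    ∃ Y : QuiverRep K s t β' → QuiverRep K s t β, IsPolyMap K Y ∧ y ∈ Set.range Y ∧
      ∀ q, IsQuiverHom x (Y q) φ ∧ IsQuiverHom (Y q) q π := by
  choose j hj using fun i =>
    (π i).exists_rightInverse_of_surjective (LinearMap.range_eq_top.2 (hπ i))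
  have hπφ : ∀ i, π i ∘ₗ φ i = 0 := fun i => LinearMap.range_le_ker_iff.1 (hker i).ge
  let q₀ : QuiverRep K s t β' := fun a => π (t a) ∘ₗ y a ∘ₗ j (s a)
  have hq₀ : IsQuiverHom y q₀ π := by
    refine fun a => (LinearMap.ext fun w => ?_).symm
    have hw : w - j (s a) (π (s a) w) ∈ (φ (s a)).range := by
      rw [← hker, LinearMap.mem_ker, map_sub, ← LinearMap.comp_apply (π _), hj,
        LinearMap.id_apply, sub_self]
    obtain ⟨u, hu⟩ := hw
    have hπy : π (t a) (y a (φ (s a) u)) = 0 := by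
      rw [← LinearMap.comp_apply (y a), hφ, ← LinearMap.comp_apply, ← LinearMap.comp_assoc, hπφ,
        LinearMap.zero_comp, LinearMap.zero_apply]
    rw [hu, map_sub, map_sub, sub_eq_zero] at hπy
    exact hπy
  refine ⟨fun q a => y a + j (t a) ∘ₗ (q a - q₀ a) ∘ₗ π (s a), IsPolyMap.pi fun a => ?_,
    ⟨q₀, by simp⟩, fun q => ⟨fun a => ?_, fun a => ?_⟩⟩
  · simp only [sub_eq_add_neg]
    exact (isPolyMap_const _).add ((isPolyMap_const _).linearMap_comp
      (((isPolyMap_id.apply a).add (isPolyMap_const _)).linearMap_comp (isPolyMap_const _)))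
  · rw [LinearMap.add_comp, LinearMap.comp_assoc, LinearMap.comp_assoc, hπφ,
      LinearMap.comp_zero, LinearMap.comp_zero, add_zero, hφ]
  · rw [LinearMap.comp_add, ← hq₀, ← LinearMap.comp_assoc, hj, LinearMap.id_comp,
      LinearMap.sub_comp, add_sub_cancel]

section MaximalRank

variable [Finite A] {x : QuiverRep K s t α} {y : QuiverRep K s t β} {φ : VertexMaps K α β}

/-- With `z = φ v`, the maps `homDiff (x - τ v) y = homDiff x y + τ B` have rank at most that of
`homDiff x y`, where `B f = f v`; hence `z = B φ` lies in the range of `homDiff x y`. -/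
theorem mem_range_homDiff_of_range_le [Infinite K]
    (hmax : ∀ x' : QuiverRep K s t α,
      finrank K (homDiff x' y).range ≤ finrank K (homDiff x y).range)
    (hφ : IsQuiverHom x y φ) {z : ArrowMaps K s t α β}
    (hz : ∀ a, (z a).range ≤ (φ (t a)).range) : z ∈ (homDiff x y).range := by
  have hlift : ∀ a, ∃ v : (Fin (α (s a)) → K) →ₗ[K] (Fin (α (t a)) → K), φ (t a) ∘ₗ v = z a := by
    intro a
    obtain ⟨v, hv⟩ := projective_lifting_property (φ (t a)).rangeRestrict
      ((z a).codRestrict _ fun w => hz a ⟨w, rfl⟩) (LinearMap.surjective_rangeRestrict _)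
    exact ⟨v, LinearMap.ext fun w => congrArg Subtype.val (LinearMap.congr_fun hv w)⟩
  choose v hv using hlift
  let B : VertexMaps K α β →ₗ[K] ArrowMaps K s t α β :=
    LinearMap.pi fun a => (v a).lcomp K _ ∘ₗ LinearMap.proj (t a)
  have hB : B φ = z := funext hv
  rw [← hB]
  refine apply_mem_range_of_finrank_range_add_smul_le (fun τ => ?_) (homDiff_eq_zero_iff.2 hφ)
  have hτ : homDiff x y + τ • B = homDiff (fun a => x a - τ • v a) y := by
    refine LinearMap.ext fun f => funext fun a => LinearMap.ext fun w => ?_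
    simp [B, homDiff_apply]
    abel
  rw [hτ]
  exact hmax _

theorem finrank_quotient_range_homDiff_le [Infinite K] {q : QuiverRep K s t β'}
    {π : VertexMaps K β β'}
    (hmax : ∀ x' : QuiverRep K s t α,
      finrank K (homDiff x' y).range ≤ finrank K (homDiff x y).range)
    (hφ : IsQuiverHom x y φ) (hπ : ∀ i, Function.Surjective (π i))
    (hker : ∀ i, LinearMap.ker (π i) = (φ i).range) (hπy : IsQuiverHom y q π) :
    finrank K (ArrowMaps K s t α β ⧸ (homDiff x y).range) ≤
      finrank K (ArrowMaps K s t α β' ⧸ (homDiff x q).range) := by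
  choose j hj using fun i =>
    (π i).exists_rightInverse_of_surjective (LinearMap.range_eq_top.2 (hπ i))
  refine finrank_quotient_range_le
    (Φ := LinearMap.piMap fun i => LinearMap.llcomp K _ _ _ (π i))
    (Ψ := LinearMap.piMap fun a => LinearMap.llcomp K _ _ _ (π (t a)))
    (fun f => ⟨fun i => j i ∘ₗ f i, funext fun i => ?_⟩)
    (LinearMap.ext fun f => funext fun a => ?_)
    fun z hz => mem_range_homDiff_of_range_le hmax hφ fun a => ?_
  · change π i ∘ₗ j i ∘ₗ f i = f i
    rw [← LinearMap.comp_assoc, hj, LinearMap.id_comp]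
  · change π (t a) ∘ₗ (y a ∘ₗ f (s a) - f (t a) ∘ₗ x a) =
      q a ∘ₗ π (s a) ∘ₗ f (s a) - (π (t a) ∘ₗ f (t a)) ∘ₗ x a
    rw [LinearMap.comp_sub, ← LinearMap.comp_assoc, ← hπy, LinearMap.comp_assoc,
      LinearMap.comp_assoc]
  · rw [← hker]
    exact LinearMap.range_le_ker_iff.2 (congrFun hz a)

end MaximalRank

/-- `x` is general for `β` if some `homDiff x y` with `y` of dimension vector `β` has the largest
rank among all pairs of representations of these dimension vectors. -/
def IsGeneralFor (x : QuiverRep K s t α) (β : Q → ℕ) : Prop :=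
  ∃ y₀ : QuiverRep K s t β, ∀ (x' : QuiverRep K s t α) (y' : QuiverRep K s t β),
    finrank K (homDiff x' y').range ≤ finrank K (homDiff x y₀).range

theorem exists_isGeneralFor [Infinite K] [Finite Q] [Finite A] (s t : A → Q) (α β : Q → ℕ) :
    ∃ x : QuiverRep K s t α, ∀ β' ≤ β, IsGeneralFor x β' := by
  classical
  cases nonempty_fintype Q
  have hmax : ∀ β' : Q → ℕ, ∃ z : QuiverRep K s t α × QuiverRep K s t β',
      ∀ z' : QuiverRep K s t α × QuiverRep K s t β',
        finrank K (homDiff z'.1 z'.2).range ≤ finrank K (homDiff z.1 z.2).range := by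
    intro β'
    have hb : BddAbove (Set.range fun z : QuiverRep K s t α × QuiverRep K s t β' =>
        finrank K (homDiff z.1 z.2).range) :=
      ⟨finrank K (ArrowMaps K s t α β'), by
        rintro _ ⟨z, rfl⟩
        exact Submodule.finrank_le _⟩
    obtain ⟨z, hz⟩ := Nat.sSup_mem (Set.range_nonempty _) hb
    exact ⟨z, fun z' => (le_csSup hb ⟨z', rfl⟩).trans hz.ge⟩
  choose z hz using hmax
  choose m hm hm0 hmle using fun β' => IsPolyMap.exists_finrank_range_le
    (A := fun x : QuiverRep K s t α => homDiff x (z β').2)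
    (isPolyMap_homDiff isPolyMap_id (isPolyMap_const _)) (z β').1
  obtain ⟨x, hx⟩ := IsPolyMap.exists_prod_ne_zero (Finset.Iic β) (fun β' _ => hm β')
    fun β' _ => ⟨_, hm0 β'⟩
  refine ⟨x, fun β' hβ' => ⟨(z β').2, fun x' y' => (hz β' (x', y')).trans (hmle β' x ?_)⟩⟩
  exact Finset.prod_ne_zero_iff.1 hx β' (Finset.mem_Iic.2 hβ')

variable [Fintype Q] [Fintype A]

/-- The Euler form of a quiver, `dim Hom(x, y) - dim Ext(x, y)` for representations `x` and `y` of
dimension vectors `α` and `β`. -/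
def eulerForm (s t : A → Q) (α β : Q → ℕ) : ℤ :=
  ∑ i, (α i : ℤ) * β i - ∑ a, (α (s a) : ℤ) * β (t a)

theorem finrank_vertexMaps_sub_finrank_arrowMaps :
    (finrank K (VertexMaps K α β) : ℤ) - finrank K (ArrowMaps K s t α β) = eulerForm s t α β := by
  simp [finrank_pi_fintype, finrank_linearMap, eulerForm]

theorem finrank_ker_homDiff_sub_finrank_quotient (x : QuiverRep K s t α) (y : QuiverRep K s t β) :
    (finrank K (LinearMap.ker (homDiff x y)) : ℤ) -
      finrank K (ArrowMaps K s t α β ⧸ (homDiff x y).range) = eulerForm s t α β := by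
  have hker := (homDiff x y).finrank_range_add_finrank_ker
  have hcoker := (homDiff x y).range.finrank_quotient_add_finrank
  rw [← finrank_vertexMaps_sub_finrank_arrowMaps (K := K)]
  omega

variable [Infinite K]

/-- One step of the induction on `β`: replace `y` by its quotient by the image of a homomorphism
from `x`, and deform that quotient. -/
theorem exists_finrank_quotient_le_eulerForm {x : QuiverRep K s t α}
    (hx : ∀ β' ≤ β, IsGeneralFor x β') {p : QuiverRep K s t β → K} (hp : IsPolyMap K p)
    (hp0 : ∃ y, p y ≠ 0) :
    ∃ y, p y ≠ 0 ∧ ∃ β', HasQuotientOfDim y β' ∧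
      (finrank K (ArrowMaps K s t α β ⧸ (homDiff x y).range) : ℤ) ≤ -eulerForm s t α β' := by
  classical
  induction β using WellFoundedLT.induction with
  | ind β ih =>
    obtain ⟨y₀, hy₀⟩ := hx β le_rfl
    obtain ⟨m, hm, hm0, hmle⟩ := IsPolyMap.exists_finrank_range_le
      (A := fun y : QuiverRep K s t β => homDiff x y)
      (isPolyMap_homDiff (isPolyMap_const _) isPolyMap_id) y₀
    obtain ⟨y, hy⟩ := hp.exists_mul_ne_zero hm hp0 ⟨y₀, hm0⟩
    by_cases hker : LinearMap.ker (homDiff x y) = ⊥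
    · refine ⟨y, left_ne_zero_of_mul hy, β, .refl y, ?_⟩
      have h := finrank_ker_homDiff_sub_finrank_quotient x y
      rw [hker, finrank_bot] at h
      omega
    obtain ⟨φ, hφ, hφ0⟩ := Submodule.exists_mem_ne_zero_of_ne_bot hker
    choose β₁ hβ₁ hβ₁lt π hπ hπker using fun i => exists_surjective_ker_eq (φ i).range
    have hlt : β₁ < β := by
      obtain ⟨i, hi⟩ := Function.ne_iff.1 hφ0
      exact Pi.lt_def.2 ⟨hβ₁, i, hβ₁lt i fun h => hi (LinearMap.range_eq_bot.1 h)⟩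
    obtain ⟨Y, hY, ⟨q₀, rfl⟩, hYq⟩ :=
      (homDiff_eq_zero_iff.1 (LinearMap.mem_ker.1 hφ)).exists_isPolyMap_deformation hπ hπker
    obtain ⟨q, hq, β', hβ', hle⟩ :=
      ih β₁ hlt (fun β' h => hx β' (h.trans hβ₁)) ((hp.mul hm).comp hY) ⟨q₀, hy⟩
    refine ⟨Y q, left_ne_zero_of_mul hq, β', hβ'.of_surjective hπ (hYq q).2, le_trans ?_ hle⟩
    exact_mod_cast finrank_quotient_range_homDiff_le
      (fun x' => (hy₀ x' _).trans (hmle _ (right_ne_zero_of_mul hq))) (hYq q).1 hπ hπker (hYq q).2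

theorem exists_homDiff_surjective (α : Q → ℕ) {p : QuiverRep K s t β → K} (hp : IsPolyMap K p)
    (hp0 : ∃ y, p y ≠ 0)
    (hss : ∀ y, p y ≠ 0 → ∀ β', HasQuotientOfDim y β' → 0 ≤ eulerForm s t α β') :
    ∃ (x : QuiverRep K s t α) (y : QuiverRep K s t β),
      p y ≠ 0 ∧ Function.Surjective (homDiff x y) := by
  obtain ⟨x, hx⟩ := exists_isGeneralFor (K := K) s t α β
  obtain ⟨y, hy, β', hβ', hle⟩ := exists_finrank_quotient_le_eulerForm hx hp hp0
  have hzero : finrank K (ArrowMaps K s t α β ⧸ (homDiff x y).range) = 0 := by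
    have := hss y hy β' hβ'
    omega
  refine ⟨x, y, hy, LinearMap.range_eq_top.1
    (Submodule.Quotient.subsingleton_iff.1 (finrank_zero_iff.1 hzero))⟩

end Quiver

section SchofieldDeterminant

open Module

theorem det_piMap {K κ : Type*} [Field K] [Fintype κ] {M : κ → Type*} [∀ i, AddCommGroup (M i)]
    [∀ i, Module K (M i)] [∀ i, FiniteDimensional K (M i)] (f : ∀ i, M i →ₗ[K] M i) :
    LinearMap.det (LinearMap.piMap f) = ∏ i, LinearMap.det (f i) := by
  let _ : LinearOrder κ := LinearOrder.lift' (Fintype.equivFin κ) (Fintype.equivFin κ).injective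
  let b := fun i => finBasis K (M i)
  have hblock : LinearMap.toMatrix (Pi.basis b) (Pi.basis b) (LinearMap.piMap f) =
      Matrix.blockDiagonal' fun i => LinearMap.toMatrix (b i) (b i) (f i) := by
    ext ⟨i, k⟩ ⟨j, l⟩
    rw [LinearMap.toMatrix_apply, Matrix.blockDiagonal'_apply]
    obtain rfl | h := eq_or_ne i j
    · simp [LinearMap.toMatrix_apply]
    · simp [h]
  rw [← LinearMap.det_toMatrix (Pi.basis b), hblock,
    (Matrix.blockTriangular_blockDiagonal' _).det_fintype]
  refine Finset.prod_congr rfl fun i _ => ?_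
  rw [← LinearMap.det_toMatrix (b i), ← Matrix.det_submatrix_equiv_self
    (Equiv.sigmaSubtype (β := fun i => Fin (finrank K (M i))) i)]
  congr 1
  ext ⟨⟨_, k⟩, rfl⟩ ⟨⟨_, l⟩, hl⟩
  cases hl
  simp [Matrix.toSquareBlock_def, Equiv.sigmaSubtype]

theorem det_compRight {K M : Type*} [Field K] [AddCommGroup M] [Module K M] [FiniteDimensional K M]
    (m : ℕ) (h : M →ₗ[K] M) :
    LinearMap.det (h.compRight K (M := Fin m → K)) = LinearMap.det h ^ m := by
  let e : (Fin m → M) ≃ₗ[K] ((Fin m → K) →ₗ[K] M) := (Pi.basisFun K (Fin m)).constr K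
  have hconj : h.compRight K (M := Fin m → K) =
      e.toLinearMap ∘ₗ LinearMap.piMap (fun _ => h) ∘ₗ e.symm.toLinearMap := by
    rw [← LinearMap.comp_assoc, LinearEquiv.eq_comp_toLinearMap_symm]
    refine LinearMap.ext fun v => (Pi.basisFun K (Fin m)).ext fun j => ?_
    simp [e]
  rw [hconj, LinearMap.det_conj, det_piMap, Finset.prod_const, Finset.card_univ, Fintype.card_fin]

variable {K Q A Z : Type*} [Field K] [AddCommGroup Z] [Module K Z] {s t : A → Q}
  {α β : Q → ℕ} {x : QuiverRep K s t α} {y y' : QuiverRep K s t β} {h : VertexMaps K β β}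

theorem IsQuiverHom.homDiff_comp (hh : IsQuiverHom y y' h) (f : VertexMaps K α β) :
    homDiff x y' (fun i => h i ∘ₗ f i) = fun a => h (t a) ∘ₗ homDiff x y f a := by
  funext a
  rw [homDiff_apply, homDiff_apply, LinearMap.comp_sub, ← LinearMap.comp_assoc, hh,
    LinearMap.comp_assoc, LinearMap.comp_assoc]

theorem IsQuiverHom.homDiff_surjective (hh : IsQuiverHom y y' h)
    (hsurj : ∀ i, Function.Surjective (h i)) (hxy : Function.Surjective (homDiff x y)) :
    Function.Surjective (homDiff x y') := by
  intro z
  choose z' hz' using fun a => projective_lifting_property (h (t a)) (z a) (hsurj (t a))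
  obtain ⟨f, rfl⟩ := hxy z'
  exact ⟨_, (hh.homDiff_comp f).trans (funext hz')⟩

theorem comp_symm_eq_symm_comp {M M' N N' : Type*} [AddCommGroup M] [Module K M]
    [AddCommGroup M'] [Module K M'] [AddCommGroup N] [Module K N] [AddCommGroup N'] [Module K N']
    (e : M ≃ₗ[K] M') (e' : N ≃ₗ[K] N') {f : M →ₗ[K] N} {f' : M' →ₗ[K] N'}
    (h : f' ∘ₗ e.toLinearMap = e'.toLinearMap ∘ₗ f) :
    f ∘ₗ e.symm.toLinearMap = e'.symm.toLinearMap ∘ₗ f' := by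
  rw [LinearEquiv.eq_toLinearMap_symm_comp, ← LinearMap.comp_assoc, ← h, LinearMap.comp_assoc,
    LinearEquiv.comp_symm, LinearMap.comp_id]

theorem IsQuiverHom.symm {h : ∀ i, (Fin (β i) → K) ≃ₗ[K] (Fin (β i) → K)}
    (hh : IsQuiverHom y y' fun i => (h i).toLinearMap) :
    IsQuiverHom y' y fun i => (h i).symm.toLinearMap := fun a =>
  comp_symm_eq_symm_comp (h (s a)) (h (t a)) (hh a)

theorem HasQuotientOfDim.of_equiv {β' : Q → ℕ} {h : ∀ i, (Fin (β i) → K) ≃ₗ[K] (Fin (β i) → K)}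
    (hy : HasQuotientOfDim y β') (hh : IsQuiverHom y y' fun i => (h i).toLinearMap) :
    HasQuotientOfDim y' β' :=
  .of_surjective (fun i => (h i).symm.surjective) hh.symm hy

/-- Schofield's determinantal function of a pair of representations. When source and target of
`homDiff` have the same dimension, it is defined up to the choice of the identification `e` and
vanishes exactly when `homDiff x y` is not invertible. -/
noncomputable def schofieldDet (e : ArrowMaps K s t α β ≃ₗ[K] VertexMaps K α β)
    (x : QuiverRep K s t α) (y : QuiverRep K s t β) : K :=
  LinearMap.det (e.toLinearMap ∘ₗ homDiff x y)

variable (e : ArrowMaps K s t α β ≃ₗ[K] VertexMaps K α β)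

theorem isPolyMap_schofieldDet [Finite Q] [Finite A] (x : QuiverRep K s t α)
    {y : Z → QuiverRep K s t β} (hy : IsPolyMap K y) :
    IsPolyMap K fun z => schofieldDet e x (y z) := by
  let b := finBasis K (VertexMaps K α β)
  simp only [schofieldDet, ← LinearMap.det_toMatrix b]
  refine IsPolyMap.matrix_det fun i j => ?_
  simp only [LinearMap.toMatrix_apply]
  exact (isPolyMap_homDiff (isPolyMap_const x) hy (b j)).linear (b.coord i ∘ₗ e.toLinearMap)

theorem schofieldDet_ne_zero [Finite Q] (hxy : Function.Surjective (homDiff x y)) :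
    schofieldDet e x y ≠ 0 := by
  have hs : Function.Surjective (e.toLinearMap ∘ₗ homDiff x y) := e.surjective.comp hxy
  have hb : Function.Bijective (e.toLinearMap ∘ₗ homDiff x y) :=
    ⟨LinearMap.injective_iff_surjective.2 hs, hs⟩
  exact (LinearEquiv.isUnit_det' (LinearEquiv.ofBijective _ hb)).ne_zero

theorem IsQuiverHom.schofieldDet_mul [Fintype Q] [Fintype A] (hh : IsQuiverHom y y' h) :
    schofieldDet e x y' * ∏ i, LinearMap.det (h i) ^ α i =
      (∏ a, LinearMap.det (h (t a)) ^ α (s a)) * schofieldDet e x y := by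
  let hV : VertexMaps K α β →ₗ[K] VertexMaps K α β :=
    LinearMap.piMap fun i => (h i).compRight K
  let hA : ArrowMaps K s t α β →ₗ[K] ArrowMaps K s t α β :=
    LinearMap.piMap fun a => (h (t a)).compRight K
  have hcomm : (e.toLinearMap ∘ₗ homDiff x y') ∘ₗ hV =
      (e.toLinearMap ∘ₗ hA ∘ₗ e.symm.toLinearMap) ∘ₗ (e.toLinearMap ∘ₗ homDiff x y) := by
    refine LinearMap.ext fun f => ?_
    simp only [LinearMap.comp_apply, LinearEquiv.coe_coe, LinearEquiv.symm_apply_apply]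
    exact congrArg e (hh.homDiff_comp f)
  have hdet := congrArg LinearMap.det hcomm
  rw [LinearMap.det_comp, LinearMap.det_comp, LinearMap.det_conj, det_piMap, det_piMap] at hdet
  simp only [det_compRight] at hdet
  exact hdet

end SchofieldDeterminant

section LeadingBlocks

open Matrix

variable {K : Type*} [Field K]

variable (K) in
/-- The linear map `K ^ m → K ^ k` between coordinate spaces that drops the last coordinates if
`k ≤ m` and appends zeros if `m ≤ k`. -/
def resize (m k : ℕ) : (Fin m → K) →ₗ[K] (Fin k → K) where
  toFun v j := if h : j.val < m then v ⟨j, h⟩ else 0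
  map_add' v w := by ext j; by_cases h : j.val < m <;> simp [h]
  map_smul' c v := by ext j; by_cases h : j.val < m <;> simp [h]

theorem resize_apply {m k : ℕ} (v : Fin m → K) (j : Fin k) :
    resize K m k v j = if h : j.val < m then v ⟨j, h⟩ else 0 := rfl

theorem resize_self (n : ℕ) : resize K n n = LinearMap.id :=
  LinearMap.ext fun v => funext fun j => by simp [resize_apply]

theorem resize_comp_resize {m l k : ℕ} (h : m ≤ l ∨ k ≤ l) :
    resize K l k ∘ₗ resize K m l = resize K m k := by
  refine LinearMap.ext fun v => funext fun j => ?_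
  simp only [LinearMap.comp_apply, resize_apply]
  split_ifs <;> first | rfl | omega

theorem resize_single {m k : ℕ} (hmk : m ≤ k) (j : Fin m) :
    resize K m k (Pi.single j 1) = Pi.single (Fin.castLE hmk j) 1 := by
  ext l
  simp only [resize_apply, Pi.single_apply, Fin.ext_iff, Fin.val_castLE]
  split_ifs <;> first | rfl | omega

variable {n : ℕ} {B : Matrix (Fin n) (Fin n) K}

/-- The endomorphism of `K ^ k` given by the leading `k × k` block of `B`, for `k ≤ n`. -/
def leadingBlock (B : Matrix (Fin n) (Fin n) K) (k : ℕ) : (Fin k → K) →ₗ[K] (Fin k → K) :=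
  resize K n k ∘ₗ B.mulVecLin ∘ₗ resize K k n

theorem leadingBlock_self (B : Matrix (Fin n) (Fin n) K) : leadingBlock B n = B.mulVecLin := by
  rw [leadingBlock, resize_self, LinearMap.id_comp, LinearMap.comp_id]

theorem toMatrix'_leadingBlock (B : Matrix (Fin n) (Fin n) K) {k : ℕ} (hk : k ≤ n) :
    LinearMap.toMatrix' (leadingBlock B k) = B.submatrix (Fin.castLE hk) (Fin.castLE hk) := by
  ext i j
  rw [LinearMap.toMatrix'_apply, leadingBlock, LinearMap.comp_apply, LinearMap.comp_apply,
    resize_single hk, resize_apply, dif_pos (i.2.trans_le hk), mulVecLin_apply, mulVec_single_one]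
  rfl

/-- The product of the first `k` diagonal entries of `B`. -/
def diagProd (B : Matrix (Fin n) (Fin n) K) (k : ℕ) : K := ∏ j with j.val < k, B j j

theorem diagProd_succ (B : Matrix (Fin n) (Fin n) K) (j : Fin n) :
    diagProd B (j.val + 1) = diagProd B j.val * B j j := by
  have hinsert : Finset.univ.filter (fun i : Fin n => i.val < j.val + 1) =
      insert j (Finset.univ.filter fun i : Fin n => i.val < j.val) := by
    ext i
    simp [Fin.ext_iff]
    omega
  rw [diagProd, hinsert, Finset.prod_insert (by simp), mul_comm]
  rfl

theorem diagProd_self (B : Matrix (Fin n) (Fin n) K) : diagProd B n = ∏ j, B j j := by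
  simp [diagProd]

theorem diagProd_eq_prod_castLE (B : Matrix (Fin n) (Fin n) K) {k : ℕ} (hk : k ≤ n) :
    diagProd B k = ∏ j : Fin k, B (Fin.castLE hk j) (Fin.castLE hk j) :=
  (Finset.prod_bij (fun j _ => Fin.castLE hk j) (by simp) (by simp)
    (fun j hj => ⟨⟨j.val, by simpa using hj⟩, by simp⟩) fun _ _ => rfl).symm

theorem det_leadingBlock_of_isLowerTriangular (hB : B.IsLowerTriangular) {k : ℕ} (hk : k ≤ n) :
    LinearMap.det (leadingBlock B k) = diagProd B k := by
  have hBk : (B.submatrix (Fin.castLE hk) (Fin.castLE hk)).IsLowerTriangular := fun _ _ h => hB h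
  rw [← LinearMap.det_toMatrix', toMatrix'_leadingBlock B hk, det_of_isLowerTriangular _ hBk,
    diagProd_eq_prod_castLE B hk]
  rfl

theorem det_leadingBlock_of_isUpperTriangular (hB : B.IsUpperTriangular) {k : ℕ} (hk : k ≤ n) :
    LinearMap.det (leadingBlock B k) = diagProd B k := by
  have hBk : (B.submatrix (Fin.castLE hk) (Fin.castLE hk)).IsUpperTriangular := fun _ _ h => hB h
  rw [← LinearMap.det_toMatrix', toMatrix'_leadingBlock B hk, det_of_isUpperTriangular hBk,
    diagProd_eq_prod_castLE B hk]
  rfl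

theorem leadingBlock_comp_resize_of_isLowerTriangular (hB : B.IsLowerTriangular) {k l : ℕ}
    (hkl : k ≤ l) (hl : l ≤ n) :
    leadingBlock B k ∘ₗ resize K l k = resize K l k ∘ₗ leadingBlock B l := by
  refine LinearMap.ext fun v => funext fun i => ?_
  have hi := i.2
  simp only [leadingBlock, LinearMap.comp_apply, resize_apply, mulVecLin_apply, mulVec, dotProduct]
  rw [dif_pos (by omega), dif_pos (by omega), dif_pos (by omega)]
  refine Finset.sum_congr rfl fun j _ => ?_
  by_cases hj : j.val < k
  · rw [dif_pos hj, dif_pos (by omega)]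
  · rw [hB (OrderDual.toDual_lt_toDual.2 (Fin.lt_def.2 (by simp; omega))), zero_mul, zero_mul]

theorem leadingBlock_comp_resize_of_isUpperTriangular (hB : B.IsUpperTriangular) {k l : ℕ}
    (hkl : k ≤ l) (hl : l ≤ n) :
    leadingBlock B l ∘ₗ resize K k l = resize K k l ∘ₗ leadingBlock B k := by
  refine LinearMap.ext fun v => funext fun i => ?_
  have hi := i.2
  simp only [leadingBlock, LinearMap.comp_apply, resize_apply, mulVecLin_apply, mulVec, dotProduct]
  rw [dif_pos (by omega)]
  split_ifs with hik hin
  · refine Finset.sum_congr rfl fun j _ => ?_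
    by_cases hj : j.val < k
    · simp [hj, hj.trans_le hkl]
    · simp [hj]
  · omega
  · refine Finset.sum_eq_zero fun j _ => ?_
    by_cases hj : j.val < k
    · rw [hB (Fin.lt_def.2 (by simp; omega)), zero_mul]
    · simp [hj]

theorem prod_zpow_mul_prod_diagProd_pow (hB : ∀ j, B j j ≠ 0) {C : ℕ} {m : Fin n → ℤ}
    {c : Fin n → ℕ} (hc : ∀ j, (c j : ℤ) = C - m j) :
    (∏ j, B j j ^ m j) * ∏ j : Fin n, diagProd B (j.val + 1) ^ c j =
      diagProd B n ^ C * ∏ j : Fin n, diagProd B j.val ^ c j := by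
  rw [diagProd_self, ← Finset.prod_pow, ← Finset.prod_mul_distrib, ← Finset.prod_mul_distrib]
  refine Finset.prod_congr rfl fun j _ => ?_
  rw [diagProd_succ, mul_pow, mul_left_comm, mul_comm, ← zpow_natCast (B j j), hc,
    ← zpow_add₀ (hB j), add_sub_cancel, zpow_natCast]

end LeadingBlocks

section StarQuiver

open Module

theorem HasQuotientOfDim.exists_submodule {K Q A : Type*} [Field K] {s t : A → Q} {β β' : Q → ℕ}
    {y : QuiverRep K s t β} (hy : HasQuotientOfDim y β') :
    ∃ T : ∀ v, Submodule K (Fin (β v) → K),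
      (∀ a, (T (s a)).map (y a) ≤ T (t a)) ∧ ∀ v, β' v + finrank K (T v) = β v := by
  obtain ⟨π, q, hπ, hπq⟩ := hy
  refine ⟨fun v => LinearMap.ker (π v), fun a => ?_, fun v => ?_⟩
  · rw [Submodule.map_le_iff_le_comap, ← LinearMap.ker_comp, ← hπq]
    exact LinearMap.ker_le_ker_comp _ _
  · have hrank := (π v).finrank_range_add_finrank_ker
    rwa [LinearMap.range_eq_top.2 (hπ v), finrank_top, finrank_fin_fun, finrank_fin_fun] at hrank

variable {n r : ℕ}

theorem mul_last_le_sum_mul_sub {f : Fin n → ℤ} (hf : Antitone f) {c : ℤ} (hc : ∀ j, c ≤ f j)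
    {w : Fin (n + 1) → ℤ} (hw0 : w 0 = 0) (hw : ∀ k, 0 ≤ w k) :
    c * w (Fin.last n) ≤ ∑ j, f j * (w j.succ - w j.castSucc) := by
  induction n generalizing c with
  | zero => simp [hw0]
  | succ n ih =>
    have hlast := ih (f := fun j => f j.castSucc) (c := f (Fin.last n))
      (hf.comp_monotone Fin.strictMono_castSucc.monotone) (fun j => hf (Fin.le_last _))
      (w := fun k => w k.castSucc) hw0 fun k => hw _
    rw [Fin.sum_univ_castSucc]
    have hcf := mul_le_mul_of_nonneg_right (hc (Fin.last n)) (hw (Fin.last (n + 1)))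
    simp only [Fin.succ_castSucc, Fin.succ_last] at hlast ⊢
    linarith

theorem sum_mul_sub_le_sum_mul_sub {f : Fin n → ℤ} (hf : Antitone f) {u v : Fin (n + 1) → ℤ}
    (h0 : u 0 = v 0) (huv : ∀ k, u k ≤ v k)
    (hlast : u (Fin.last n) = v (Fin.last n) ∨ ∀ j, 0 ≤ f j) :
    ∑ j, f j * (u j.succ - u j.castSucc) ≤ ∑ j, f j * (v j.succ - v j.castSucc) := by
  obtain ⟨c, hc, hcw⟩ : ∃ c, (∀ j, c ≤ f j) ∧ c * (v (Fin.last n) - u (Fin.last n)) = 0 := by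
    obtain h | h := hlast
    · obtain ⟨c, hc⟩ := (Set.finite_range f).bddBelow
      exact ⟨c, fun j => hc ⟨j, rfl⟩, by rw [h, sub_self, mul_zero]⟩
    · exact ⟨0, h, zero_mul _⟩
  have habel := mul_last_le_sum_mul_sub hf hc (w := v - u) (by simp [h0])
    fun k => sub_nonneg.2 (huv k)
  simp only [Pi.sub_apply, hcw] at habel
  rw [← sub_nonneg, ← Finset.sum_sub_distrib]
  exact habel.trans_eq (Finset.sum_congr rfl fun j _ => by ring)

theorem sum_mul_card_filter_sub (I : Finset (Fin n)) (f : Fin n → ℤ) :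
    ∑ j : Fin n, f j * (((I.filter fun i => i.val < j.succ.val).card : ℤ) -
      (I.filter fun i => i.val < j.castSucc.val).card) = ∑ j ∈ I, f j := by
  have hstep (j : Fin n) : (I.filter fun i => i.val < j.succ.val).card =
      (I.filter fun i => i.val < j.castSucc.val).card + if j ∈ I then 1 else 0 := by
    have hle : (I.filter fun i => i.val < j.succ.val) =
        (I.filter fun i => i.val < j.castSucc.val) ∪ I.filter fun i => i = j := by
      ext i
      simp only [Finset.mem_union, Finset.mem_filter, Fin.val_succ, Fin.val_castSucc, Fin.ext_iff]
      grind
    rw [hle, Finset.card_union_of_disjoint, Finset.filter_eq']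
    · split_ifs <;> simp
    · rw [Finset.disjoint_filter]
      rintro i - hi rfl
      simp at hi
  simp only [hstep, Nat.cast_add, add_sub_cancel_left]
  simp

section Flags

variable {K : Type*} [Field K]

theorem resize_injective {m k : ℕ} (hmk : m ≤ k) : Function.Injective (resize K m k) := by
  have hleft := resize_comp_resize (K := K) (l := k) (.inl hmk : m ≤ k ∨ m ≤ k)
  rw [resize_self] at hleft
  exact Function.LeftInverse.injective (g := resize K k m) (LinearMap.congr_fun hleft)

theorem finrank_le_finrank_inf_supportedBelow {S : Submodule K (Fin n → K)} {k : ℕ} (hk : k ≤ n)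
    {T : Submodule K (Fin k → K)} (hT : T.map (resize K k n) ≤ S) :
    finrank K T ≤ finrank K ↥(S ⊓ supportedBelow K Fin.val k) := by
  rw [(Submodule.equivMapOfInjective _ (resize_injective hk) T).finrank_eq]
  refine Submodule.finrank_mono (le_inf hT ?_)
  rintro _ ⟨v, -, rfl⟩ j hj
  rw [resize_apply, dif_neg hj.not_gt]

theorem finrank_le_finrank_add_finrank_inf_supportedBelow {S : Submodule K (Fin n → K)} {k : ℕ}
    {T : Submodule K (Fin k → K)} (hT : S.map (resize K n k) ≤ T) :
    finrank K S ≤ finrank K T +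
      finrank K ↥(S ⊓ supportedBelow K (fun j : Fin n => j.rev.val) (n - k)) := by
  rw [← ((resize K n k).domRestrict S).finrank_range_add_finrank_ker]
  refine add_le_add (Submodule.finrank_mono ?_) ?_
  · rwa [LinearMap.range_domRestrict]
  · rw [← Submodule.finrank_map_subtype_eq S]
    refine Submodule.finrank_mono ?_
    rintro _ ⟨v, hv, rfl⟩
    refine ⟨v.2, fun j hj => ?_⟩
    have hjk : j.val < k := by
      have hj : n - k ≤ j.rev.val := hj
      rw [Fin.val_rev] at hj
      omega
    simpa [resize_apply] using congrFun (LinearMap.mem_ker.1 hv) ⟨j.val, hjk⟩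

variable {T : ∀ k : Fin (n + 1), Submodule K (Fin k.val → K)}

theorem map_resize_le_last
    (hT : ∀ j : Fin n, (T j.castSucc).map (resize K j.val (j.val + 1)) ≤ T j.succ)
    (k : Fin (n + 1)) : (T k).map (resize K k.val n) ≤ T (Fin.last n) := by
  induction k using Fin.reverseInduction with
  | last =>
    have hself := congrArg (fun A => (T (Fin.last n)).map A) (resize_self n)
    exact (hself.trans (Submodule.map_id _)).le
  | cast j ih =>
    have hcomp := resize_comp_resize (K := K) (k := n) (.inl j.val.le_succ : j.val ≤ j.val + 1 ∨ _)
    refine le_trans ?_ ((Submodule.map_mono (hT j)).trans ih)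
    rw [← Submodule.map_comp]
    exact (congrArg (fun A => (T j.castSucc).map A) hcomp).ge

theorem map_resize_last_le
    (hT : ∀ j : Fin n, (T j.succ).map (resize K (j.val + 1) j.val) ≤ T j.castSucc)
    (k : Fin (n + 1)) : (T (Fin.last n)).map (resize K n k.val) ≤ T k := by
  induction k using Fin.reverseInduction with
  | last =>
    have hself := congrArg (fun A => (T (Fin.last n)).map A) (resize_self n)
    exact (hself.trans (Submodule.map_id _)).le
  | cast j ih =>
    have hcomp := resize_comp_resize (K := K) (m := n) (.inr j.val.le_succ : _ ∨ j.val ≤ j.val + 1)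
    refine le_trans ?_ ((Submodule.map_mono ih).trans (hT j))
    rw [← Submodule.map_comp]
    exact (congrArg (fun A => (T (Fin.last n)).map A) hcomp).ge

theorem finrank_le_card_filter_pivots
    (hT : ∀ j : Fin n, (T j.castSucc).map (resize K j.val (j.val + 1)) ≤ T j.succ)
    (k : Fin (n + 1)) :
    finrank K (T k) ≤
      ((pivots Fin.val (T (Fin.last n) : Submodule K (Fin n → K))).filter
        fun j => j.val < k.val).card :=
  (finrank_le_finrank_inf_supportedBelow k.is_le (map_resize_le_last hT k)).trans
    (finrank_inf_supportedBelow_le Fin.val_injective _ _)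

theorem card_filter_pivots_le_finrank
    (hT : ∀ j : Fin n, (T j.succ).map (resize K (j.val + 1) j.val) ≤ T j.castSucc)
    {S : Submodule K (Fin n → K)} (hS : S ≤ T (Fin.last n)) (k : Fin (n + 1)) :
    ((pivots (fun j => j.rev.val) S).filter fun j => j.val < k.val).card ≤ finrank K (T k) := by
  have hrev : Function.Injective fun j : Fin n => j.rev.val :=
    Fin.val_injective.comp Fin.rev_injective
  have hk := (finrank_le_finrank_add_finrank_inf_supportedBelow
    ((Submodule.map_mono hS).trans (map_resize_last_le hT k))).trans
    (Nat.add_le_add_left (finrank_inf_supportedBelow_le hrev S (n - k.val)) _)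
  have hcompl : ((pivots (fun j => j.rev.val) S).filter fun j => ¬ j.val < k.val) =
      (pivots (fun j => j.rev.val) S).filter fun j => j.rev.val < n - k.val := by
    refine Finset.filter_congr fun j _ => ?_
    rw [Fin.val_rev]
    omega
  have hadd := Finset.card_filter_add_card_filter_not (s := pivots (fun j => j.rev.val) S)
    fun j => j.val < k.val
  rw [hcompl, card_pivots hrev] at hadd
  omega

theorem finrank_submodule_fin_eq_zero {k : ℕ} (hk : k = 0) (S : Submodule K (Fin k → K)) :
    finrank K S = 0 :=
  Nat.le_zero.1 (S.finrank_le.trans ((finrank_fin_fun K).trans hk).le)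

theorem sum_mul_finrank_sub_le {f : Fin n → ℤ} (hf : Antitone f)
    (hT : ∀ j : Fin n, (T j.castSucc).map (resize K j.val (j.val + 1)) ≤ T j.succ) :
    ∑ j, f j * ((finrank K (T j.succ) : ℤ) - finrank K (T j.castSucc)) ≤
      ∑ j ∈ pivots Fin.val (T (Fin.last n) : Submodule K (Fin n → K)), f j := by
  rw [← sum_mul_card_filter_sub (pivots Fin.val (T (Fin.last n) : Submodule K (Fin n → K))) f]
  refine sum_mul_sub_le_sum_mul_sub (u := fun k => (finrank K (T k) : ℤ)) (v := fun k =>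
    (((pivots Fin.val (T (Fin.last n) : Submodule K (Fin n → K))).filter
      fun j : Fin n => j.val < k.val).card : ℤ)) hf ?_
    (fun k => Int.ofNat_le.2 (finrank_le_card_filter_pivots hT k)) (.inl ?_)
  · simpa using finrank_submodule_fin_eq_zero (Fin.val_zero _) (T 0)
  · rw [Finset.filter_true_of_mem fun j _ => j.2, card_pivots Fin.val_injective]

theorem sum_pivots_le_sum_mul_finrank_sub {f : Fin n → ℤ} (hf : Antitone f) (hf0 : ∀ j, 0 ≤ f j)
    (hT : ∀ j : Fin n, (T j.succ).map (resize K (j.val + 1) j.val) ≤ T j.castSucc)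
    {S : Submodule K (Fin n → K)} (hS : S ≤ T (Fin.last n)) :
    ∑ j ∈ pivots (fun j => j.rev.val) S, f j ≤
      ∑ j, f j * ((finrank K (T j.succ) : ℤ) - finrank K (T j.castSucc)) := by
  have hcard := card_filter_pivots_le_finrank hT hS
  generalize pivots (fun j : Fin n => j.rev.val) S = I at hcard ⊢
  rw [← sum_mul_card_filter_sub I f]
  refine sum_mul_sub_le_sum_mul_sub
    (u := fun k => ((I.filter fun j : Fin n => j.val < k.val).card : ℤ))
    (v := fun k => (finrank K (T k) : ℤ)) hf ?_ (fun k => Int.ofNat_le.2 (hcard k)) (.inr hf0)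
  symm
  simpa using finrank_submodule_fin_eq_zero (Fin.val_zero _) (T 0)

end Flags

/-- The vertices of the star quiver: `.inr k` carries the `k`-th space of a flag of subspaces of
the central vertex `.inr (Fin.last n)`, and `.inl (i, k)` the quotient of dimension `k` in the
`i`-th of `r` flags of quotients. -/
abbrev StarVertex (n r : ℕ) : Type := (Fin r × Fin (n + 1)) ⊕ Fin (n + 1)

/-- The arrows of the star quiver: the inclusions in the flag of subspaces, the `r` maps from the
central vertex to the largest spaces of the flags of quotients, and the projections in these. -/
abbrev StarArrow (n r : ℕ) : Type := Fin n ⊕ (Fin r ⊕ (Fin r × Fin n))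

/-- The source of an arrow of the star quiver. -/
def starSrc : StarArrow n r → StarVertex n r :=
  Sum.elim (fun j => .inr j.castSucc)
    (Sum.elim (fun _ => .inr (Fin.last n)) fun p => .inl (p.1, p.2.succ))

/-- The target of an arrow of the star quiver. -/
def starTgt : StarArrow n r → StarVertex n r :=
  Sum.elim (fun j => .inr j.succ)
    (Sum.elim (fun i => .inl (i, Fin.last n)) fun p => .inl (p.1, p.2.castSucc))

/-- The dimension vector of complete flags on the star quiver. -/
def starDim : StarVertex n r → ℕ := Sum.elim (fun p => p.2.val) fun k => k.val

/-- The dimension vector on the star quiver whose Schofield determinants have weights `lam i` on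
the flags of quotients and `m` on the flag of subspaces. It takes natural values if `C` is an upper
bound of the weights. -/
def starWeight (lam : Fin r → Fin n → ℕ) (m : Fin n → ℤ) (C : ℕ) : StarVertex n r → ℕ :=
  Sum.elim (fun p => Fin.cons (α := fun _ => ℕ) 0 (fun j => C - lam p.1 j) p.2)
    fun k => Fin.snoc (α := fun _ => ℕ) (fun j => (C - m j).toNat) C k

/-- The representation of the star quiver given by standard flags and by the matrices `g i` at the
arrows from the central vertex. -/
def starRep {K : Type*} [Field K] (g : Fin r → Matrix (Fin n) (Fin n) K) :
    QuiverRep K (starSrc (n := n) (r := r)) starTgt starDim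
  | .inl j => resize K j.val (j.val + 1)
  | .inr (.inl i) => (g i).mulVecLin
  | .inr (.inr p) => resize K (p.2.val + 1) p.2.val

variable {lam : Fin r → Fin n → ℕ} {m : Fin n → ℤ} {C : ℕ}

theorem eulerForm_starWeight (hC : ∀ i j, lam i j ≤ C) (hCm : ∀ j, m j ≤ C)
    (β' : StarVertex n r → ℕ) :
    eulerForm starSrc starTgt (starWeight lam m C) β' =
      C * β' (.inr 0) + ∑ j, m j * ((β' (.inr j.succ) : ℤ) - β' (.inr j.castSucc)) -
      ∑ i, (C * β' (.inl (i, 0)) + ∑ j, (lam i j : ℤ) *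
        ((β' (.inl (i, j.succ)) : ℤ) - β' (.inl (i, j.castSucc)))) := by
  have hm (j) : ((C - m j).toNat : ℤ) = C - m j := Int.toNat_of_nonneg (sub_nonneg.2 (hCm j))
  have hlam (i j) : ((C - lam i j : ℕ) : ℤ) = C - lam i j := Nat.cast_sub (hC i j)
  have htel (f : Fin (n + 1) → ℤ) :
      ∑ j : Fin n, f j.succ = ∑ j : Fin n, f j.castSucc + f (Fin.last n) - f 0 := by
    linarith [(Fin.sum_univ_succ f).symm.trans (Fin.sum_univ_castSucc f)]
  have htelr := htel fun k => β' (.inr k)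
  have htell (i) := htel fun k => β' (.inl (i, k))
  simp only [eulerForm, starWeight, starSrc, starTgt, Fintype.sum_sum_type, Fintype.sum_prod_type,
    Sum.elim_inl, Sum.elim_inr,
    Fin.sum_univ_succ (n := n) (f := fun k => _ * (β' (.inl (_, k)) : ℤ)),
    Fin.sum_univ_castSucc (n := n) (f := fun k => _ * (β' (.inr k) : ℤ)), Fin.snoc_castSucc,
    Fin.snoc_last, Fin.cons_zero, Fin.cons_succ, hm, hlam, sub_mul, mul_sub,
    Finset.sum_sub_distrib, Nat.cast_zero, zero_mul, zero_add, ← Finset.mul_sum, htelr, htell,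
    Finset.sum_add_distrib]
  ring

theorem eulerForm_starWeight_of_add_eq (hC : ∀ i j, lam i j ≤ C) (hCm : ∀ j, m j ≤ C)
    (hsum : ∑ i, ∑ j, (lam i j : ℤ) = ∑ j, m j) {β' κ : StarVertex n r → ℕ}
    (hκ : ∀ v, β' v + κ v = starDim v) :
    eulerForm starSrc starTgt (starWeight lam m C) β' =
      ∑ i, ∑ j, (lam i j : ℤ) * ((κ (.inl (i, j.succ)) : ℤ) - κ (.inl (i, j.castSucc))) -
      ∑ j, m j * ((κ (.inr j.succ) : ℤ) - κ (.inr j.castSucc)) := by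
  have hr0 : β' (.inr 0) = 0 := Nat.eq_zero_of_add_eq_zero_right (hκ (.inr 0))
  have hl0 (i) : β' (.inl (i, 0)) = 0 := Nat.eq_zero_of_add_eq_zero_right (hκ (.inl (i, 0)))
  have hsub {v w : StarVertex n r} (h : starDim v = starDim w + 1) :
      (β' v : ℤ) - β' w = 1 - ((κ v : ℤ) - κ w) := by
    have hv := hκ v
    have hw := hκ w
    omega
  have hr (j : Fin n) := hsub (v := .inr j.succ) (w := .inr j.castSucc) rfl
  have hl (i) (j : Fin n) := hsub (v := .inl (i, j.succ)) (w := .inl (i, j.castSucc)) rfl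
  rw [eulerForm_starWeight hC hCm]
  simp only [hr0, hl0, hr, hl, mul_sub (_ : ℤ) 1, mul_one, Nat.cast_zero, mul_zero,
    zero_add, Finset.sum_sub_distrib, hsum]
  ring

theorem eulerForm_starWeight_starDim (hC : ∀ i j, lam i j ≤ C) (hCm : ∀ j, m j ≤ C)
    (hsum : ∑ i, ∑ j, (lam i j : ℤ) = ∑ j, m j) :
    eulerForm starSrc starTgt (starWeight lam m C) starDim = 0 := by
  rw [eulerForm_starWeight_of_add_eq (κ := 0) hC hCm hsum fun v => add_zero _]
  simp

theorem KingInequalities.eulerForm_nonneg {g : Fin r → Matrix (Fin n) (Fin n) ℂ}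
    (hK : KingInequalities lam m g) (hC : ∀ i j, lam i j ≤ C) (hCm : ∀ j, m j ≤ C)
    (hlam : ∀ i, IsPartition (lam i)) (hm : Antitone m)
    (hsum : ∑ i, ∑ j, (lam i j : ℤ) = ∑ j, m j)
    {β' : StarVertex n r → ℕ} (hq : HasQuotientOfDim (starRep g) β') :
    0 ≤ eulerForm starSrc starTgt (starWeight lam m C) β' := by
  obtain ⟨T, hT, hdim⟩ := hq.exists_submodule
  have hsub := sum_mul_finrank_sub_le (T := fun k => T (.inr k)) hm fun j => hT (.inl j)
  have hquot (i) := sum_pivots_le_sum_mul_finrank_sub (T := fun k => T (.inl (i, k)))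
    (f := fun j => (lam i j : ℤ)) (fun j k hjk => Int.ofNat_le.2 (hlam i j k hjk))
    (fun j => Int.natCast_nonneg _) (fun j => hT (.inr (.inr (i, j)))) (hT (.inr (.inl i)))
  rw [eulerForm_starWeight_of_add_eq hC hCm hsum hdim, sub_nonneg]
  exact hsub.trans ((hK _).trans (Finset.sum_le_sum fun i _ => hquot i))

end StarQuiver

section Gauge

variable {K : Type*} [Field K] {n r : ℕ}

variable (K) in
/-- The projection of `K ^ (j + 1)` onto its last coordinate line, which is the part of the space
not seen by `resize K j (j + 1)` and `resize K (j + 1) j`. -/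
def lastProj (j : ℕ) : (Fin (j + 1) → K) →ₗ[K] (Fin (j + 1) → K) :=
  LinearMap.single K (fun _ => K) (Fin.last j) ∘ₗ LinearMap.proj (Fin.last j)

theorem resize_comp_resize_add_lastProj (j : ℕ) :
    resize K j (j + 1) ∘ₗ resize K (j + 1) j + lastProj K j = LinearMap.id := by
  refine LinearMap.ext fun v => funext fun i => ?_
  induction i using Fin.lastCases with
  | last => simp [lastProj, resize_apply]
  | cast i =>
    simp [lastProj, resize_apply, Fin.ext_iff, i.2.ne]
    rfl

theorem lastProj_comp_resize (j : ℕ) : lastProj K j ∘ₗ resize K j (j + 1) = 0 := by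
  refine LinearMap.ext fun v => ?_
  simp [lastProj, resize_apply]

theorem resize_comp_lastProj (j : ℕ) : resize K (j + 1) j ∘ₗ lastProj K j = 0 := by
  refine LinearMap.ext fun v => funext fun i => ?_
  simp [lastProj, resize_apply, Fin.ext_iff, i.2.ne, i.2.trans (Nat.lt_succ_self _)]

theorem resize_succ_comp_resize (j : ℕ) :
    resize K (j + 1) j ∘ₗ resize K j (j + 1) = LinearMap.id := by
  rw [resize_comp_resize (.inl j.le_succ), resize_self]

/-- The endomorphisms of the spaces `K ^ k` carrying the standard flag of subspaces to the maps
`A j`, see `subspaceGauge_comp_resize`; they are invertible for generic `A`. -/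
def subspaceGauge (A : ∀ j : Fin n, (Fin j.val → K) →ₗ[K] (Fin (j.val + 1) → K))
    (k : Fin (n + 1)) : (Fin k.val → K) →ₗ[K] (Fin k.val → K) :=
  Fin.induction (motive := fun k => (Fin k.val → K) →ₗ[K] (Fin k.val → K)) LinearMap.id
    (fun j h => A j ∘ₗ h ∘ₗ resize K (j.val + 1) j.val + lastProj K j.val) k

/-- The endomorphisms of the spaces `K ^ k` carrying the maps `P j` to the standard flag of
quotients, see `resize_comp_quotientGauge`; they are invertible for generic `P`. -/
def quotientGauge (P : ∀ j : Fin n, (Fin (j.val + 1) → K) →ₗ[K] (Fin j.val → K))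
    (k : Fin (n + 1)) : (Fin k.val → K) →ₗ[K] (Fin k.val → K) :=
  Fin.induction (motive := fun k => (Fin k.val → K) →ₗ[K] (Fin k.val → K)) LinearMap.id
    (fun j h => resize K j.val (j.val + 1) ∘ₗ h ∘ₗ P j + lastProj K j.val) k

section

variable (A : ∀ j : Fin n, (Fin j.val → K) →ₗ[K] (Fin (j.val + 1) → K))
  (P : ∀ j : Fin n, (Fin (j.val + 1) → K) →ₗ[K] (Fin j.val → K)) (j : Fin n)

theorem subspaceGauge_succ : subspaceGauge A j.succ =
    A j ∘ₗ subspaceGauge A j.castSucc ∘ₗ resize K (j.val + 1) j.val + lastProj K j.val := rfl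

theorem quotientGauge_succ : quotientGauge P j.succ =
    resize K j.val (j.val + 1) ∘ₗ quotientGauge P j.castSucc ∘ₗ P j + lastProj K j.val := rfl

theorem subspaceGauge_comp_resize :
    subspaceGauge A j.succ ∘ₗ resize K j.val (j.val + 1) = A j ∘ₗ subspaceGauge A j.castSucc := by
  rw [subspaceGauge_succ, LinearMap.add_comp, lastProj_comp_resize, add_zero,
    LinearMap.comp_assoc, LinearMap.comp_assoc, resize_succ_comp_resize]
  rfl

theorem resize_comp_quotientGauge :
    resize K (j.val + 1) j.val ∘ₗ quotientGauge P j.succ = quotientGauge P j.castSucc ∘ₗ P j := by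
  rw [quotientGauge_succ, LinearMap.comp_add, resize_comp_lastProj, add_zero,
    ← LinearMap.comp_assoc, resize_succ_comp_resize]
  rfl

end

theorem subspaceGauge_resize (k : Fin (n + 1)) :
    subspaceGauge (fun j : Fin n => resize K j.val (j.val + 1)) k = LinearMap.id := by
  induction k using Fin.induction with
  | zero => rfl
  | succ j ih =>
    rw [subspaceGauge_succ, ih]
    exact resize_comp_resize_add_lastProj j.val

theorem quotientGauge_resize (k : Fin (n + 1)) :
    quotientGauge (fun j : Fin n => resize K (j.val + 1) j.val) k = LinearMap.id := by
  induction k using Fin.induction with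
  | zero => rfl
  | succ j ih =>
    rw [quotientGauge_succ, ih]
    exact resize_comp_resize_add_lastProj j.val

variable {Z : Type*} [AddCommGroup Z] [Module K Z]

theorem isPolyMap_subspaceGauge
    {A : Z → ∀ j : Fin n, (Fin j.val → K) →ₗ[K] (Fin (j.val + 1) → K)}
    (hA : ∀ j, IsPolyMap K fun z => A z j) (k : Fin (n + 1)) :
    IsPolyMap K fun z => subspaceGauge (A z) k := by
  induction k using Fin.induction with
  | zero => exact isPolyMap_const _
  | succ j ih =>
    exact ((hA j).linearMap_comp (ih.linearMap_comp (isPolyMap_const _))).add (isPolyMap_const _)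

theorem isPolyMap_quotientGauge
    {P : Z → ∀ j : Fin n, (Fin (j.val + 1) → K) →ₗ[K] (Fin j.val → K)}
    (hP : ∀ j, IsPolyMap K fun z => P z j) (k : Fin (n + 1)) :
    IsPolyMap K fun z => quotientGauge (P z) k := by
  induction k using Fin.induction with
  | zero => exact isPolyMap_const _
  | succ j ih =>
    exact ((isPolyMap_const _).linearMap_comp (ih.linearMap_comp (hP j))).add (isPolyMap_const _)

variable {y : QuiverRep K (starSrc (n := n) (r := r)) starTgt starDim}

/-- The change of coordinates that makes all flags of a representation of the star quiver
standard. On the flag of subspaces it is to be applied in the inverse direction. -/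
def starGauge (y : QuiverRep K (starSrc (n := n) (r := r)) starTgt starDim) :
    VertexMaps K (starDim (n := n) (r := r)) starDim
  | .inl p => quotientGauge (fun j => y (.inr (.inr (p.1, j)))) p.2
  | .inr k => subspaceGauge (fun j => y (.inl j)) k

/-- The matrices of the arrows from the central vertex after the change of coordinates
`starGauge`. -/
noncomputable def straighten (y : QuiverRep K (starSrc (n := n) (r := r)) starTgt starDim)
    (i : Fin r) : Matrix (Fin n) (Fin n) K :=
  LinearMap.toMatrix' (starGauge y (.inl (i, Fin.last n)) ∘ₗ
    (y (.inr (.inl i)) : (Fin n → K) →ₗ[K] (Fin n → K)) ∘ₗ starGauge y (.inr (Fin.last n)))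

theorem isPolyMap_arrow (a : StarArrow n r) :
    IsPolyMap K fun y : QuiverRep K (starSrc (n := n) (r := r)) starTgt starDim => y a :=
  isPolyMap_id.apply a

theorem isPolyMap_starGauge (v : StarVertex n r) :
    IsPolyMap K fun y : QuiverRep K (starSrc (n := n) (r := r)) starTgt starDim =>
      starGauge y v := by
  obtain ⟨i, k⟩ | k := v
  · exact isPolyMap_quotientGauge (fun j => isPolyMap_arrow (.inr (.inr (i, j)))) k
  · exact isPolyMap_subspaceGauge (fun j => isPolyMap_arrow (.inl j)) k

theorem isPolyMap_straighten : IsPolyMap K (straighten (K := K) (n := n) (r := r)) := by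
  refine IsPolyMap.pi fun i => IsPolyMap.linear ?_ (LinearMap.toMatrix' (R := K)).toLinearMap
  have harrow : IsPolyMap K fun y : QuiverRep K (starSrc (n := n) (r := r)) starTgt starDim =>
      (y (.inr (.inl i)) : (Fin n → K) →ₗ[K] (Fin n → K)) := isPolyMap_arrow (.inr (.inl i))
  exact (isPolyMap_starGauge (.inl (i, Fin.last n))).linearMap_comp
    (harrow.linearMap_comp (isPolyMap_starGauge (.inr (Fin.last n))))

theorem starGauge_starRep (g : Fin r → Matrix (Fin n) (Fin n) K) (v : StarVertex n r) :
    starGauge (starRep g) v = LinearMap.id := by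
  obtain ⟨_, k⟩ | k := v
  · exact quotientGauge_resize k
  · exact subspaceGauge_resize k

theorem straighten_starRep (g : Fin r → Matrix (Fin n) (Fin n) K) :
    straighten (starRep g) = g := by
  funext i
  rw [straighten, starGauge_starRep, starGauge_starRep]
  exact LinearMap.toMatrix'_toLin' (g i)

theorem exists_isQuiverHom_starRep_straighten (hy : ∀ v, LinearMap.det (starGauge y v) ≠ 0) :
    ∃ h : ∀ v : StarVertex n r, (Fin (starDim v) → K) ≃ₗ[K] (Fin (starDim v) → K),
      IsQuiverHom y (starRep (straighten y)) fun v => (h v).toLinearMap := by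
  let e (v : StarVertex n r) : (Fin (starDim v) → K) ≃ₗ[K] (Fin (starDim v) → K) :=
    LinearMap.equivOfDetNeZero (starGauge y v) (hy v)
  refine ⟨fun v => match v with
    | .inl p => e (.inl p)
    | .inr k => (e (.inr k)).symm, ?_⟩
  rintro (j | i | ⟨i, j⟩)
  · exact comp_symm_eq_symm_comp (e (.inr j.castSucc)) (e (.inr j.succ))
      (subspaceGauge_comp_resize (fun j => y (.inl j)) j).symm
  · refine ((e (.inr (Fin.last n))).comp_toLinearMap_symm_eq _ _).2 ?_
    exact (Matrix.toLin'_apply' _).symm.trans (Matrix.toLin'_toMatrix' _)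
  · exact resize_comp_quotientGauge (fun j => y (.inr (.inr (i, j)))) j

end Gauge

section StarSemiInvariant

open Matrix

section Field

variable {K : Type*} [Field K] {n r : ℕ}

theorem isPolyMap_starRep : IsPolyMap K (starRep (K := K) (n := n) (r := r)) := by
  refine IsPolyMap.pi ?_
  rintro (j | i | p)
  · exact isPolyMap_const _
  · exact isPolyMap_linear ((toLin' (R := K)).toLinearMap ∘ₗ
      (LinearMap.proj i : (Fin r → Matrix (Fin n) (Fin n) K) →ₗ[K] _))
  · exact isPolyMap_const _

/-- The action of the matrices `b i` on the flags of quotients, for `b i` lower triangular. -/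
def quotientBlocks (b : Fin r → Matrix (Fin n) (Fin n) K) :
    VertexMaps K (starDim (n := n) (r := r)) starDim
  | .inl p => leadingBlock (b p.1) p.2.val
  | .inr _ => LinearMap.id

/-- The action of the matrix `b` on the flag of subspaces, for `b` upper triangular. -/
def subspaceBlocks (b : Matrix (Fin n) (Fin n) K) : VertexMaps K (starDim (n := n) (r := r)) starDim
  | .inl _ => LinearMap.id
  | .inr k => leadingBlock b k.val

section

variable {b : Fin r → Matrix (Fin n) (Fin n) K}

theorem isQuiverHom_quotientBlocks (hb : ∀ i, (b i).IsLowerTriangular)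
    (g : Fin r → Matrix (Fin n) (Fin n) K) :
    IsQuiverHom (starRep g) (starRep fun i => b i * g i) (quotientBlocks b) := by
  rintro (j | i | ⟨i, j⟩)
  · rfl
  · change (b i * g i).mulVecLin ∘ₗ LinearMap.id = leadingBlock (b i) n ∘ₗ (g i).mulVecLin
    rw [leadingBlock_self, mulVecLin_mul, LinearMap.comp_id]
  · exact (leadingBlock_comp_resize_of_isLowerTriangular (hb i) j.val.le_succ j.2).symm

theorem det_quotientBlocks (hb : ∀ i, (b i).IsLowerTriangular) (v : StarVertex n r) :
    LinearMap.det (quotientBlocks b v) =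
      Sum.elim (fun p => diagProd (b p.1) p.2.val) (fun _ => 1) v := by
  obtain ⟨i, k⟩ | k := v
  · exact det_leadingBlock_of_isLowerTriangular (hb i) k.is_le
  · exact LinearMap.det_id

end

section

variable {b : Matrix (Fin n) (Fin n) K}

theorem isQuiverHom_subspaceBlocks (hb : b.IsUpperTriangular)
    (g : Fin r → Matrix (Fin n) (Fin n) K) :
    IsQuiverHom (starRep fun i => g i * b) (starRep g) (subspaceBlocks b) := by
  rintro (j | i | ⟨i, j⟩)
  · exact (leadingBlock_comp_resize_of_isUpperTriangular hb j.val.le_succ j.2).symm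
  · change (g i).mulVecLin ∘ₗ leadingBlock b n = LinearMap.id ∘ₗ (g i * b).mulVecLin
    rw [leadingBlock_self, mulVecLin_mul, LinearMap.id_comp]
  · rfl

theorem det_subspaceBlocks (hb : b.IsUpperTriangular) (v : StarVertex n r) :
    LinearMap.det (subspaceBlocks b v) = Sum.elim (fun _ => 1) (fun k => diagProd b k.val) v := by
  obtain p | k := v
  · exact LinearMap.det_id
  · exact det_leadingBlock_of_isUpperTriangular hb k.is_le

end

theorem diagProd_ne_zero {b : Matrix (Fin n) (Fin n) K} (hb : ∀ j, b j j ≠ 0) (k : ℕ) :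
    diagProd b k ≠ 0 :=
  Finset.prod_ne_zero_iff.2 fun j _ => hb j

variable {lam : Fin r → Fin n → ℕ} {m : Fin n → ℤ} {C : ℕ}

theorem prod_det_quotientBlocks (hC : ∀ i j, lam i j ≤ C)
    {b : Fin r → Matrix (Fin n) (Fin n) K} (hb : ∀ i, (b i).IsLowerTriangular)
    (hb0 : ∀ i j, b i j j ≠ 0) :
    ∏ a, LinearMap.det (quotientBlocks b (starTgt a)) ^ starWeight lam m C (starSrc a) =
      (∏ i, ∏ j, b i j j ^ lam i j) *
        ∏ v, LinearMap.det (quotientBlocks b v) ^ starWeight lam m C v := by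
  have habel (i) := prod_zpow_mul_prod_diagProd_pow (hb0 i) (c := fun j => C - lam i j) (C := C)
    (m := fun j => (lam i j : ℤ)) fun j => Nat.cast_sub (hC i j)
  simp only [zpow_natCast] at habel
  simp only [det_quotientBlocks hb]
  simp only [Fintype.prod_sum_type, Fintype.prod_prod_type, starSrc,
    starTgt, Sum.elim_inl, Sum.elim_inr, one_pow, Finset.prod_const_one, one_mul, mul_one,
    starWeight, Fin.snoc_last, Fin.cons_succ, Fin.prod_univ_succ (n := n), Fin.cons_zero, pow_zero,
    Fin.val_last, Fin.val_castSucc, Fin.val_succ, ← Finset.prod_mul_distrib, habel]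

theorem prod_det_subspaceBlocks (hCm : ∀ j, m j ≤ C) {b : Matrix (Fin n) (Fin n) K}
    (hb : b.IsUpperTriangular) (hb0 : ∀ j, b j j ≠ 0) :
    ∏ v, LinearMap.det (subspaceBlocks (r := r) b v) ^ starWeight lam m C v =
      (∏ j, b j j ^ m j) *
        ∏ a, LinearMap.det (subspaceBlocks (r := r) b (starTgt a)) ^
          starWeight lam m C (starSrc a) := by
  have habel := prod_zpow_mul_prod_diagProd_pow hb0 (c := fun j => (C - m j).toNat) (C := C)
    (m := m) fun j => Int.toNat_of_nonneg (sub_nonneg.2 (hCm j))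
  simp only [det_subspaceBlocks hb]
  simp only [Fintype.prod_sum_type, starSrc, starTgt, Sum.elim_inl,
    Sum.elim_inr, one_pow, Finset.prod_const_one, one_mul, mul_one, starWeight,
    Fin.snoc_last, Fin.snoc_castSucc, Fin.prod_univ_castSucc (n := n),
    Fin.val_last, Fin.val_castSucc, Fin.val_succ, habel]
  ring

variable (e : ArrowMaps K starSrc starTgt (starWeight lam m C) starDim ≃ₗ[K]
  VertexMaps K (starWeight lam m C) starDim) (x : QuiverRep K starSrc starTgt (starWeight lam m C))

theorem schofieldDet_starRep_mul_left (hC : ∀ i j, lam i j ≤ C)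
    {b : Fin r → Matrix (Fin n) (Fin n) K} (hb : ∀ i, (b i).IsLowerTriangular)
    (hb0 : ∀ i j, b i j j ≠ 0) (g : Fin r → Matrix (Fin n) (Fin n) K) :
    schofieldDet e x (starRep fun i => b i * g i) =
      (∏ i, ∏ j, b i j j ^ lam i j) * schofieldDet e x (starRep g) := by
  have hmul := (isQuiverHom_quotientBlocks hb g).schofieldDet_mul e (x := x)
  rw [prod_det_quotientBlocks hC hb hb0] at hmul
  refine mul_right_cancel₀ (Finset.prod_ne_zero_iff.2 fun v _ => pow_ne_zero _ ?_)
    (hmul.trans (mul_right_comm _ _ _))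
  rw [det_quotientBlocks hb]
  obtain p | k := v
  · exact diagProd_ne_zero (hb0 p.1) _
  · exact one_ne_zero

theorem schofieldDet_starRep_mul_right (hCm : ∀ j, m j ≤ C) {b : Matrix (Fin n) (Fin n) K}
    (hb : b.IsUpperTriangular) (hb0 : ∀ j, b j j ≠ 0) (g : Fin r → Matrix (Fin n) (Fin n) K) :
    schofieldDet e x (starRep fun i => g i * b) =
      (∏ j, b j j ^ m j) * schofieldDet e x (starRep g) := by
  have hmul := (isQuiverHom_subspaceBlocks hb g).schofieldDet_mul e (x := x)
  rw [prod_det_subspaceBlocks hCm hb hb0] at hmul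
  refine mul_left_cancel₀ (Finset.prod_ne_zero_iff.2 fun a _ => pow_ne_zero _ ?_)
    (hmul.symm.trans (by ring))
  rw [det_subspaceBlocks hb]
  obtain _ | k := starTgt a
  · exact one_ne_zero
  · exact diagProd_ne_zero hb0 _

end Field

variable {n r : ℕ} {lam : Fin r → Fin n → ℕ} {m a : Fin n → ℤ} {C : ℕ} {s : ℤ}

theorem isSemiInvariant_schofieldDet_starRep (hC : ∀ i j, lam i j ≤ C) (hCm : ∀ j, m j ≤ C)
    (hs : ∀ j, m j = a j + s)
    (e : ArrowMaps ℂ starSrc starTgt (starWeight lam m C) starDim ≃ₗ[ℂ]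
      VertexMaps ℂ (starWeight lam m C) starDim)
    (x : QuiverRep ℂ starSrc starTgt (starWeight lam m C)) :
    IsSemiInvariant lam a fun g => schofieldDet e x (starRep g) where
  isPolyMap := isPolyMap_schofieldDet e x isPolyMap_starRep
  lower_mul b g hdet hb := by
    refine schofieldDet_starRep_mul_left e x hC hb (fun i j => ?_) g
    have hi := hdet i
    rw [det_of_isLowerTriangular _ (hb i)] at hi
    exact Finset.prod_ne_zero_iff.1 hi j (Finset.mem_univ j)
  mul_uniUpper b hb g := by
    rw [schofieldDet_starRep_mul_right e x hCm (fun i j hij => hb.2 i j hij)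
      fun j => by simp [hb.1 j]]
    simp [hb.1]
  mul_diag b hb g := by
    have hupper : b.val.IsUpperTriangular := fun i j hij => hb i j (ne_of_gt hij)
    have hprod : ∏ j, b.val j j = 1 := (det_of_isUpperTriangular hupper).symm.trans b.2
    have hb0 (j) : b.val j j ≠ 0 :=
      Finset.prod_ne_zero_iff.1 (hprod.trans_ne one_ne_zero) j (Finset.mem_univ j)
    rw [schofieldDet_starRep_mul_right e x hCm hupper hb0]
    simp only [hs, zpow_add₀ (hb0 _), Finset.prod_mul_distrib, Finset.prod_zpow, hprod,
      _root_.one_zpow, mul_one]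

variable {q : (Fin r → Matrix (Fin n) (Fin n) ℂ) → ℂ}

theorem exists_homDiff_starRep_surjective (hC : ∀ i j, lam i j ≤ C) (hCm : ∀ j, m j ≤ C)
    (hlam : ∀ i, IsPartition (lam i)) (hm : Antitone m)
    (hsum : ∑ i, ∑ j, (lam i j : ℤ) = ∑ j, m j) (hq : IsPolyMap ℂ q) (hq0 : ∃ g, q g ≠ 0)
    (hK : ∀ g, q g ≠ 0 → KingInequalities lam m g) :
    ∃ (x : QuiverRep ℂ starSrc starTgt (starWeight lam m C)) (g : _), q g ≠ 0 ∧
      Function.Surjective (homDiff x (starRep g)) := by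
  have hequiv {y : QuiverRep ℂ (starSrc (n := n) (r := r)) starTgt starDim}
      (hy : (∏ v, LinearMap.det (starGauge y v)) * q (straighten y) ≠ 0) :=
    exists_isQuiverHom_starRep_straighten fun v =>
      Finset.prod_ne_zero_iff.1 (left_ne_zero_of_mul hy) v (Finset.mem_univ v)
  obtain ⟨x, y, hy, hxy⟩ := exists_homDiff_surjective (starWeight lam m C)
    (p := fun y => (∏ v, LinearMap.det (starGauge y v)) * q (straighten y))
    ((IsPolyMap.prod fun v _ => (isPolyMap_starGauge v).linearMap_det).mul
      (hq.comp isPolyMap_straighten))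
    (hq0.imp' starRep fun g hg => by simpa [straighten_starRep, starGauge_starRep] using hg)
    fun y hy β' hβ' => by
      obtain ⟨h, hh⟩ := hequiv hy
      exact (hK _ (right_ne_zero_of_mul hy)).eulerForm_nonneg hC hCm hlam hm hsum (hβ'.of_equiv hh)
  obtain ⟨h, hh⟩ := hequiv hy
  exact ⟨x, straighten y, right_ne_zero_of_mul hy,
    hh.homDiff_surjective (fun v => (h v).surjective) hxy⟩

theorem exists_isSemiInvariant_of_kingInequalities (hlam : ∀ i, IsPartition (lam i))
    (hm : Antitone m) (hsum : ∑ i, ∑ j, (lam i j : ℤ) = ∑ j, m j) (hq : IsPolyMap ℂ q)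
    (hq0 : ∃ g, q g ≠ 0) (hK : ∀ g, q g ≠ 0 → KingInequalities lam m g)
    (hs : ∀ j, m j = a j + s) :
    ∃ D, IsSemiInvariant lam a D ∧ ∃ g, q g ≠ 0 ∧ D g ≠ 0 := by
  obtain ⟨C, hC, hCm⟩ : ∃ C : ℕ, (∀ i j, lam i j ≤ C) ∧ ∀ j, m j ≤ C := by
    obtain ⟨B, hB⟩ := (Set.finite_range fun p : Fin r × Fin n => lam p.1 p.2).bddAbove
    obtain ⟨B', hB'⟩ := (Set.finite_range fun j => (m j).toNat).bddAbove
    exact ⟨max B B', fun i j => le_max_of_le_left (hB ⟨(i, j), rfl⟩), fun j =>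
      Int.toNat_le.1 (le_max_of_le_right (hB' ⟨j, rfl⟩))⟩
  obtain ⟨x, g, hqg, hxg⟩ := exists_homDiff_starRep_surjective hC hCm hlam hm hsum hq hq0 hK
  have heuler := eulerForm_starWeight_starDim hC hCm hsum
  rw [← finrank_vertexMaps_sub_finrank_arrowMaps (K := ℂ), sub_eq_zero, Nat.cast_inj] at heuler
  let e := LinearEquiv.ofFinrankEq _ _ heuler.symm
  exact ⟨_, isSemiInvariant_schofieldDet_starRep hC hCm hs e x, g, hqg, schofieldDet_ne_zero e hxg⟩

end StarSemiInvariant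

section Segments

variable {n r : ℕ} {a γ : Fin n → ℤ} {k l : ℕ}

theorem antitone_add_nsmul (hlk : l ≤ k) (h0 : Antitone a)
    (hk : Antitone fun j => a j + k • γ j) : Antitone fun j => a j + l • γ j := fun i j hij => by
  have h := add_nsmul_le_of_le_endpoints (x := a j - a i) (d := γ j - γ i) hlk
    (sub_nonpos.2 (h0 hij)) (by rw [smul_sub]; linarith [hk hij])
  rw [smul_sub] at h
  linarith

variable {lam : Fin r → Fin n → ℕ} {F G : (Fin r → Matrix (Fin n) (Fin n) ℂ) → ℂ}

theorem isPolyMap_prod_det {K : Type*} [Field K] :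
    IsPolyMap K fun g : Fin r → Matrix (Fin n) (Fin n) K => ∏ i, (g i).det :=
  IsPolyMap.prod fun i _ => IsPolyMap.matrix_det fun j j' =>
    isPolyMap_linear (Matrix.entryLinearMap K K j j' ∘ₗ
      (LinearMap.proj i : (Fin r → Matrix (Fin n) (Fin n) K) →ₗ[K] _))

theorem IsSemiInvariant.exists_add_nsmul (hlam : ∀ i, IsPartition (lam i)) (hlk : l ≤ k)
    (hγ : ∑ j, γ j = 0) (ha : Antitone a) (hak : Antitone fun j => a j + k • γ j)
    (hF : IsSemiInvariant lam a F) (hG : IsSemiInvariant lam (fun j => a j + k • γ j) G)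
    (hF0 : ∃ h : Fin r → SL n, F (fun i => (h i).val) ≠ 0)
    (hG0 : ∃ h : Fin r → SL n, G (fun i => (h i).val) ≠ 0) :
    ∃ D, IsSemiInvariant lam (fun j => a j + l • γ j) D ∧
      ∃ h : Fin r → SL n, D (fun i => (h i).val) ≠ 0 := by
  obtain ⟨s, hs⟩ := hF.exists_sum_eq_add_mul hF0
  have hsum (t : ℕ) : ∑ i, ∑ j, (lam i j : ℤ) = ∑ j, (a j + t • γ j) + n * s := by
    rw [hs, Finset.sum_add_distrib, ← Finset.smul_sum, hγ, smul_zero, add_zero]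
  let q (g : Fin r → Matrix (Fin n) (Fin n) ℂ) : ℂ := F g * G g * ∏ i, (g i).det
  have hFG : IsPolyMap ℂ fun g => F g * G g := hF.isPolyMap.mul hG.isPolyMap
  have hq0 : ∃ g, q g ≠ 0 := hFG.exists_mul_ne_zero isPolyMap_prod_det
    (hF.isPolyMap.exists_mul_ne_zero hG.isPolyMap (hF0.imp' _ fun _ h => h)
      (hG0.imp' _ fun _ h => h)) ⟨1, by simp⟩
  have hdet (g) (hg : q g ≠ 0) (i) : (g i).det ≠ 0 :=
    Finset.prod_ne_zero_iff.1 (right_ne_zero_of_mul hg) i (Finset.mem_univ i)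
  have hK (g) (hg : q g ≠ 0) : KingInequalities lam (fun j => a j + s + l • γ j) g := by
    have hFGg := left_ne_zero_of_mul hg
    refine (hF.kingInequalities (hdet g hg) (left_ne_zero_of_mul hFGg) hs).add_nsmul hlk ?_
    simpa only [add_right_comm] using
      hG.kingInequalities (hdet g hg) (right_ne_zero_of_mul hFGg) (hsum k)
  have hm : Antitone fun j => a j + s + l • γ j := by
    simpa only [add_right_comm] using (antitone_add_nsmul hlk ha hak).add_const s
  obtain ⟨D, hD, g, hqg, hDg⟩ := exists_isSemiInvariant_of_kingInequalities hlam hm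
    (by simp [hsum l, Finset.sum_add_distrib]; ring) (hFG.mul isPolyMap_prod_det) hq0 hK fun j =>
      add_right_comm (a j) s (l • γ j)
  exact ⟨D, hD, hD.exists_specialLinearGroup_ne_zero (hdet g hqg) hDg⟩

end Segments

theorem convexity_LR_segments (n r : ℕ)
    (lam : Fin r → Fin n → ℕ) (hlam : ∀ i, IsPartition (lam i))
    (V : Fin r → Type*) [∀ i, AddCommGroup (V i)] [∀ i, Module ℂ (V i)]
    [∀ i, FiniteDimensional ℂ (V i)]
    -- `ρ i` is the irreducible representation `V(λ⁽ⁱ⁾)`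
    (ρ : ∀ i, Representation ℂ (SL n) (V i)) (hirr : ∀ i, RepIsIrreducible (ρ i))
    (hhw : ∀ i, Occurs (ρ i) (fun j => (lam i j : ℤ)))
    (ν : Fin n → ℕ) (hν : IsPartition ν) (γ : Fin n → ℤ)
    (hγ : ∑ j, γ j = 0)  -- γ lies in the root lattice
    (k : ℕ) (hk : 0 < k)
    (hνk : IsPartition fun j => ((ν j : ℤ) + k • γ j).toNat)
    (hνknn : ∀ j, 0 ≤ (ν j : ℤ) + k • γ j)  -- ν + kγ is again a partition
    (h0 : Occurs (piTensorRep ρ) (fun j => (ν j : ℤ)))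
    (hkocc : Occurs (piTensorRep ρ) (fun j => (ν j : ℤ) + k • γ j)) :
    ∀ l : ℕ, l ≤ k → Occurs (piTensorRep ρ) (fun j => (ν j : ℤ) + l • γ j) := by
  intro l hl
  have hνa : Antitone fun j => (ν j : ℤ) := fun i j hij => Int.ofNat_le.2 (hν i j hij)
  have hνka : Antitone fun j => (ν j : ℤ) + k • γ j := fun i j hij => by
    have h := Int.ofNat_le.2 (hνk i j hij)
    rwa [Int.toNat_of_nonneg (hνknn i), Int.toNat_of_nonneg (hνknn j)] at h
  obtain ⟨F, hF, hF0⟩ := exists_isSemiInvariant_of_occurs hlam hirr hhw h0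
  obtain ⟨G, hG, hG0⟩ := exists_isSemiInvariant_of_occurs hlam hirr hhw hkocc
  obtain ⟨D, hD, hD0⟩ := hF.exists_add_nsmul hlam hl hγ hνa hνka hG hF0 hG0
  exact hD.occurs hlam hirr hhw hD0
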